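/- arXiv:2104.12960 — 6 statements merged into one kernel-verified Lean document; each statement's English description precedes it below -/
import Mathlib

section
/- Assume conditions (A) and (B). Then the pointwise limit u of the sequence U_k has the representation u(z) = a(g(z) − z) for all z ∈ [0,1], where a > 0 is a constant and g is the probability generating function of a probability distribution (p_j)_{j∈ℕ} on ℕ with finite mean Σ_j j·p_j < ∞ (equivalently g'(1−) < ∞). -/
open Filter Set

/-- The probability generating function of a distribution `p` on `ℕ`. -/
noncomputable def pgf (p : ℕ → ℝ) (z : ℝ) : ℝ := ∑' j, p j * z ^ j

lemma aux_summable (p : ℕ → ℝ) (h0 : ∀ j, 0 ≤ p j) (hs : Summable p) (z : ℝ)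
    (hz : z ∈ Icc (0:ℝ) 1) : Summable (fun j => p j * z ^ j) :=
  Summable.of_nonneg_of_le (fun j => mul_nonneg (h0 j) (pow_nonneg hz.1 j))
    (fun j => mul_le_of_le_one_right (h0 j) (pow_le_one₀ hz.1 hz.2)) hs

lemma aux_pgf_zero (p : ℕ → ℝ) : pgf p 0 = p 0 := by
  unfold pgf
  rw [tsum_eq_single 0]
  · simp
  · intro j hj
    simp [hj]

lemma aux_pgf_one (p : ℕ → ℝ) (hs : HasSum p 1) : pgf p 1 = 1 := by
  unfold pgf
  simpa using hs.tsum_eq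

lemma aux_p1 (p : ℕ → ℝ) (g L : ℝ) (hg : 0 < g) (h0 : ∀ j, 0 ≤ p j) (hs : HasSum p 1)
    (hL : ∀ x ∈ Icc (0:ℝ) 1, ∀ y ∈ Icc (0:ℝ) 1,
      |g * (pgf p x - x) - g * (pgf p y - y)| ≤ L * |x - y|) :
    -L ≤ g * (p 1 - 1) := by
  have key : ∀ z ∈ Ioo (0:ℝ) 1, -L ≤ g * (p 1 + z - 1) := by
    intro z hz
    have hz' : z ∈ Icc (0:ℝ) 1 := ⟨hz.1.le, hz.2.le⟩
    have h := hL z hz' 0 (by simp)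
    rw [aux_pgf_zero, sub_zero, sub_zero, abs_of_pos hz.1] at h
    have h1 := (abs_le.1 h).1
    have hb : pgf p z ≤ p 0 + p 1 * z + 1 * z ^ 2 := by
      have e0 : HasSum (fun j : ℕ => if j = 0 then p 0 else 0) (p 0) := hasSum_ite_eq 0 (p 0)
      have e1 : HasSum (fun j : ℕ => if j = 1 then p 1 * z else 0) (p 1 * z) :=
        hasSum_ite_eq 1 (p 1 * z)
      refine hasSum_le ?_ (aux_summable p h0 hs.summable z hz').hasSum
        ((e0.add e1).add (hs.mul_right (z ^ 2)))
      intro j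
      have hn : 0 ≤ p j * z ^ 2 := mul_nonneg (h0 j) (sq_nonneg z)
      rcases j with _ | _ | j
      · simp at hn ⊢; exact hn
      · simp at hn ⊢; exact hn
      · simp
        exact mul_le_mul_of_nonneg_left (pow_le_pow_of_le_one hz.1.le hz.2.le (by omega)) (h0 _)
    have h2 : g * (pgf p z - z) ≤ g * (p 0 + p 1 * z + 1 * z ^ 2 - z) :=
      mul_le_mul_of_nonneg_left (by linarith) hg.le
    have h3 : (-L) * z ≤ (g * (p 1 + z - 1)) * z := by nlinarith
    exact le_of_mul_le_mul_right h3 hz.1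
  have ht : Tendsto (fun z : ℝ => g * (p 1 + z - 1)) (nhdsWithin 0 (Ioi 0))
      (nhds (g * (p 1 + 0 - 1))) :=
    (Continuous.tendsto (by fun_prop) 0).mono_left nhdsWithin_le_nhds
  rw [add_zero] at ht
  refine ge_of_tendsto ht ?_
  filter_upwards [Ioo_mem_nhdsGT (zero_lt_one' ℝ)] with z hz using key z hz

lemma aux_mean (p : ℕ → ℝ) (g L : ℝ) (hg : 0 < g) (h0 : ∀ j, 0 ≤ p j) (hs : HasSum p 1)
    (hL : ∀ x ∈ Icc (0:ℝ) 1, ∀ y ∈ Icc (0:ℝ) 1,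
      |g * (pgf p x - x) - g * (pgf p y - y)| ≤ L * |x - y|) (s : Finset ℕ) :
    g * ∑ j ∈ s, p j * j ≤ L + g := by
  have key : ∀ z ∈ Ioo (0:ℝ) 1,
      g * ∑ j ∈ s, p j * ∑ i ∈ Finset.range j, z ^ i ≤ L + g := by
    intro z hz
    have hz' : z ∈ Icc (0:ℝ) 1 := ⟨hz.1.le, hz.2.le⟩
    have h := hL 1 (by simp) z hz'
    rw [aux_pgf_one p hs, abs_of_pos (sub_pos.2 hz.2)] at h
    have h1 := (abs_le.1 h).2
    have hh : HasSum (fun j => p j - p j * z ^ j) (1 - pgf p z) :=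
      hs.sub (aux_summable p h0 hs.summable z hz').hasSum
    have h2 : ∑ j ∈ s, (p j - p j * z ^ j) ≤ 1 - pgf p z :=
      sum_le_hasSum s (fun j _ => sub_nonneg.2
        (mul_le_of_le_one_right (h0 j) (pow_le_one₀ hz'.1 hz'.2))) hh
    have h3 : ∑ j ∈ s, (p j - p j * z ^ j)
        = (∑ j ∈ s, p j * ∑ i ∈ Finset.range j, z ^ i) * (1 - z) := by
      rw [Finset.sum_mul]
      refine Finset.sum_congr rfl fun j _ => ?_
      rw [mul_assoc, geom_sum_mul_neg]
      ring
    rw [h3] at h2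
    have h4 := mul_le_mul_of_nonneg_left h2 hg.le
    refine le_of_mul_le_mul_right ?_ (sub_pos.2 hz.2)
    nlinarith
  have ht : Tendsto (fun z : ℝ => g * ∑ j ∈ s, p j * ∑ i ∈ Finset.range j, z ^ i)
      (nhdsWithin 1 (Iio 1))
      (nhds (g * ∑ j ∈ s, p j * ∑ i ∈ Finset.range j, (1:ℝ) ^ i)) :=
    (Continuous.tendsto (by fun_prop) 1).mono_left nhdsWithin_le_nhds
  simp only [one_pow, Finset.sum_const, Finset.card_range, nsmul_eq_mul, mul_one] at ht
  refine le_of_tendsto ht ?_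
  filter_upwards [Ioo_mem_nhdsLT (zero_lt_one' ℝ)] with z hz using key z hz

/-- Under conditions (A) and (B), the pointwise limit `u` of the
functions `U_k(z) = γ_k (g_k(z) - z)` has the representation `u(z) = a (g(z) - z)`
for a constant `a > 0` and the generating function `g` of a probability distribution
on `ℕ` with finite mean. -/
theorem limit_representation_one_type
    (p : ℕ → ℕ → ℝ) (γ : ℕ → ℝ) (u : ℝ → ℝ)
    (hp_nonneg : ∀ k j, 0 ≤ p k j)
    (hp_sum : ∀ k, HasSum (p k) 1)
    (hγ_pos : ∀ k, 0 < γ k)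
    -- Condition (A)
    (hA : Tendsto γ atTop atTop)
    -- Condition (B): uniform Lipschitz on [0,1] …
    (hLip : ∃ L : NNReal, ∀ k,
      LipschitzOnWith L (fun z => γ k * (pgf (p k) z - z)) (Icc (0:ℝ) 1))
    -- … and pointwise convergence to a continuous function u
    (hu_cont : ContinuousOn u (Icc (0:ℝ) 1))
    (hconv : ∀ z ∈ Icc (0:ℝ) 1,
      Tendsto (fun k => γ k * (pgf (p k) z - z)) atTop (nhds (u z))) :
    ∃ (a : ℝ) (q : ℕ → ℝ), 0 < a ∧ (∀ j, 0 ≤ q j) ∧ HasSum q 1 ∧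
      Summable (fun j : ℕ => (j : ℝ) * q j) ∧
      ∀ z ∈ Icc (0:ℝ) 1, u z = a * (pgf q z - z) := by
  obtain ⟨L, hL⟩ := hLip
  have hL' : ∀ k, ∀ x ∈ Icc (0:ℝ) 1, ∀ y ∈ Icc (0:ℝ) 1,
      |γ k * (pgf (p k) x - x) - γ k * (pgf (p k) y - y)| ≤ L * |x - y| := by
    intro k x hx y hy
    simpa [Real.dist_eq] using (hL k).dist_le_mul x hx y hy
  obtain ⟨M, hM⟩ : ∃ M : ℝ, M = L + 1 := ⟨_, rfl⟩
  have hMpos : 0 < M := by rw [hM]; positivity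
  obtain ⟨b, hb⟩ : ∃ b : ℕ → ℕ → ℝ, b = fun k j => γ k * p k j + if j = 1 then M - γ k else 0 :=
    ⟨_, rfl⟩
  have hb0 : ∀ k j, 0 ≤ b k j := by
    intro k j
    have h1 := aux_p1 (p k) (γ k) L (hγ_pos k) (hp_nonneg k) (hp_sum k) (hL' k)
    have h2 := mul_nonneg (hγ_pos k).le (hp_nonneg k j)
    rw [hb]
    by_cases hj : j = 1
    · subst hj; simp only [if_true]; linarith
    · simp only [hj, if_false]; linarith
  have hbz : ∀ k, ∀ z ∈ Icc (0:ℝ) 1,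
      HasSum (fun j => b k j * z ^ j) (γ k * (pgf (p k) z - z) + M * z) := by
    intro k z hz
    have h1 : HasSum (fun j => p k j * z ^ j) (pgf (p k) z) :=
      (aux_summable (p k) (hp_nonneg k) (hp_sum k).summable z hz).hasSum
    have h2 : HasSum (fun j : ℕ => if j = 1 then (M - γ k) * z else 0) ((M - γ k) * z) :=
      hasSum_ite_eq 1 _
    have e1 : (fun j => b k j * z ^ j)
        = fun j => γ k * (p k j * z ^ j) + if j = 1 then (M - γ k) * z else 0 := by
      funext j
      rw [hb]
      by_cases hj : j = 1
      · subst hj; simp only [if_true]; ring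
      · simp only [hj, if_false]; ring
    have e2 : γ k * (pgf (p k) z - z) + M * z = γ k * pgf (p k) z + (M - γ k) * z := by ring
    rw [e1, e2]
    exact (h1.mul_left (γ k)).add h2
  have hbM : ∀ k, HasSum (b k) M := by
    intro k
    have := hbz k 1 (by simp)
    simpa [aux_pgf_one (p k) (hp_sum k)] using this
  have hbm : ∀ k (s : Finset ℕ), ∑ j ∈ s, (j:ℝ) * b k j ≤ L + M := by
    intro k s
    have h1 : ∑ j ∈ s, (j:ℝ) * b k j ≤ ∑ j ∈ insert 1 s, (j:ℝ) * b k j :=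
      Finset.sum_le_sum_of_subset_of_nonneg (Finset.subset_insert _ _)
        (fun j _ _ => mul_nonneg (Nat.cast_nonneg j) (hb0 k j))
    have h2 := aux_mean (p k) (γ k) L (hγ_pos k) (hp_nonneg k) (hp_sum k) (hL' k) (insert 1 s)
    have h3 : ∑ j ∈ insert 1 s, (j:ℝ) * b k j
        = γ k * ∑ j ∈ insert 1 s, p k j * j + (M - γ k) := by
      have : ∀ j : ℕ, (j:ℝ) * b k j = γ k * (p k j * j) + if j = 1 then M - γ k else 0 := by
        intro j
        rw [hb]
        by_cases hj : j = 1
        · subst hj; simp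
        · simp only [hj, if_false]; ring
      simp only [this]
      rw [Finset.sum_add_distrib, ← Finset.mul_sum, Finset.sum_ite_eq' (insert 1 s) 1]
      simp
    linarith
  have hble : ∀ k j, b k j ≤ M := fun k j => le_hasSum (hbM k) j (fun i _ => hb0 k i)
  have hcpt : IsCompact (Set.pi univ (fun _ : ℕ => Icc (0:ℝ) M)) :=
    isCompact_univ_pi fun _ => isCompact_Icc
  obtain ⟨q, hq, φ, hφ, hlim⟩ := hcpt.tendsto_subseq
    (x := b) (fun k => fun j _ => ⟨hb0 k j, hble k j⟩)
  have hq0 : ∀ j, 0 ≤ q j := fun j => (hq j (mem_univ j)).1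
  have hlimj : ∀ j, Tendsto (fun k => b (φ k) j) atTop (nhds (q j)) := fun j =>
    (tendsto_pi_nhds.1 hlim) j
  have hqs : Summable q := by
    refine summable_of_sum_le hq0 (c := M) fun s => ?_
    refine le_of_tendsto (tendsto_finsetSum s fun j _ => hlimj j) (Eventually.of_forall fun k => ?_)
    exact sum_le_hasSum s (fun j _ => hb0 _ j) (hbM (φ k))
  have hqm : Summable (fun j : ℕ => (j:ℝ) * q j) := by
    refine summable_of_sum_le (fun j => mul_nonneg (Nat.cast_nonneg j) (hq0 j)) (c := L + M)
      fun s => ?_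
    refine le_of_tendsto (tendsto_finsetSum s fun j _ => (hlimj j).const_mul (j:ℝ))
      (Eventually.of_forall fun k => hbm (φ k) s)
  have hlt : EqOn (fun z => u z + M * z) (pgf q) (Ico (0:ℝ) 1) := by
    intro z hz
    have hz' : z ∈ Icc (0:ℝ) 1 := ⟨hz.1, hz.2.le⟩
    have t1 : Tendsto (fun k => ∑' j, b (φ k) j * z ^ j) atTop (nhds (pgf q z)) := by
      refine tendsto_tsum_of_dominated_convergence (bound := fun j => M * z ^ j)
        ((summable_geometric_of_lt_one hz.1 hz.2).mul_left M)
        (fun j => (hlimj j).mul_const _) (Eventually.of_forall fun k j => ?_)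
      rw [Real.norm_of_nonneg (mul_nonneg (hb0 _ _) (pow_nonneg hz.1 j))]
      exact mul_le_mul_of_nonneg_right (hble _ _) (pow_nonneg hz.1 j)
    have t2 : Tendsto (fun k => ∑' j, b (φ k) j * z ^ j) atTop (nhds (u z + M * z)) := by
      simp only [fun k => (hbz k z hz').tsum_eq]
      exact ((hconv z hz').comp hφ.tendsto_atTop).add_const _
    exact tendsto_nhds_unique t2 t1
  have hqc : ContinuousOn (pgf q) (Icc (0:ℝ) 1) := by
    unfold pgf
    refine continuousOn_tsum (fun j => by fun_prop) hqs fun j z hz => ?_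
    rw [Real.norm_of_nonneg (mul_nonneg (hq0 _) (pow_nonneg hz.1 j))]
    exact mul_le_of_le_one_right (hq0 j) (pow_le_one₀ hz.1 hz.2)
  have hall : EqOn (fun z => u z + M * z) (pgf q) (Icc (0:ℝ) 1) :=
    hlt.of_subset_closure (hu_cont.add (by fun_prop)) hqc Ico_subset_Icc_self
      (by rw [closure_Ico (zero_ne_one' ℝ)])
  have hu1 : u 1 = 0 := by
    refine tendsto_nhds_unique (hconv 1 (by simp)) ?_
    simp [fun k => aux_pgf_one (p k) (hp_sum k)]
  have hqM : HasSum q M := by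
    have h := hall (show (1:ℝ) ∈ Icc (0:ℝ) 1 by simp)
    simp only [hu1, pgf, one_pow, mul_one, zero_add] at h
    rw [h]
    exact hqs.hasSum
  refine ⟨M, fun j => q j / M, hMpos, fun j => div_nonneg (hq0 j) hMpos.le, ?_, ?_, ?_⟩
  · simpa [hMpos.ne'] using hqM.div_const M
  · simpa [mul_div_assoc] using hqm.div_const M
  · intro z hz
    have h := hall hz
    have h2 : pgf (fun j => q j / M) z = pgf q z / M := by
      unfold pgf
      rw [← tsum_div_const]
      exact tsum_congr fun j => by ring
    rw [h2, ← h]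
    field_simp
    ring
end

section
/- For any a > 0 and any probability distribution (p_j)_{j∈ℕ} on ℕ with finite mean Σ_j j·p_j < ∞ and generating function g, setting u(z) = a(g(z) − z), there exist positive reals (γ_k)_{k≥1} with γ_k → ∞ and probability generating functions (g_k)_{k≥1} such that the functions U_k(z) = γ_k(g_k(z) − z) are uniformly Lipschitz on [0,1] and converge to u(z) for every z ∈ [0,1]; i.e., conditions (A) and (B) hold with limit u. -/
open Filter Set

theorem aux_sum (q : ℕ → ℝ) (h0 : ∀ j, 0 ≤ q j) (hs : Summable q) (z : ℝ)
    (hz : z ∈ Icc (0:ℝ) 1) : Summable (fun j => q j * z ^ j) := by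
  refine Summable.of_nonneg_of_le (fun j => mul_nonneg (h0 j) (pow_nonneg hz.1 j)) (fun j => ?_) hs
  exact mul_le_of_le_one_right (h0 j) (pow_le_one₀ hz.1 hz.2)

theorem aux_pow (x y : ℝ) (hx : x ∈ Icc (0:ℝ) 1) (hy : y ∈ Icc (0:ℝ) 1) (n : ℕ) :
    |x ^ n - y ^ n| ≤ n * |x - y| := by
  refine (abs_pow_sub_pow_le x y n).trans ?_
  have h : max |x| |y| ^ (n - 1) ≤ 1 := by
    apply pow_le_one₀ (le_max_of_le_left (abs_nonneg x))
    rw [abs_of_nonneg hx.1, abs_of_nonneg hy.1]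
    exact max_le hx.2 hy.2
  calc |x - y| * n * max |x| |y| ^ (n - 1) ≤ |x - y| * n * 1 := by gcongr
    _ = n * |x - y| := by ring

theorem aux_lip (q : ℕ → ℝ) (h0 : ∀ j, 0 ≤ q j) (hs : Summable q)
    (hm : Summable (fun j : ℕ => (j : ℝ) * q j)) (x y : ℝ)
    (hx : x ∈ Icc (0:ℝ) 1) (hy : y ∈ Icc (0:ℝ) 1) :
    |pgf q x - pgf q y| ≤ (∑' j : ℕ, (j : ℝ) * q j) * |x - y| := by
  unfold pgf
  rw [← (aux_sum q h0 hs x hx).tsum_sub (aux_sum q h0 hs y hy), ← tsum_mul_right, ← Real.norm_eq_abs]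
  refine tsum_of_norm_bounded (hm.mul_right _).hasSum (fun j => ?_)
  rw [Real.norm_eq_abs, ← mul_sub, abs_mul, abs_of_nonneg (h0 j)]
  calc q j * |x ^ j - y ^ j| ≤ q j * (j * |x - y|) :=
        mul_le_mul_of_nonneg_left (aux_pow x y hx hy j) (h0 j)
    _ = _ := by ring

/-- For any `a > 0` and any probability distribution `q` on `ℕ` with
finite mean, setting `u(z) = a (g(z) - z)` where `g` is the generating function of `q`,
there exist `γ_k → ∞` and probability generating functions `g_k` such that
`U_k(z) = γ_k (g_k(z) - z)` are uniformly Lipschitz on `[0,1]` and converge to `u`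
pointwise on `[0,1]`; i.e. conditions (A) and (B) hold with limit `u`. -/
theorem existence_of_approximating_sequence_one_type
    (a : ℝ) (ha : 0 < a) (q : ℕ → ℝ)
    (hq_nonneg : ∀ j, 0 ≤ q j) (hq_sum : HasSum q 1)
    (hq_mean : Summable (fun j : ℕ => (j : ℝ) * q j)) :
    ∃ (γ : ℕ → ℝ) (p : ℕ → ℕ → ℝ),
      (∀ k, 0 < γ k) ∧
      -- Condition (A)
      Tendsto γ atTop atTop ∧
      (∀ k j, 0 ≤ p k j) ∧ (∀ k, HasSum (p k) 1) ∧
      -- Condition (B): uniform Lipschitz …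
      (∃ L : NNReal, ∀ k,
        LipschitzOnWith L (fun z => γ k * (pgf (p k) z - z)) (Icc (0:ℝ) 1)) ∧
      -- … and pointwise convergence to u(z) = a (g(z) - z)
      (∀ z ∈ Icc (0:ℝ) 1,
        Tendsto (fun k => γ k * (pgf (p k) z - z)) atTop
          (nhds (a * (pgf q z - z)))) := by
  have key : ∀ k : ℕ, ∀ z ∈ Icc (0:ℝ) 1, a * ((k:ℝ) + 1) *
      (pgf (fun j => ((k:ℝ) + 1)⁻¹ * q j + (if j = 1 then 1 - ((k:ℝ) + 1)⁻¹ else 0)) z - z)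
      = a * (pgf q z - z) := by
    intro k z hz
    have h1 := ((aux_sum q hq_nonneg hq_sum.summable z hz).hasSum.mul_left ((k:ℝ) + 1)⁻¹).add
      ((hasSum_ite_eq (1:ℕ) (1 - ((k:ℝ) + 1)⁻¹)).mul_right z)
    have h2 : pgf (fun j => ((k:ℝ) + 1)⁻¹ * q j + (if j = 1 then 1 - ((k:ℝ) + 1)⁻¹ else 0)) z
        = ((k:ℝ) + 1)⁻¹ * pgf q z + (1 - ((k:ℝ) + 1)⁻¹) * z := by
      unfold pgf
      rw [← h1.tsum_eq]
      refine tsum_congr (fun j => ?_)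
      dsimp only
      split_ifs with h
      · subst h; ring
      · ring
    rw [h2]
    have : (k:ℝ) + 1 ≠ 0 := by positivity
    field_simp
    ring
  have hM : 0 ≤ ∑' j : ℕ, (j : ℝ) * q j :=
    tsum_nonneg (fun j => mul_nonneg (Nat.cast_nonneg j) (hq_nonneg j))
  have hc : ∀ k : ℕ, ((k:ℝ) + 1)⁻¹ ≤ 1 := fun k =>
    inv_le_one_of_one_le₀ (by linarith [Nat.cast_nonneg (α := ℝ) k])
  refine ⟨fun k => a * ((k:ℝ) + 1),
    fun k j => ((k:ℝ) + 1)⁻¹ * q j + (if j = 1 then 1 - ((k:ℝ) + 1)⁻¹ else 0),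
    fun k => by positivity, ?_, ?_, ?_, ?_, ?_⟩
  · exact (tendsto_atTop_add_const_right _ _ tendsto_natCast_atTop_atTop).const_mul_atTop ha
  · intro k j
    have := hc k
    have h3 : 0 ≤ ((k:ℝ) + 1)⁻¹ * q j := mul_nonneg (by positivity) (hq_nonneg j)
    dsimp only
    split_ifs <;> linarith
  · intro k
    have h := (hq_sum.mul_left ((k:ℝ) + 1)⁻¹).add (hasSum_ite_eq (1:ℕ) (1 - ((k:ℝ) + 1)⁻¹))
    have e : ((k:ℝ) + 1)⁻¹ * 1 + (1 - ((k:ℝ) + 1)⁻¹) = 1 := by ring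
    rw [e] at h
    exact h
  · refine ⟨⟨a * ((∑' j : ℕ, (j : ℝ) * q j) + 1), by positivity⟩, fun k => ?_⟩
    refine LipschitzOnWith.of_dist_le_mul (fun x hx y hy => ?_)
    rw [key k x hx, key k y hy, Real.dist_eq, Real.dist_eq, ← mul_sub, abs_mul, abs_of_pos ha]
    have h := aux_lip q hq_nonneg hq_sum.summable hq_mean x y hx hy
    have h4 : |(pgf q x - x) - (pgf q y - y)| ≤ |pgf q x - pgf q y| + |x - y| := by
      have e : (pgf q x - x) - (pgf q y - y) = (pgf q x - pgf q y) - (x - y) := by ring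
      rw [e]; exact abs_sub _ _
    change _ ≤ a * ((∑' j : ℕ, (j : ℝ) * q j) + 1) * |x - y|
    rw [mul_assoc]
    apply mul_le_mul_of_nonneg_left _ ha.le
    linarith
  · intro z hz
    exact tendsto_const_nhds.congr (fun k => (key k z hz).symm)
end

section
/- Assume conditions (A) and (B). Then there exist constants λ ≥ 0 and N ≥ 1 such that for every k ≥ N, every t ≥ 0 and every z ∈ [0,1], the iterated generating function satisfies z^{e^{λt}} ≤ F_k(z,t) ≤ 1, where F_k(z,t) = g_k^{∘⌊γ_k t⌋}(z). -/
open Filter Set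

lemma pgf_aux_summable {p : ℕ → ℝ} (h0 : ∀ j, 0 ≤ p j) (hs : HasSum p 1) {z : ℝ}
    (hz : z ∈ Icc (0:ℝ) 1) : Summable (fun j => p j * z ^ j) :=
  Summable.of_nonneg_of_le (fun j => mul_nonneg (h0 j) (pow_nonneg hz.1 j))
    (fun j => mul_le_of_le_one_right (h0 j) (pow_le_one₀ hz.1 hz.2)) hs.summable

lemma pgf_aux_le_one {p : ℕ → ℝ} (h0 : ∀ j, 0 ≤ p j) (hs : HasSum p 1) {z : ℝ}
    (hz : z ∈ Icc (0:ℝ) 1) : pgf p z ≤ 1 := by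
  have h := (pgf_aux_summable h0 hs hz).tsum_le_tsum
    (fun j => mul_le_of_le_one_right (h0 j) (pow_le_one₀ hz.1 hz.2)) hs.summable
  rwa [hs.tsum_eq] at h

lemma pgf_aux_nonneg {p : ℕ → ℝ} (h0 : ∀ j, 0 ≤ p j) {z : ℝ}
    (hz : z ∈ Icc (0:ℝ) 1) : 0 ≤ pgf p z :=
  tsum_nonneg (fun j => mul_nonneg (h0 j) (pow_nonneg hz.1 j))

lemma pgf_aux_mean {p : ℕ → ℝ} (h0 : ∀ j, 0 ≤ p j) (hs : HasSum p 1) {a : ℝ}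
    (ha : ∀ z ∈ Icc (0:ℝ) 1, 1 - pgf p z ≤ a * (1 - z)) (J : ℕ) :
    ∑ j ∈ Finset.range J, p j * j ≤ a := by
  have key : ∀ z ∈ Ioo (0:ℝ) 1,
      ∑ j ∈ Finset.range J, p j * ∑ i ∈ Finset.range j, z ^ i ≤ a := by
    intro z hz
    have hz' : z ∈ Icc (0:ℝ) 1 := ⟨hz.1.le, hz.2.le⟩
    have h1 := hs.sub (pgf_aux_summable h0 hs hz').hasSum
    have h2 := sum_le_hasSum (Finset.range J) (fun j _ => by
      have := mul_le_of_le_one_right (h0 j) (pow_le_one₀ hz'.1 hz'.2 (n := j))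
      linarith) h1
    have h3 : ∑ j ∈ Finset.range J, (p j - p j * z ^ j)
        = (∑ j ∈ Finset.range J, p j * ∑ i ∈ Finset.range j, z ^ i) * (1 - z) := by
      rw [Finset.sum_mul]
      refine Finset.sum_congr rfl fun j _ => ?_
      have := geom_sum_mul_neg z j
      rw [mul_assoc, this]; ring
    have h4 : 1 - pgf p z ≤ a * (1 - z) := ha z hz'
    unfold pgf at h4
    rw [h3] at h2
    exact le_of_mul_le_mul_right (h2.trans h4) (by linarith [hz.2])
  have hc : Continuous (fun z : ℝ =>
      ∑ j ∈ Finset.range J, p j * ∑ i ∈ Finset.range j, z ^ i) := by fun_prop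
  have ht := (hc.tendsto 1).mono_left (nhdsWithin_le_nhds (s := Iio 1))
  have := le_of_tendsto ht (by
    filter_upwards [Ioo_mem_nhdsLT (show (0:ℝ) < 1 by norm_num)] with z hz
    exact key z hz)
  simpa using this

lemma pgf_aux_lower {p : ℕ → ℝ} (h0 : ∀ j, 0 ≤ p j) (hs : HasSum p 1) {a : ℝ} (ha0 : 1 ≤ a)
    (ha : ∀ z ∈ Icc (0:ℝ) 1, 1 - pgf p z ≤ a * (1 - z)) {z : ℝ} (hz : z ∈ Icc (0:ℝ) 1) :
    z ^ a ≤ pgf p z := by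
  rcases hz.1.eq_or_lt with h | hpos
  · rw [← h, Real.zero_rpow (by linarith)]
    exact pgf_aux_nonneg h0 ⟨le_rfl, zero_le_one⟩
  have hlog : Real.log z ≤ 0 := Real.log_nonpos hz.1 hz.2
  have hza : 0 < z ^ a := Real.rpow_pos_of_pos hpos a
  have tang : ∀ j : ℕ, z ^ a * (1 - a * Real.log z) + z ^ a * Real.log z * j ≤ z ^ j := by
    intro j
    have h1 : z ^ j = z ^ a * Real.exp (Real.log z * (j - a)) := by
      rw [← Real.rpow_def_of_pos hpos, ← Real.rpow_add hpos]
      simp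
    have h2 := Real.add_one_le_exp (Real.log z * (j - a))
    rw [h1]
    nlinarith [mul_le_mul_of_nonneg_left h2 hza.le]
  have hsum : ∀ J, z ^ a * (1 - a * Real.log z) * (∑ j ∈ Finset.range J, p j)
      + z ^ a * Real.log z * a ≤ pgf p z := by
    intro J
    have h1 : ∑ j ∈ Finset.range J, p j * z ^ j ≤ pgf p z :=
      (pgf_aux_summable h0 hs hz).sum_le_tsum _
        (fun j _ => mul_nonneg (h0 j) (pow_nonneg hz.1 j))
    have h2 : ∑ j ∈ Finset.range J,
        p j * (z ^ a * (1 - a * Real.log z) + z ^ a * Real.log z * j)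
        ≤ ∑ j ∈ Finset.range J, p j * z ^ j :=
      Finset.sum_le_sum fun j _ => mul_le_mul_of_nonneg_left (tang j) (h0 j)
    have h3 : ∑ j ∈ Finset.range J,
        p j * (z ^ a * (1 - a * Real.log z) + z ^ a * Real.log z * j)
        = z ^ a * (1 - a * Real.log z) * (∑ j ∈ Finset.range J, p j)
        + z ^ a * Real.log z * ∑ j ∈ Finset.range J, p j * j := by
      rw [Finset.mul_sum, Finset.mul_sum, ← Finset.sum_add_distrib]
      exact Finset.sum_congr rfl fun j _ => by ring
    have h4 := mul_le_mul_of_nonpos_left (pgf_aux_mean h0 hs ha J)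
      (mul_nonpos_of_nonneg_of_nonpos hza.le hlog)
    linarith
  have ht := (hs.tendsto_sum_nat.const_mul (z ^ a * (1 - a * Real.log z))).add_const
    (z ^ a * Real.log z * a)
  have := le_of_tendsto' ht hsum
  linarith

lemma pgf_aux_iter {p : ℕ → ℝ} (h0 : ∀ j, 0 ≤ p j) (hs : HasSum p 1) {a : ℝ} (ha0 : 1 ≤ a)
    (ha : ∀ z ∈ Icc (0:ℝ) 1, 1 - pgf p z ≤ a * (1 - z)) {z : ℝ} (hz : z ∈ Icc (0:ℝ) 1)
    (n : ℕ) : z ^ (a ^ n) ≤ (pgf p)^[n] z ∧ (pgf p)^[n] z ∈ Icc (0:ℝ) 1 := by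
  induction n with
  | zero => simpa using hz
  | succ n ih =>
    rw [Function.iterate_succ_apply']
    refine ⟨?_, pgf_aux_nonneg h0 ih.2, pgf_aux_le_one h0 hs ih.2⟩
    refine le_trans ?_ (pgf_aux_lower h0 hs ha0 ha ih.2)
    rw [pow_succ, Real.rpow_mul hz.1]
    exact Real.rpow_le_rpow (Real.rpow_nonneg hz.1 _) ih.1 (by linarith)

/-- Under conditions (A) and (B) there are constants `λ ≥ 0` and `N ≥ 1`
such that for all `k ≥ N`, `t ≥ 0` and `z ∈ [0,1]`,
`z ^ (exp (λ t)) ≤ F_k(z,t) ≤ 1`, where `F_k(z,t) = g_k^{∘⌊γ_k t⌋}(z)`. -/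
theorem iterated_pgf_bounds
    (p : ℕ → ℕ → ℝ) (γ : ℕ → ℝ) (u : ℝ → ℝ)
    (hp_nonneg : ∀ k j, 0 ≤ p k j)
    (hp_sum : ∀ k, HasSum (p k) 1)
    (hγ_pos : ∀ k, 0 < γ k)
    -- Condition (A)
    (hA : Tendsto γ atTop atTop)
    -- Condition (B)
    (hLip : ∃ L : NNReal, ∀ k,
      LipschitzOnWith L (fun z => γ k * (pgf (p k) z - z)) (Icc (0:ℝ) 1))
    (hu_cont : ContinuousOn u (Icc (0:ℝ) 1))
    (hconv : ∀ z ∈ Icc (0:ℝ) 1,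
      Tendsto (fun k => γ k * (pgf (p k) z - z)) atTop (nhds (u z))) :
    ∃ (lam : ℝ) (N : ℕ), 0 ≤ lam ∧ 1 ≤ N ∧
      ∀ k, N ≤ k → ∀ t : ℝ, 0 ≤ t → ∀ z ∈ Icc (0:ℝ) 1,
        z ^ Real.exp (lam * t) ≤ (pgf (p k))^[⌊γ k * t⌋₊] z ∧
        (pgf (p k))^[⌊γ k * t⌋₊] z ≤ 1 := by
  obtain ⟨L, hL⟩ := hLip
  refine ⟨L, 1, L.2, le_rfl, fun k _ t ht z hz => ?_⟩
  have hg := hγ_pos k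
  have hLg : 0 ≤ (L:ℝ) / γ k := div_nonneg L.2 hg.le
  have h1 : pgf (p k) 1 = 1 := by simp [pgf, (hp_sum k).tsum_eq]
  have ha : ∀ z ∈ Icc (0:ℝ) 1, 1 - pgf (p k) z ≤ (1 + L / γ k) * (1 - z) := by
    intro z hz
    have h := (hL k).dist_le_mul z hz 1 ⟨zero_le_one, le_rfl⟩
    simp only [Real.dist_eq, h1, sub_self, mul_zero, sub_zero] at h
    rw [abs_sub_comm z 1, abs_of_nonneg (by linarith [hz.2] : 0 ≤ 1 - z)] at h
    have h2 := (abs_le.1 h).1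
    have h3 : z - pgf (p k) z ≤ L / γ k * (1 - z) := by
      rw [div_mul_eq_mul_div, le_div_iff₀ hg]
      linarith
    linarith
  obtain ⟨h2, h3⟩ := pgf_aux_iter (hp_nonneg k) (hp_sum k) (by linarith) ha hz ⌊γ k * t⌋₊
  refine ⟨le_trans ?_ h2, h3.2⟩
  have hE : (1 + L / γ k) ^ ⌊γ k * t⌋₊ ≤ Real.exp (L * t) := by
    calc (1 + L / γ k) ^ ⌊γ k * t⌋₊ ≤ (Real.exp (L / γ k)) ^ ⌊γ k * t⌋₊ := by
          gcongr
          linarith [Real.add_one_le_exp ((L:ℝ) / γ k)]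
      _ = Real.exp (⌊γ k * t⌋₊ * (L / γ k)) := (Real.exp_nat_mul _ _).symm
      _ ≤ Real.exp (L * t) := by
          apply Real.exp_le_exp.2
          have := mul_le_mul_of_nonneg_right (Nat.floor_le (by positivity : 0 ≤ γ k * t)) hLg
          refine this.trans (le_of_eq ?_)
          field_simp
  exact Real.rpow_le_rpow_of_exponent_ge_of_imp hz.1 hz.2 hE (fun _ h => absurd h (by positivity))
end

section
/- Assume conditions (A) and (B). Then for any c > 0, the sequence F_k(z,t) = g_k^{∘⌊γ_k t⌋}(z) converges uniformly on [0, e^{−c}] × [0, c] as k → ∞ to a function F(z,t), and the limit function satisfies the integral equation F(z,t) = z + ∫₀ᵗ u(F(z,r)) dr for all (z,t) ∈ [0, e^{−c}] × [0, c] (so F solves ∂F/∂t = u(F), F(z,0) = z). -/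
open Filter Set

theorem pgf_mem {p : ℕ → ℝ} (h0 : ∀ j, 0 ≤ p j) (h1 : HasSum p 1) {z : ℝ}
    (hz : z ∈ Icc (0:ℝ) 1) : pgf p z ∈ Icc (0:ℝ) 1 := by
  have hle : ∀ j, p j * z ^ j ≤ p j := fun j =>
    mul_le_of_le_one_right (h0 j) (pow_le_one₀ hz.1 hz.2)
  have hnn : ∀ j, 0 ≤ p j * z ^ j := fun j => mul_nonneg (h0 j) (pow_nonneg hz.1 j)
  refine ⟨tsum_nonneg hnn, ?_⟩
  have hs : Summable (fun j => p j * z ^ j) := Summable.of_nonneg_of_le hnn hle h1.summable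
  calc pgf p z ≤ ∑' j, p j := hs.tsum_le_tsum hle h1.summable
    _ = 1 := h1.tsum_eq

theorem pgf_at_one {p : ℕ → ℝ} (h1 : HasSum p 1) : pgf p 1 = 1 := by
  simp [pgf, h1.tsum_eq]

theorem unif_conv {U : ℕ → ℝ → ℝ} {u : ℝ → ℝ} {L : NNReal}
    (hLip : ∀ k, LipschitzOnWith L (U k) (Icc (0:ℝ) 1))
    (hconv : ∀ z ∈ Icc (0:ℝ) 1, Tendsto (fun k => U k z) atTop (nhds (u z))) :
    ∀ ε > 0, ∀ᶠ k in atTop, ∀ z ∈ Icc (0:ℝ) 1, |U k z - u z| < ε := by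
  let G : ℕ → Icc (0:ℝ) 1 → ℝ := fun k z => U k z
  have hG : Equicontinuous G :=
    (LipschitzWith.uniformEquicontinuous G L (fun k => (hLip k).to_restrict)).equicontinuous
  have h := (hG.tendsto_uniformFun_iff_pi atTop (fun z => u z)).2
    (tendsto_pi_nhds.2 fun z => hconv z z.2)
  rw [UniformFun.tendsto_iff_tendstoUniformly] at h
  intro ε hε
  filter_upwards [Metric.tendstoUniformly_iff.1 h ε hε] with k hk z hz
  have := hk ⟨z, hz⟩
  rw [dist_comm, Real.dist_eq] at this
  exact this

theorem exists_sol {v : ℝ → ℝ} {L : NNReal} (hv : LipschitzWith L v) (hb : ∀ x, |v x| ≤ L)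
    {c : ℝ} (hc : 0 < c) (z : ℝ) :
    ∃ y : ℝ → ℝ, y 0 = z ∧ ∀ t ∈ Icc (0:ℝ) c, HasDerivWithinAt y (v (y t)) (Icc 0 c) t := by
  have hpl : IsPicardLindelof (fun _ => v) (tmin := 0) (tmax := c)
      ⟨0, by simp [hc.le]⟩ z (L * c.toNNReal) 0 L L := by
    refine IsPicardLindelof.of_time_independent (fun x _ => hb x) hv.lipschitzOnWith ?_
    simp [hc.le]
  exact hpl.exists_eq_forall_mem_Icc_hasDerivWithinAt₀

theorem sol_step {v : ℝ → ℝ} {L : NNReal} (hv : LipschitzWith L v) (hb : ∀ x, |v x| ≤ L)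
    {c : ℝ} {y : ℝ → ℝ}
    (hy : ∀ t ∈ Icc (0:ℝ) c, HasDerivWithinAt y (v (y t)) (Icc 0 c) t)
    {a b : ℝ} (ha : 0 ≤ a) (hab : a ≤ b) (hbc : b ≤ c) :
    |y b - y a| ≤ L * (b - a) ∧ |y b - y a - (b - a) * v (y a)| ≤ L * L * (b - a) * (b - a) := by
  have hsub : Icc a b ⊆ Icc 0 c := Icc_subset_Icc ha hbc
  have hl : ∀ s ∈ Icc a b, |y s - y a| ≤ L * (s - a) := by
    intro s hs
    have := (convex_Icc 0 c).norm_image_sub_le_of_norm_hasDerivWithin_le hy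
      (fun x _ => hb (y x)) (hsub ⟨le_rfl, hab⟩) (hsub hs)
    rwa [Real.norm_eq_abs, Real.norm_eq_abs, abs_of_nonneg (sub_nonneg.2 hs.1)] at this
  refine ⟨hl b ⟨hab, le_rfl⟩, ?_⟩
  have hd : ∀ s ∈ Icc a b, HasDerivWithinAt (fun s => y s - s * v (y a))
      (v (y s) - 1 * v (y a)) (Icc a b) s := fun s hs =>
    ((hy s (hsub hs)).mono hsub).sub ((hasDerivWithinAt_id s _).mul_const _)
  have := (convex_Icc a b).norm_image_sub_le_of_norm_hasDerivWithin_le hd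
    (C := L * L * (b - a)) ?_ ⟨le_rfl, hab⟩ ⟨hab, le_rfl⟩
  · rw [Real.norm_eq_abs, Real.norm_eq_abs, abs_of_nonneg (sub_nonneg.2 hab)] at this
    convert this using 2
    ring
  · intro s hs
    have h1 := hv.dist_le_mul (y s) (y a)
    rw [Real.dist_eq, Real.dist_eq] at h1
    rw [Real.norm_eq_abs, one_mul]
    calc _ ≤ _ := h1
      _ ≤ L * (L * (s - a)) := by gcongr; exact hl s hs
      _ ≤ L * (L * (b - a)) := by gcongr; exact hs.2
      _ = _ := by ring

/-- Euler scheme estimate. -/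
theorem euler_bound {v : ℝ → ℝ} {L : NNReal} (hv : LipschitzWith L v) (hb : ∀ x, |v x| ≤ L)
    {c : ℝ} {y : ℝ → ℝ}
    (hy : ∀ t ∈ Icc (0:ℝ) c, HasDerivWithinAt y (v (y t)) (Icc 0 c) t)
    {h ε : ℝ} (hh : 0 < h) (hε : 0 ≤ ε) {x W : ℕ → ℝ} (hx0 : x 0 = y 0)
    (hx : ∀ n, x (n+1) = x n + h * W n) (hW : ∀ n, |W n - v (x n)| ≤ ε) (n : ℕ)
    (hn : n * h ≤ c) :
    |x n - y (n * h)| ≤ n * h * (ε + L * L * h) * (1 + h * L) ^ n := by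
  induction n with
  | zero => simp [hx0]
  | succ n ih =>
    push_cast at hn ⊢
    have ih := ih (by nlinarith)
    have hs := (sol_step hv hb hy (a := n * h) (b := (n+1) * h) (by positivity)
      (by nlinarith) hn).2
    have e : ((n:ℝ)+1) * h - n * h = h := by ring
    rw [e] at hs
    have hl := hv.dist_le_mul (x n) (y (n*h))
    rw [Real.dist_eq, Real.dist_eq] at hl
    set Y := y (n*h)
    set Y' := y ((n+1)*h)
    set e := |x n - Y| with he
    have hP : 1 ≤ (1 + h * L) ^ (n+1) := one_le_pow₀ (by have := L.2; nlinarith [mul_nonneg hh.le L.2])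
    have hLn : (0:ℝ) ≤ L := L.2
    have h1 : |x (n+1) - Y'| ≤ e + h * ε + h * (L * e) + L * L * h * h := by
      have : x (n+1) - Y' = (x n - Y) + h * (W n - v (x n)) + h * (v (x n) - v Y)
        - (Y' - Y - h * v Y) := by rw [hx]; ring
      rw [this]
      refine (abs_sub _ _).trans (add_le_add ?_ hs)
      refine (abs_add_le _ _).trans (add_le_add ((abs_add_le _ _).trans (add_le_add le_rfl ?_)) ?_)
      · rw [abs_mul, abs_of_pos hh]; gcongr; exact hW n
      · rw [abs_mul, abs_of_pos hh]; gcongr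
    calc _ ≤ _ := h1
      _ = (1 + h * L) * e + h * (ε + L * L * h) * 1 := by ring
      _ ≤ (1 + h * L) * (n * h * (ε + L * L * h) * (1 + h * L) ^ n)
          + h * (ε + L * L * h) * (1 + h * L) ^ (n+1) := by gcongr
      _ = _ := by ring

/-- Under conditions (A) and (B), for any `c > 0` the functions
`F_k(z,t) = g_k^{∘⌊γ_k t⌋}(z)` converge uniformly on `[0, e^{-c}] × [0, c]` to a
limit `F`, and the limit satisfies `F(z,t) = z + ∫_0^t u(F(z,r)) dr` there. -/
theorem iterated_pgf_uniform_convergence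
    (p : ℕ → ℕ → ℝ) (γ : ℕ → ℝ) (u : ℝ → ℝ)
    (hp_nonneg : ∀ k j, 0 ≤ p k j)
    (hp_sum : ∀ k, HasSum (p k) 1)
    (hγ_pos : ∀ k, 0 < γ k)
    -- Condition (A)
    (hA : Tendsto γ atTop atTop)
    -- Condition (B)
    (hLip : ∃ L : NNReal, ∀ k,
      LipschitzOnWith L (fun z => γ k * (pgf (p k) z - z)) (Icc (0:ℝ) 1))
    (hu_cont : ContinuousOn u (Icc (0:ℝ) 1))
    (hconv : ∀ z ∈ Icc (0:ℝ) 1,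
      Tendsto (fun k => γ k * (pgf (p k) z - z)) atTop (nhds (u z)))
    (c : ℝ) (hc : 0 < c) :
    ∃ F : ℝ × ℝ → ℝ,
      TendstoUniformlyOn
        (fun k (zt : ℝ × ℝ) => (pgf (p k))^[⌊γ k * zt.2⌋₊] zt.1)
        F atTop (Icc (0:ℝ) (Real.exp (-c)) ×ˢ Icc (0:ℝ) c) ∧
      ∀ z ∈ Icc (0:ℝ) (Real.exp (-c)), ∀ t ∈ Icc (0:ℝ) c,
        F (z, t) = z + ∫ r in (0:ℝ)..t, u (F (z, r)) := by
  obtain ⟨L, hL⟩ := hLip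
  have hunif := unif_conv hL hconv
  have huL : LipschitzOnWith L u (Icc (0:ℝ) 1) := by
    refine LipschitzOnWith.of_dist_le_mul fun a ha b hb => ?_
    exact le_of_tendsto ((hconv a ha).dist (hconv b hb))
      (Eventually.of_forall fun k => (hL k).dist_le_mul a ha b hb)
  have h1m : (1:ℝ) ∈ Icc (0:ℝ) 1 := by simp
  have hu1 : u 1 = 0 := by
    refine tendsto_nhds_unique (hconv 1 h1m) ?_
    simp [pgf_at_one (hp_sum _)]
  have hub : ∀ x ∈ Icc (0:ℝ) 1, |u x| ≤ L := by
    intro x hx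
    have := huL.dist_le_mul x hx 1 h1m
    rw [Real.dist_eq, Real.dist_eq, hu1, sub_zero] at this
    refine this.trans (mul_le_of_le_one_right L.2 ?_)
    rw [abs_le]; constructor <;> linarith [hx.1, hx.2]
  obtain ⟨v, hvdef⟩ : ∃ v : ℝ → ℝ, v = fun x => u (projIcc 0 1 zero_le_one x) := ⟨_, rfl⟩
  have hvu : ∀ x ∈ Icc (0:ℝ) 1, v x = u x := fun x hx => by
    rw [hvdef]; simp only [projIcc_of_mem _ hx]
  have hvb : ∀ x, |v x| ≤ L := fun x => by rw [hvdef]; exact hub _ (Subtype.mem _)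
  have hv : LipschitzWith L v := by
    have := huL.to_restrict.comp (LipschitzWith.projIcc (zero_le_one (α := ℝ)))
    rw [mul_one] at this
    rw [hvdef]
    exact this
  choose y hy0 hy using fun z => exists_sol hv hvb hc z
  have hexp : Real.exp (-c) ≤ 1 := Real.exp_le_one_iff.2 (by linarith)
  have hmem : ∀ k z, z ∈ Icc (0:ℝ) 1 → ∀ n, (pgf (p k))^[n] z ∈ Icc (0:ℝ) 1 := by
    intro k z hz n
    induction n with
    | zero => simpa using hz
    | succ n ih =>
      rw [Function.iterate_succ_apply']
      exact pgf_mem (hp_nonneg k) (hp_sum k) ih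
  have hT : TendstoUniformlyOn
        (fun k (zt : ℝ × ℝ) => (pgf (p k))^[⌊γ k * zt.2⌋₊] zt.1)
        (fun zt => y zt.1 zt.2) atTop (Icc (0:ℝ) (Real.exp (-c)) ×ˢ Icc (0:ℝ) c) := by
    rw [Metric.tendstoUniformlyOn_iff]
    intro ε hε
    set M := c * Real.exp (c * L) with hM
    have hMpos : 0 < M := by positivity
    have hinv : Tendsto (fun k => (γ k)⁻¹) atTop (nhds 0) := tendsto_inv_atTop_zero.comp hA
    have hlim : Tendsto (fun k => M * (ε / (2 * M) + L * L * (γ k)⁻¹) + L * (γ k)⁻¹) atTop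
        (nhds (M * (ε / (2 * M) + L * L * 0) + L * 0)) :=
      (((hinv.const_mul _).const_add _).const_mul _).add (hinv.const_mul _)
    have hlt : M * (ε / (2 * M) + L * L * 0) + L * 0 < ε := by
      have : M * (ε / (2 * M) + L * L * 0) + L * 0 = ε / 2 := by field_simp; ring
      rw [this]; linarith
    filter_upwards [hunif (ε / (2 * M)) (by positivity), hlim.eventually_lt_const hlt]
      with k hk hk2
    rintro ⟨z, t⟩ ⟨hz, ht⟩
    simp only at hz ht ⊢
    have hz1 : z ∈ Icc (0:ℝ) 1 := ⟨hz.1, hz.2.trans hexp⟩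
    have hγ := hγ_pos k
    set n := ⌊γ k * t⌋₊ with hn
    have hn1 : (n:ℝ) ≤ γ k * t := Nat.floor_le (mul_nonneg hγ.le ht.1)
    have hn2 : γ k * t < n + 1 := Nat.lt_floor_add_one _
    set h := (γ k)⁻¹ with hh
    have hhp : 0 < h := inv_pos.2 hγ
    have hγh : γ k * h = 1 := mul_inv_cancel₀ hγ.ne'
    have hnt : n * h ≤ t := by
      calc n * h ≤ (γ k * t) * h := by gcongr
        _ = t := by linear_combination t * hγh
    have htn : t - n * h ≤ h := by
      have : t ≤ (n + 1) * h := by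
        calc t = (γ k * t) * h := by linear_combination -t * hγh
          _ ≤ _ := by gcongr
      linarith
    have hnc := hnt.trans ht.2
    have hb := euler_bound hv hvb (hy z) hhp (ε := ε / (2 * M)) (by positivity)
      (x := fun n => (pgf (p k))^[n] z)
      (W := fun n => γ k * (pgf (p k) ((pgf (p k))^[n] z) - (pgf (p k))^[n] z))
      (by simp [hy0])
      (fun n => by
        simp only [Function.iterate_succ_apply']
        linear_combination (-(pgf (p k) ((pgf (p k))^[n] z) - (pgf (p k))^[n] z)) * hγh)
      (fun n => by
        rw [hvu _ (hmem k z hz1 n)]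
        exact (hk _ (hmem k z hz1 n)).le) n hnc
    have hpow : (1 + h * L) ^ n ≤ Real.exp (c * L) := by
      have h1 : 1 + h * L ≤ Real.exp (h * L) := by linarith [Real.add_one_le_exp (h * L)]
      calc (1 + h * L) ^ n ≤ Real.exp (h * L) ^ n := by gcongr
        _ = Real.exp (n * h * L) := by rw [← Real.exp_nat_mul]; ring_nf
        _ ≤ _ := by gcongr
    have hs := (sol_step hv hvb (hy z) (a := n * h) (b := t) (by positivity) hnt ht.2).1
    rw [Real.dist_eq]
    calc |y z t - (pgf (p k))^[n] z|
        ≤ |y z t - y z (n * h)| + |y z (n * h) - (pgf (p k))^[n] z| := abs_sub_le _ _ _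
      _ ≤ L * h + c * (ε / (2 * M) + L * L * h) * Real.exp (c * L) := by
          refine add_le_add (hs.trans (by gcongr)) ?_
          rw [abs_sub_comm]
          refine hb.trans ?_
          gcongr
      _ = M * (ε / (2 * M) + L * L * h) + L * h := by rw [hM]; ring
      _ < ε := hk2
  refine ⟨fun zt => y zt.1 zt.2, hT, ?_⟩
  intro z hz t ht
  have hz1 : z ∈ Icc (0:ℝ) 1 := ⟨hz.1, hz.2.trans hexp⟩
  simp only
  have hsub : Icc 0 t ⊆ Icc 0 c := Icc_subset_Icc le_rfl ht.2
  have hyc : ContinuousOn (y z) (Icc 0 t) := fun s hs =>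
    ((hy z s (hsub hs)).continuousWithinAt).mono hsub
  have hymem : ∀ r ∈ Icc (0:ℝ) c, y z r ∈ Icc (0:ℝ) 1 := fun r hr =>
    isClosed_Icc.mem_of_tendsto (hT.tendsto_at (x := (z, r)) ⟨hz, hr⟩)
      (Eventually.of_forall fun k => hmem k z hz1 _)
  have hI : ∫ r in (0:ℝ)..t, u (y z r) = ∫ r in (0:ℝ)..t, v (y z r) := by
    refine intervalIntegral.integral_congr fun r hr => ?_
    rw [uIcc_of_le ht.1] at hr
    exact (hvu _ (hymem r (hsub hr))).symm
  rw [hI, intervalIntegral.integral_eq_sub_of_hasDerivAt_of_le ht.1 hyc (f' := fun r => v (y z r)), hy0]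
  · ring
  · intro s hs
    exact (hy z s (hsub ⟨hs.1.le, hs.2.le⟩)).hasDerivAt
      (Icc_mem_nhds hs.1 (hs.2.trans_le ht.2))
  · refine ContinuousOn.intervalIntegrable ?_
    rw [uIcc_of_le ht.1]
    exact hv.continuous.comp_continuousOn hyc
end

section
/- Assume conditions (A), (C) and (D). Then the pointwise limit Φ₁ of the sequence Φ_{k,1} has the representation Φ₁(λ₁,λ₂) = −a₁₁λ₁ − αλ₁² − ∫_𝕄 (e^{−⟨λ,z⟩} − 1 + λ₁z₁) n₁(dz) for some a₁₁ ∈ ℝ, α ≥ 0 and σ-finite measure n₁ on 𝕄 with n₁({0}) = 0 and ∫_𝕄 (z₁∧z₁² + z₂) n₁(dz) < ∞; and the pointwise limit Φ₂ of the sequence e^{λ₂}Φ_{k,2} has the representation Φ₂(λ₁,λ₂) = a₂₁λ₁ + ∫_{𝕄₋₁} (1 − e^{−⟨λ,z⟩}) n₂(dz) for some a₂₁ ≥ 0 and σ-finite measure n₂ on 𝕄₋₁ with n₂({0}) = 0, n₂([0,∞)×{−1}) < ∞ and ∫_{𝕄₋₁} (z₁ + |z₂|) n₂(dz) < ∞.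 -/
open MeasureTheory Filter Set

noncomputable section

/-- The state space `𝕄 = [0,∞) × ℕ`, as a subset of `ℝ²`. -/
def Mset : Set (ℝ × ℝ) := {z | 0 ≤ z.1 ∧ ∃ n : ℕ, z.2 = (n : ℝ)}

/-- The space `𝕄₋₁ = [0,∞) × (ℕ ∪ {-1})`, as a subset of `ℝ²`. -/
def Mm1set : Set (ℝ × ℝ) := {z | 0 ≤ z.1 ∧ ∃ n : ℤ, (-1 : ℤ) ≤ n ∧ z.2 = (n : ℝ)}

/-- The data of a branching mechanism `(Φ₁, Φ₂)` of a mixed state branching process. -/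
structure BranchingMechanism where
  a11 : ℝ
  a21 : ℝ
  alpha : ℝ
  a21_nonneg : 0 ≤ a21
  alpha_nonneg : 0 ≤ alpha
  n1 : Measure (ℝ × ℝ)
  n2 : Measure (ℝ × ℝ)
  n1_sigmaFinite : SigmaFinite n1
  n2_sigmaFinite : SigmaFinite n2
  /-- `n₁` is supported on `𝕄` -/
  n1_supp : n1 Msetᶜ = 0
  /-- `n₂` is supported on `𝕄₋₁` -/
  n2_supp : n2 Mm1setᶜ = 0
  /-- `n₁` does not charge the origin -/
  n1_zero : n1 {0} = 0
  /-- `n₂` does not charge the origin -/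
  n2_zero : n2 {0} = 0
  /-- `n₂([0,∞) × {-1}) < ∞` -/
  n2_neg1 : n2 {z : ℝ × ℝ | z.2 = -1} ≠ ⊤
  /-- `∫ (z₁ ∧ z₁² + z₂) n₁(dz) < ∞` -/
  n1_moment : ∫⁻ z, ENNReal.ofReal (min z.1 (z.1 ^ 2) + z.2) ∂n1 ≠ ⊤
  /-- `∫ (z₁ + |z₂|) n₂(dz) < ∞` -/
  n2_moment : ∫⁻ z, ENNReal.ofReal (z.1 + |z.2|) ∂n2 ≠ ⊤

/-- `Φ₁(λ) = -a₁₁λ₁ - αλ₁² - ∫ (e^{-⟨λ,z⟩} - 1 + λ₁z₁) n₁(dz)`. -/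
def mPhi1 (B : BranchingMechanism) (l : ℝ × ℝ) : ℝ :=
  -B.a11 * l.1 - B.alpha * l.1 ^ 2 -
    ∫ z, (Real.exp (-(l.1 * z.1 + l.2 * z.2)) - 1 + l.1 * z.1) ∂B.n1

/-- `Φ₂(λ) = a₂₁λ₁ + ∫ (1 - e^{-⟨λ,z⟩}) n₂(dz)`. -/
def mPhi2 (B : BranchingMechanism) (l : ℝ × ℝ) : ℝ :=
  B.a21 * l.1 + ∫ z, (1 - Real.exp (-(l.1 * z.1 + l.2 * z.2))) ∂B.n2


/-- Generating function of a two-type offspring distribution on `ℕ²`. -/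
def pgf2 (p : ℕ × ℕ → ℝ) (s : ℝ × ℝ) : ℝ :=
  ∑' i : ℕ × ℕ, p i * s.1 ^ i.1 * s.2 ^ i.2

/-- `Φ_{k,1}(λ) = kγ_k (e^{-λ₁/k} - g_{k,1}(e^{-λ₁/k}, e^{-λ₂}))`; the index `k ≥ 1`
of the paper corresponds to `k + 1` here. -/
def Phik1 (γ : ℕ → ℝ) (g1 : ℕ → ℝ × ℝ → ℝ) (k : ℕ) (l : ℝ × ℝ) : ℝ :=
  (k + 1 : ℝ) * γ k *
    (Real.exp (-l.1 / (k + 1 : ℝ)) - g1 k (Real.exp (-l.1 / (k + 1 : ℝ)), Real.exp (-l.2)))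

/-- `Φ_{k,2}(λ) = γ_k (e^{-λ₂} - g_{k,2}(e^{-λ₁/k}, e^{-λ₂}))`; the index `k ≥ 1`
of the paper corresponds to `k + 1` here. -/
def Phik2 (γ : ℕ → ℝ) (g2 : ℕ → ℝ × ℝ → ℝ) (k : ℕ) (l : ℝ × ℝ) : ℝ :=
  γ k * (Real.exp (-l.2) - g2 k (Real.exp (-l.1 / (k + 1 : ℝ)), Real.exp (-l.2)))


lemma compactness_aux {ι E : Type*} [TopologicalSpace E] [T2Space E] [MeasurableSpace E]
    [BorelSpace E] (K : Set E) (hK : IsCompact K) (q : ℕ → ι → ℝ) (ξ : ℕ → ι → E)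
    (hq : ∀ k i, 0 ≤ q k i) (hs : ∀ k, Summable (q k)) (C : ℝ) (hb : ∀ k, ∑' i, q k i ≤ C)
    (hξ : ∀ k i, ξ k i ∈ K) :
    ∃ μ : Measure E, IsFiniteMeasure μ ∧ μ Kᶜ = 0 ∧ ∀ f : E → ℝ, ContinuousOn f K →
      Tendsto (fun k => ∑' i, q k i * f (ξ k i)) (hyperfilter ℕ) (nhds (∫ x, f x ∂μ)) := by
  have : CompactSpace K := isCompact_iff_compactSpace.mp hK
  -- limits exist
  have hsum : ∀ (f : C(K, ℝ)) (k : ℕ), Summable (fun i => q k i * f ⟨ξ k i, hξ k i⟩) := by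
    intro f k
    refine Summable.of_norm_bounded ((hs k).mul_right ‖f‖) (fun i => ?_)
    rw [norm_mul, Real.norm_of_nonneg (hq k i)]
    exact mul_le_mul_of_nonneg_left (f.norm_coe_le_norm _) (hq k i)
  have hlim : ∀ f : C(K, ℝ), ∃ c, Tendsto (fun k => ∑' i, q k i * f ⟨ξ k i, hξ k i⟩)
      (hyperfilter ℕ) (nhds c) := by
    intro f
    have hbd : ∀ k, (∑' i, q k i * f ⟨ξ k i, hξ k i⟩) ∈ Icc (-(C * ‖f‖)) (C * ‖f‖) := by
      intro k
      rw [mem_Icc, ← abs_le]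
      calc |∑' i, q k i * f ⟨ξ k i, hξ k i⟩| ≤ ∑' i, q k i * ‖f‖ := by
            rw [← Real.norm_eq_abs]
            refine tsum_of_norm_bounded ((hs k).mul_right ‖f‖).hasSum (fun i => ?_)
            rw [norm_mul, Real.norm_of_nonneg (hq k i)]
            exact mul_le_mul_of_nonneg_left (f.norm_coe_le_norm _) (hq k i)
        _ = (∑' i, q k i) * ‖f‖ := tsum_mul_right
        _ ≤ C * ‖f‖ := mul_le_mul_of_nonneg_right (hb k) (norm_nonneg _)
    obtain ⟨c, -, hc⟩ := (isCompact_Icc (a := -(C * ‖f‖)) (b := C * ‖f‖)).ultrafilter_le_nhds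
      ((hyperfilter ℕ).map (fun k => ∑' i, q k i * f ⟨ξ k i, hξ k i⟩))
      (by
        rw [le_principal_iff]
        exact Filter.mem_map.mpr (Filter.univ_mem' hbd))
    exact ⟨c, hc⟩
  choose L hL using hlim
  let Λ0 : CompactlySupportedContinuousMap K ℝ →ₗ[ℝ] ℝ :=
    { toFun := fun f => L f.toContinuousMap
      map_add' := by
        intro f g
        refine tendsto_nhds_unique (hL _) ?_
        refine ((hL f.toContinuousMap).add (hL g.toContinuousMap)).congr (fun k => ?_)
        rw [← (hsum _ k).tsum_add (hsum _ k)]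
        exact tsum_congr fun i => (mul_add _ _ _).symm
      map_smul' := by
        intro c f
        refine tendsto_nhds_unique (hL _) ?_
        refine ((hL f.toContinuousMap).const_mul c).congr (fun k => ?_)
        rw [← tsum_mul_left]
        exact tsum_congr fun i => (mul_left_comm _ _ _) }
  let Λ : CompactlySupportedContinuousMap K ℝ →ₚ[ℝ] ℝ := PositiveLinearMap.mk₀ Λ0 (by
    intro f hf
    exact ge_of_tendsto' (hL _) (fun k => tsum_nonneg fun i => mul_nonneg (hq k i) (hf _)))
  refine ⟨(RealRMK.rieszMeasure Λ).map Subtype.val, inferInstance, ?_, ?_⟩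
  · rw [Measure.map_apply measurable_subtype_coe hK.isClosed.measurableSet.compl]
    simp
  · intro f hf
    let F : CompactlySupportedContinuousMap K ℝ :=
      CompactlySupportedContinuousMap.continuousMapEquiv ⟨K.domRestrict f, hf.domRestrict⟩
    have h1 := RealRMK.integral_rieszMeasure Λ F
    have h2 : ∫ x, f x ∂((RealRMK.rieszMeasure Λ).map Subtype.val)
        = ∫ x, F x ∂(RealRMK.rieszMeasure Λ) := by
      rw [(MeasurableEmbedding.subtype_coe hK.isClosed.measurableSet).integral_map]
      rfl
    rw [h2, h1]
    exact hL F.toContinuousMap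

lemma lim_zero_aux {ι : Type*} (q g : ℕ → ι → ℝ) (hq : ∀ k i, 0 ≤ q k i)
    (hs : ∀ k, Summable (q k)) (C : ℝ) (hb : ∀ k, ∑' i, q k i ≤ C) (ε : ℕ → ℝ)
    (hε : Tendsto ε atTop (nhds 0)) (hg0 : ∀ k i, 0 ≤ g k i) (hg : ∀ k i, g k i ≤ |ε k|) :
    Tendsto (fun k => ∑' i, q k i * g k i) atTop (nhds 0) := by
  have h2 : Tendsto (fun k => C * |ε k|) atTop (nhds 0) := by
    simpa using (hε.abs).const_mul C
  refine squeeze_zero (fun k => tsum_nonneg fun i => mul_nonneg (hq k i) (hg0 k i)) (fun k => ?_) h2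
  have hle : ∀ i, q k i * g k i ≤ q k i * |ε k| := fun i =>
    mul_le_mul_of_nonneg_left (hg k i) (hq k i)
  have hs2 := (hs k).mul_right |ε k|
  calc ∑' i, q k i * g k i ≤ ∑' i, q k i * |ε k| :=
        Summable.tsum_le_tsum hle
          (Summable.of_nonneg_of_le (fun i => mul_nonneg (hq k i) (hg0 k i)) hle hs2) hs2
    _ = (∑' i, q k i) * |ε k| := tsum_mul_right
    _ ≤ C * |ε k| := mul_le_mul_of_nonneg_right (hb k) (abs_nonneg _)

lemma integrable_supp_aux {E : Type*} [TopologicalSpace E] [T2Space E] [MeasurableSpace E]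
    [BorelSpace E] [SecondCountableTopologyEither E ℝ] (K : Set E) (hK : IsCompact K) (μ : Measure E) [IsFiniteMeasure μ]
    (h : μ Kᶜ = 0) (f : E → ℝ) (hf : ContinuousOn f K) : Integrable f μ := by
  have h1 : μ.restrict K = μ := Measure.restrict_eq_self_of_ae_mem (by
    rw [ae_iff]; exact h)
  rw [← h1]
  exact hf.integrableOn_compact' hK hK.isClosed.measurableSet

lemma rep_aux {ι : Type*} (n x y : ℕ → ι → ℝ) (hn : ∀ k i, 0 ≤ n k i)
    (hns : ∀ k, Summable (n k)) (Y : Set ℝ) (hY : IsCompact Y) (h1 : (1:ℝ) ∉ Y) (h0 : (0:ℝ) ∈ Y)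
    (hx : ∀ k i, x k i ∈ Icc (0:ℝ) 3) (hy : ∀ k i, y k i = 1 ∨ y k i ∈ Y)
    (ε : ℕ → ℝ) (hε : Tendsto ε atTop (nhds 0)) (hxε : ∀ k i, x k i ≤ 1 + ε k)
    (w : ℝ → ℝ) (hw : Continuous w) (hwpos : ∀ t ∈ Ico (0:ℝ) 1, 0 < w t)
    (hwn : ∀ k i, 0 ≤ w (x k i)) (C : ℝ)
    (hm1 : ∀ k, ∑' i, (if y k i = 1 then n k i * w (x k i) else 0) ≤ C)
    (hm2 : ∀ k, ∑' i, (if y k i = 1 then 0 else n k i) ≤ C) :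
    ∃ (N : Measure (ℝ × ℝ)) (a : ℝ), 0 ≤ a ∧
      (∀ᵐ z ∂N, 0 ≤ z.1 ∧ z.1 ≤ 1 ∧ (z.2 = 1 ∨ z.2 ∈ Y)) ∧ N {((1:ℝ), (1:ℝ))} = 0 ∧
      N {z | z.2 ≠ 1} ≠ ⊤ ∧
      ∀ (ψ : ℝ × ℝ → ℝ) (D : ℝ → ℝ) (c : ℝ), Measurable ψ →
        ContinuousOn ψ (Icc (0:ℝ) 3 ×ˢ Y) → ContinuousOn D (Icc (0:ℝ) 3) →
        (∀ t ∈ Icc (0:ℝ) 3, ψ (t, 1) = w t * D t) →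
        Tendsto (fun k => ∑' i, n k i * ψ (x k i, y k i)) atTop (nhds c) →
        Integrable ψ N ∧ c = a * D 1 + ∫ z, ψ z ∂N := by
  classical
  set q1 : ℕ → ι → ℝ := fun k i => if y k i = 1 then n k i * w (x k i) else 0 with hq1
  set q2 : ℕ → ι → ℝ := fun k i => if y k i = 1 then 0 else n k i with hq2
  have q1n : ∀ k i, 0 ≤ q1 k i := by
    intro k i
    simp only [hq1]; split_ifs
    · exact mul_nonneg (hn k i) (hwn k i)
    · exact le_rfl
  have q2n : ∀ k i, 0 ≤ q2 k i := by
    intro k i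
    simp only [hq2]; split_ifs
    · exact le_rfl
    · exact hn k i
  obtain ⟨W, hW⟩ := (isCompact_Icc (a := (0:ℝ)) (b := 3)).exists_bound_of_continuousOn
    hw.continuousOn
  have hW0 : 0 ≤ W := (norm_nonneg _).trans (hW 0 (by constructor <;> norm_num))
  have q1s : ∀ k, Summable (q1 k) := by
    intro k
    refine Summable.of_nonneg_of_le (q1n k) (fun i => ?_) ((hns k).mul_right W)
    simp only [hq1]; split_ifs
    · exact mul_le_mul_of_nonneg_left ((le_abs_self _).trans (hW _ (hx k i))) (hn k i)
    · exact mul_nonneg (hn k i) hW0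
  have q2s : ∀ k, Summable (q2 k) := by
    intro k
    refine Summable.of_nonneg_of_le (q2n k) (fun i => ?_) (hns k)
    simp only [hq2]; split_ifs
    · exact hn k i
    · exact le_rfl
  set y' : ℕ → ι → ℝ := fun k i => if y k i = 1 then 0 else y k i with hy'
  have hy'Y : ∀ k i, y' k i ∈ Y := by
    intro k i
    simp only [hy']; split_ifs with h
    · exact h0
    · exact (hy k i).resolve_left h
  have hK2 : IsCompact (Icc (0:ℝ) 3 ×ˢ Y) := isCompact_Icc.prod hY
  obtain ⟨μ1, hf1, hs1, hl1⟩ := compactness_aux (Icc (0:ℝ) 3) isCompact_Icc q1 x q1n q1s C hm1 hx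
  obtain ⟨μ2, hf2, hs2, hl2⟩ := compactness_aux (Icc (0:ℝ) 3 ×ˢ Y) hK2 q2
    (fun k i => (x k i, y' k i)) q2n q2s C hm2 (fun k i => ⟨hx k i, hy'Y k i⟩)
  have hU : ((hyperfilter ℕ : Ultrafilter ℕ) : Filter ℕ) ≤ atTop := by
    rw [← Nat.cofinite_eq_atTop]; exact hyperfilter_le_cofinite
  have hgx : ∀ k i, max (x k i - 1) 0 ≤ |ε k| := fun k i =>
    max_le ((by linarith [hxε k i] : x k i - 1 ≤ ε k).trans (le_abs_self _)) (abs_nonneg _)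
  have hle1 : ∀ᵐ t ∂μ1, t ≤ 1 := by
    have hc : Continuous (fun t : ℝ => max (t - 1) 0) := by fun_prop
    have e := tendsto_nhds_unique (hl1 _ hc.continuousOn)
      ((lim_zero_aux q1 (fun k i => max (x k i - 1) 0) q1n q1s C hm1 ε hε
        (fun _ _ => le_max_right _ _) hgx).mono_left hU)
    have e := (integral_eq_zero_iff_of_nonneg (f := fun t : ℝ => max (t - 1) 0) (fun _ => le_max_right _ _)
      (integrable_supp_aux _ isCompact_Icc μ1 hs1 _ hc.continuousOn)).mp e
    filter_upwards [e] with t ht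
    have := le_max_left (t - 1) 0
    simp only [Pi.zero_apply] at ht
    linarith
  have hle2 : ∀ᵐ z ∂μ2, z.1 ≤ 1 := by
    have hc : Continuous (fun t : ℝ × ℝ => max (t.1 - 1) 0) := by fun_prop
    have e := tendsto_nhds_unique (hl2 _ hc.continuousOn)
      ((lim_zero_aux q2 (fun k i => max (x k i - 1) 0) q2n q2s C hm2 ε hε
        (fun _ _ => le_max_right _ _) hgx).mono_left hU)
    have e := (integral_eq_zero_iff_of_nonneg (f := fun t : ℝ × ℝ => max (t.1 - 1) 0) (fun _ => le_max_right _ _)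
      (integrable_supp_aux _ hK2 μ2 hs2 _ hc.continuousOn)).mp e
    filter_upwards [e] with t ht
    have := le_max_left (t.1 - 1) 0
    simp only [Pi.zero_apply] at ht
    linarith
  have hm1' : ∀ᵐ t ∂μ1, t ∈ Icc (0:ℝ) 3 := by rw [ae_iff]; exact hs1
  have hm2' : ∀ᵐ t ∂μ2, t ∈ Icc (0:ℝ) 3 ×ˢ Y := by rw [ae_iff]; exact hs2
  let d : ℝ → NNReal := fun t => Real.toNNReal (w t)⁻¹
  have hd : Measurable d := (hw.measurable.inv).real_toNNReal
  let ν : Measure ℝ := (μ1.restrict (Iio 1)).withDensity (fun t => (d t : ENNReal))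
  have hνac : ν ≪ μ1.restrict (Iio 1) := withDensity_absolutelyContinuous _ _
  have hm : Measurable (fun t : ℝ => (t, (1:ℝ))) := by fun_prop
  let N1 : Measure (ℝ × ℝ) := ν.map (fun t => (t, (1:ℝ)))
  have hνae : ∀ᵐ t ∂ν, 0 ≤ t ∧ t < 1 := by
    apply hνac.ae_le
    filter_upwards [ae_restrict_of_ae hm1', ae_restrict_mem measurableSet_Iio] with t ht ht2
    exact ⟨ht.1, ht2⟩
  refine ⟨N1 + μ2, μ1.real {1}, measureReal_nonneg, ?_, ?_, ?_, ?_⟩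
  · rw [ae_add_measure_iff]
    constructor
    · have hms : MeasurableSet {z : ℝ × ℝ | 0 ≤ z.1 ∧ z.1 ≤ 1 ∧ (z.2 = 1 ∨ z.2 ∈ Y)} := by
        have := hY.isClosed.measurableSet
        refine (measurableSet_le measurable_const measurable_fst).inter
          ((measurableSet_le measurable_fst measurable_const).inter
          ((measurableSet_eq_fun measurable_snd measurable_const).union (measurable_snd this)))
      rw [ae_map_iff hm.aemeasurable hms]
      filter_upwards [hνae] with t ht
      exact ⟨ht.1, ht.2.le, Or.inl rfl⟩
    · filter_upwards [hm2', hle2] with z hz hz2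
      exact ⟨hz.1.1, hz2, Or.inr hz.2⟩
  · rw [Measure.add_apply, add_eq_zero]
    constructor
    · rw [Measure.map_apply hm (measurableSet_singleton _)]
      rw [measure_eq_zero_iff_ae_notMem]
      filter_upwards [hνae] with t ht h
      simp only [mem_preimage, mem_singleton_iff, Prod.mk.injEq, and_true] at h
      linarith [ht.2]
    · rw [measure_eq_zero_iff_ae_notMem]
      filter_upwards [hm2'] with z hz h
      rw [h] at hz
      exact h1 hz.2
  · have hms : MeasurableSet {z : ℝ × ℝ | z.2 ≠ 1} :=
      (measurableSet_eq_fun measurable_snd measurable_const).compl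
    rw [Measure.add_apply, Measure.map_apply hm hms]
    have : (fun t : ℝ => (t, (1:ℝ))) ⁻¹' {z : ℝ × ℝ | z.2 ≠ 1} = ∅ := by ext; simp
    rw [this, measure_empty, zero_add]
    exact measure_ne_top _ _
  · intro ψ D c hψm hψ hD hψD hlim
    have i2 : Integrable ψ μ2 := integrable_supp_aux _ hK2 μ2 hs2 _ hψ
    have iD : Integrable D μ1 := integrable_supp_aux _ isCompact_Icc μ1 hs1 _ hD
    have hcg : (fun t => (d t) • ψ (t, 1)) =ᵐ[μ1.restrict (Iio 1)] D := by
      filter_upwards [ae_restrict_of_ae hm1', ae_restrict_mem measurableSet_Iio] with t ht ht2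
      have hp := hwpos t ⟨ht.1, ht2⟩
      rw [hψD t ht, NNReal.smul_def, Real.coe_toNNReal _ (inv_nonneg.mpr hp.le), smul_eq_mul]
      field_simp
    have i1 : Integrable ψ N1 := by
      rw [integrable_map_measure hψm.aestronglyMeasurable hm.aemeasurable]
      rw [integrable_withDensity_iff_integrable_smul hd]
      exact (integrable_congr hcg).mpr iD.restrict
    have e1 : ∫ z, ψ z ∂N1 = ∫ t in Iio 1, D t ∂μ1 := by
      rw [integral_map hm.aemeasurable hψm.aestronglyMeasurable,
        integral_withDensity_eq_integral_smul hd]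
      exact integral_congr_ae hcg
    have e2 : ∫ t, D t ∂μ1 = ∫ t in Iio 1, D t ∂μ1 + μ1.real {1} * D 1 := by
      rw [← integral_add_compl (measurableSet_Iio (a := (1:ℝ))) iD]
      congr 1
      have : ((Iio (1:ℝ))ᶜ : Set ℝ) =ᵐ[μ1] ({1} : Set ℝ) := by
        filter_upwards [hle1] with t ht
        apply propext
        change ¬ (t < 1) ↔ t = 1
        constructor
        · intro h; linarith
        · intro h; linarith
      rw [setIntegral_congr_set this, integral_singleton, smul_eq_mul]
    refine ⟨i1.add_measure i2, ?_⟩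
    rw [integral_add_measure i1 i2, e1]
    have hsumD : ∀ k, Summable (fun i => q1 k i * D (x k i)) := by
      intro k
      obtain ⟨B, hB⟩ := (isCompact_Icc (a := (0:ℝ)) (b := 3)).exists_bound_of_continuousOn hD
      refine Summable.of_norm_bounded ((q1s k).mul_right B) (fun i => ?_)
      rw [norm_mul, Real.norm_of_nonneg (q1n k i)]
      exact mul_le_mul_of_nonneg_left (hB _ (hx k i)) (q1n k i)
    have hsumψ : ∀ k, Summable (fun i => q2 k i * ψ (x k i, y' k i)) := by
      intro k
      obtain ⟨B, hB⟩ := hK2.exists_bound_of_continuousOn hψ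
      refine Summable.of_norm_bounded ((q2s k).mul_right B) (fun i => ?_)
      rw [norm_mul, Real.norm_of_nonneg (q2n k i)]
      exact mul_le_mul_of_nonneg_left (hB _ ⟨hx k i, hy'Y k i⟩) (q2n k i)
    have hT := (hl1 D hD).add (hl2 ψ hψ)
    have hT' := hT.congr (f₂ := fun k => ∑' i, n k i * ψ (x k i, y k i)) (fun k => by
      rw [← (hsumD k).tsum_add (hsumψ k)]
      refine tsum_congr fun i => ?_
      simp only [hq1, hq2, hy']
      split_ifs with h
      · rw [h, hψD _ (hx k i)]; ring
      · ring)
    rw [tendsto_nhds_unique (hlim.mono_left hU) hT', e2]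
    ring

lemma D_cont (l : ℝ) (hl : 0 ≤ l) : ∃ D : ℝ → ℝ, ContinuousOn D (Icc (0:ℝ) 3) ∧ D 1 = l ∧
    ∀ t, 1 - t ^ l = (1 - t) * D t := by
  have hd : HasDerivAt (fun t : ℝ => t ^ l) l 1 := by
    simpa using Real.hasDerivAt_rpow_const (x := 1) (p := l) (Or.inl one_ne_zero)
  refine ⟨dslope (fun t : ℝ => t ^ l) 1, ?_, ?_, ?_⟩
  · apply ContinuousOn.mono _ (subset_univ _)
    rw [continuousOn_dslope univ_mem]
    exact ⟨(Real.continuous_rpow_const hl).continuousOn, hd.differentiableAt⟩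
  · rw [dslope_same, hd.deriv]
  · intro t
    have := sub_smul_dslope (fun t : ℝ => t ^ l) 1 t
    simp only [smul_eq_mul, Real.one_rpow] at this
    linarith

lemma E_cont (l : ℝ) (hl : 0 ≤ l) : ∃ D : ℝ → ℝ, ContinuousOn D (Icc (0:ℝ) 3) ∧
    D 1 = - (l * (l - 1) / 2) ∧
    ∀ t, 1 - t ^ l - l * (1 - t) = (1 - t) ^ 2 * D t := by
  classical
  have hlim : Tendsto (fun t : ℝ => (1 - t ^ l - l * (1 - t)) / (1 - t) ^ 2) (nhdsWithin 1 {1}ᶜ)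
      (nhds (- (l * (l - 1) / 2))) := by
    have hd : HasDerivAt (fun t : ℝ => t ^ (l - 1)) (l - 1) 1 := by
      simpa using Real.hasDerivAt_rpow_const (x := 1) (p := l - 1) (Or.inl one_ne_zero)
    have hne : ∀ᶠ t in nhdsWithin (1:ℝ) {1}ᶜ, t ≠ 1 := eventually_mem_nhdsWithin
    have hne0 : ∀ᶠ t in nhdsWithin (1:ℝ) {1}ᶜ, t ≠ 0 :=
      nhdsWithin_le_nhds (isOpen_ne.mem_nhds one_ne_zero)
    have cont : Continuous (fun t : ℝ => 1 - t ^ l - l * (1 - t)) := by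
      have := Real.continuous_rpow_const hl
      fun_prop
    refine HasDerivAt.lhopital_zero_nhdsNE (f' := fun t => - (l * t ^ (l - 1)) + l)
      (g' := fun t => -2 * (1 - t)) ?_ ?_ ?_ ?_ ?_ ?_
    · filter_upwards [hne0] with t ht
      have h := Real.hasDerivAt_rpow_const (x := t) (p := l) (Or.inl ht)
      have h2 := ((hasDerivAt_id t).const_sub 1).const_mul l
      refine ((h.const_sub 1).sub h2).congr_deriv ?_
      ring
    · filter_upwards with t
      have h2 := ((hasDerivAt_id t).const_sub 1).pow 2
      refine h2.congr_deriv ?_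
      simp
    · filter_upwards [hne] with t ht
      have : 1 - t ≠ 0 := sub_ne_zero.mpr (Ne.symm ht)
      simpa using this
    · refine (cont.tendsto' 1 0 (by simp)).mono_left nhdsWithin_le_nhds
    · refine (Continuous.tendsto' (by fun_prop) 1 0 (by simp)).mono_left nhdsWithin_le_nhds
    · have h := (hasDerivAt_iff_tendsto_slope.mp hd).const_mul (-l / 2)
      have e : -l / 2 * (l - 1) = - (l * (l - 1) / 2) := by ring
      rw [e] at h
      refine h.congr' ?_
      filter_upwards [hne] with t ht
      have h1 : t - 1 ≠ 0 := sub_ne_zero.mpr ht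
      have h2 : 1 - t ≠ 0 := sub_ne_zero.mpr (Ne.symm ht)
      rw [slope_def_field, Real.one_rpow]
      field_simp
      ring
  refine ⟨Function.update (fun t : ℝ => (1 - t ^ l - l * (1 - t)) / (1 - t) ^ 2) 1
    (- (l * (l - 1) / 2)), ?_, by simp, ?_⟩
  · apply ContinuousOn.mono _ (subset_univ _)
    rw [continuousOn_update_iff]
    constructor
    · intro t ht
      have : 1 - t ≠ 0 := sub_ne_zero.mpr (Ne.symm ht.2)
      have h3 := Real.continuous_rpow_const hl
      apply ContinuousAt.continuousWithinAt
      have ha : ContinuousAt (fun t : ℝ => 1 - t ^ l - l * (1 - t)) t := by fun_prop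
      have hb : ContinuousAt (fun t : ℝ => (1 - t) ^ 2) t := by fun_prop
      exact ha.div hb (pow_ne_zero 2 this)
    · intro _
      rwa [← compl_eq_univ_sdiff]
  · intro t
    by_cases ht : t = 1
    · subst ht; simp
    · have : 1 - t ≠ 0 := sub_ne_zero.mpr (Ne.symm ht)
      rw [Function.update_of_ne ht]
      field_simp

lemma fatou_aux {X : Type*} [MeasurableSpace X] (N : Measure X) (f : ℕ → X → ℝ) (C : ℝ)
    (hm : ∀ m, Measurable (f m))
    (hi : ∀ m, Integrable (f m) N) (h0 : ∀ m, ∀ᵐ z ∂N, 0 ≤ f m z) (hC : ∀ m, ∫ z, f m z ∂N ≤ C) :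
    ∫⁻ z, liminf (fun m => ENNReal.ofReal (f m z)) atTop ∂N ≤ ENNReal.ofReal C := by
  refine (lintegral_liminf_le (fun m => (hm m).ennreal_ofReal)).trans ?_
  refine liminf_le_of_frequently_le' (Frequently.of_forall fun m => ?_)
  rw [← ofReal_integral_eq_lintegral_ofReal (hi m) (h0 m)]
  exact ENNReal.ofReal_le_ofReal (hC m)

lemma tendsto_log_aux (T : ℝ) (hT : 0 < T) :
    Tendsto (fun m : ℕ => (1 - T ^ (1 / ((m:ℝ) + 1))) * ((m:ℝ) + 1)) atTop
      (nhds (- Real.log T)) := by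
  have hd : HasDerivAt (fun s : ℝ => T ^ s) (Real.log T) 0 := by
    simpa using (Real.hasStrictDerivAt_const_rpow hT 0).hasDerivAt
  have h := (hasDerivAt_iff_tendsto_slope.mp hd)
  have h2 : Tendsto (fun m : ℕ => 1 / ((m:ℝ) + 1)) atTop (nhdsWithin 0 {0}ᶜ) := by
    refine tendsto_nhdsWithin_iff.mpr ⟨tendsto_one_div_add_atTop_nhds_zero_nat, ?_⟩
    filter_upwards with m
    have : (0:ℝ) < 1 / ((m:ℝ) + 1) := by positivity
    exact this.ne'
  refine (h.comp h2).neg.congr fun m => ?_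
  have : ((m:ℝ) + 1) ≠ 0 := by positivity
  simp only [Function.comp, slope_def_field, Real.rpow_zero, sub_zero]
  field_simp
  ring

/-- Fatou step: `∫ (1 - T^t - r t (1 - T)) / t ≤ C` along `t = 1/(m+1)`. -/
lemma fatou_log {X : Type*} [MeasurableSpace X] (N : Measure X) (T : X → ℝ) (hTm : Measurable T)
    (r C : ℝ) (hT : ∀ᵐ z ∂N, 0 ≤ T z)
    (hi : ∀ t : ℝ, 0 < t → t ≤ 1 → Integrable (fun z => 1 - T z ^ t - r * (t * (1 - T z))) N)
    (h0 : ∀ t : ℝ, 0 < t → t ≤ 1 → ∀ᵐ z ∂N, 0 ≤ 1 - T z ^ t - r * (t * (1 - T z)))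
    (hC : ∀ t : ℝ, 0 < t → t ≤ 1 → ∫ z, (1 - T z ^ t - r * (t * (1 - T z))) ∂N ≤ C * t) :
    (∀ᵐ z ∂N, 0 < T z) ∧
      ∫⁻ z, ENNReal.ofReal (- Real.log (T z) - r * (1 - T z)) ∂N ≤ ENNReal.ofReal C := by
  set f : ℕ → X → ℝ := fun m z =>
    (1 - T z ^ (1 / ((m:ℝ) + 1)) - r * (1 / ((m:ℝ) + 1) * (1 - T z))) * ((m:ℝ) + 1) with hf
  have ht : ∀ m : ℕ, (0:ℝ) < 1 / ((m:ℝ) + 1) ∧ 1 / ((m:ℝ) + 1) ≤ 1 := by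
    intro m
    refine ⟨by positivity, ?_⟩
    rw [div_le_one (by positivity)]
    have : (0:ℝ) ≤ m := by positivity
    linarith
  have key := fatou_aux N f C (fun m => by simp only [hf]; fun_prop)
    (fun m => (hi _ (ht m).1 (ht m).2).mul_const _)
    (fun m => by
      filter_upwards [h0 _ (ht m).1 (ht m).2] with z hz
      exact mul_nonneg hz (by positivity))
    (fun m => by
      simp only [hf]
      rw [integral_mul_const]
      calc _ ≤ (C * (1 / ((m:ℝ) + 1))) * ((m:ℝ) + 1) :=
            mul_le_mul_of_nonneg_right (hC _ (ht m).1 (ht m).2) (by positivity)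
        _ = C := by field_simp)
  have hpos : ∀ᵐ z ∂N, 0 < T z := by
    have hfin := ae_lt_top (Measurable.liminf (fun m => by
      simp only [hf]; fun_prop)) (key.trans_lt ENNReal.ofReal_lt_top).ne
    filter_upwards [hT, hfin] with z hz hlt
    rcases hz.lt_or_eq with h | h
    · exact h
    · exfalso
      have : Tendsto (fun m : ℕ => ENNReal.ofReal (f m z)) atTop (nhds ⊤) := by
        apply ENNReal.tendsto_ofReal_nhds_top.mpr
        have e : ∀ m : ℕ, (m:ℝ) + (1 - r) = f m z := by
          intro m
          simp only [hf, ← h]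
          rw [Real.zero_rpow (ht m).1.ne']
          field_simp
          ring
        refine Tendsto.congr e ?_
        exact tendsto_atTop_add_const_right _ _ tendsto_natCast_atTop_atTop
      rw [this.liminf_eq] at hlt
      exact lt_irrefl _ hlt
  refine ⟨hpos, ?_⟩
  refine le_trans (le_of_eq ?_) key
  refine lintegral_congr_ae ?_
  filter_upwards [hpos] with z hz
  symm
  apply Tendsto.liminf_eq
  apply ENNReal.tendsto_ofReal
  refine ((tendsto_log_aux _ hz).sub_const (r * (1 - T z))).congr fun m => ?_
  simp only [hf]
  field_simp

lemma sigmaFinite_aux {X : Type*} [MeasurableSpace X] (n : Measure X) (f : X → ℝ)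
    (hf : Measurable f) (hpos : ∀ᵐ z ∂n, 0 < f z) (h : ∫⁻ z, ENNReal.ofReal (f z) ∂n ≠ ⊤) :
    SigmaFinite n := by
  refine ⟨⟨⟨fun m => {z | f z ≤ 0} ∪ {z | (ENNReal.ofReal (1 / ((m:ℝ) + 1))) ≤ ENNReal.ofReal (f z)},
    fun _ => trivial, fun m => ?_, ?_⟩⟩⟩
  · refine (measure_union_le _ _).trans_lt ?_
    have h1 : n {z | f z ≤ 0} = 0 := by
      rw [measure_eq_zero_iff_ae_notMem]
      filter_upwards [hpos] with z hz hz2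
      exact absurd hz (not_lt.mpr hz2)
    rw [h1, zero_add]
    have h2 : ENNReal.ofReal (1 / ((m:ℝ) + 1)) ≠ 0 := by
      rw [Ne, ENNReal.ofReal_eq_zero, not_le]; positivity
    exact (meas_ge_le_lintegral_div hf.ennreal_ofReal.aemeasurable h2
      ENNReal.ofReal_ne_top).trans_lt (ENNReal.div_lt_top h h2)
  · rw [eq_univ_iff_forall]
    intro z
    rw [mem_iUnion]
    rcases le_or_gt (f z) 0 with hz | hz
    · exact ⟨0, Or.inl hz⟩
    · obtain ⟨m, hm⟩ := exists_nat_one_div_lt hz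
      exact ⟨m, Or.inr (ENNReal.ofReal_le_ofReal hm.le)⟩

lemma link_aux (p : ℕ × ℕ → ℝ) (hp : ∀ i, 0 ≤ p i) (hs : HasSum p 1) (x y : ℕ × ℕ → ℝ)
    (l1 l2 s1 s2 A G : ℝ) (h1 : 0 ≤ s1) (h1' : s1 ≤ 1) (h2 : 0 ≤ s2) (h2' : s2 ≤ 1)
    (hxy : ∀ i, x i ^ l1 * y i ^ l2 = A * (s1 ^ i.1 * s2 ^ i.2)) :
    HasSum (fun i => G * p i * (1 - x i ^ l1 * y i ^ l2)) (G * (1 - A * pgf2 p (s1, s2))) := by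
  have hS : Summable (fun i : ℕ × ℕ => p i * s1 ^ i.1 * s2 ^ i.2) := by
    refine Summable.of_nonneg_of_le (fun i => ?_) (fun i => ?_) hs.summable
    · have := hp i; positivity
    · have a1 := pow_le_one₀ h1 h1' (n := i.1)
      have a2 := pow_le_one₀ h2 h2' (n := i.2)
      calc p i * s1 ^ i.1 * s2 ^ i.2 ≤ p i * 1 * 1 := by
            have := hp i
            gcongr
        _ = p i := by ring
  have h3 : HasSum (fun i : ℕ × ℕ => p i * s1 ^ i.1 * s2 ^ i.2) (pgf2 p (s1, s2)) := hS.hasSum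
  have h4 := (hs.sub (h3.mul_left A)).mul_left G
  refine h4.congr_fun ?_ 
  intro i
  rw [hxy]; ring

lemma lip_aux (F : ℕ → ℝ × ℝ → ℝ) (Φ : ℝ × ℝ → ℝ) (h0 : ∀ k, F k (0, 0) = 0)
    (hlip : ∃ L : NNReal, ∀ k, LipschitzOnWith L (F k) (Icc ((0:ℝ),(0:ℝ)) (1,1)))
    (hconv : ∀ l : ℝ × ℝ, 0 ≤ l.1 → 0 ≤ l.2 → Tendsto (fun k => F k l) atTop (nhds (Φ l))) :
    ∃ L : ℝ, 0 ≤ L ∧ (∀ t : ℝ, 0 < t → t ≤ 1 → |Φ (t, 0)| ≤ L * t) ∧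
      (∀ t : ℝ, 0 < t → t ≤ 1 → |Φ (0, t)| ≤ L * t) := by
  obtain ⟨L, hL⟩ := hlip
  have key : ∀ l : ℝ × ℝ, l ∈ Icc ((0:ℝ),(0:ℝ)) (1,1) → |Φ l| ≤ L * ‖l‖ := by
    intro l hl
    refine le_of_tendsto (hconv l hl.1.1 hl.1.2).abs (Eventually.of_forall fun k => ?_)
    have := (hL k).dist_le_mul l hl (0, 0) ⟨le_rfl, by constructor <;> norm_num⟩
    rw [h0, dist_zero_right, Real.norm_eq_abs] at this
    rwa [show ((0:ℝ),(0:ℝ)) = 0 from rfl, dist_zero_right] at this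
  refine ⟨L, L.2, fun t ht ht1 => ?_, fun t ht ht1 => ?_⟩
  · have := key (t, 0) ⟨⟨ht.le, le_rfl⟩, ⟨ht1, by norm_num⟩⟩
    rwa [Prod.norm_def, norm_zero, max_eq_left (norm_nonneg _), Real.norm_of_nonneg ht.le] at this
  · have := key (0, t) ⟨⟨le_rfl, ht.le⟩, ⟨by norm_num, ht1⟩⟩
    rwa [Prod.norm_def, norm_zero, max_eq_right (norm_nonneg _), Real.norm_of_nonneg ht.le] at this

def Yaux : Set ℝ := insert 0 (range fun n : ℕ => Real.exp (-((n:ℝ) + 1)))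

lemma Yaux_compact : IsCompact Yaux := by
  apply Tendsto.isCompact_insert_range
  refine Real.tendsto_exp_atBot.comp ?_
  refine tendsto_neg_atTop_atBot.comp ?_
  exact tendsto_atTop_add_const_right _ _ tendsto_natCast_atTop_atTop

lemma exp_neg_one_le_half : Real.exp (-1) ≤ 1 / 2 := by
  rw [Real.exp_neg]
  have : (2:ℝ) ≤ Real.exp 1 := by
    have := Real.add_one_le_exp (1:ℝ)
    linarith
  rw [one_div]
  exact inv_anti₀ (by norm_num) this

lemma Yaux_le {y : ℝ} (hy : y ∈ Yaux) : 0 ≤ y ∧ y ≤ 1 / 2 := by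
  rcases hy with rfl | ⟨n, rfl⟩
  · norm_num
  · refine ⟨(Real.exp_pos _).le, le_trans ?_ exp_neg_one_le_half⟩
    apply Real.exp_le_exp.mpr
    have : (0:ℝ) ≤ n := by positivity
    linarith

lemma exp_mem_Yaux (n : ℕ) : Real.exp (-(n:ℝ)) = 1 ∨ Real.exp (-(n:ℝ)) ∈ Yaux := by
  cases n with
  | zero => left; simp
  | succ n => right; right; exact ⟨n, by push_cast; rfl⟩

lemma psi_cont (l1 l2 : ℝ) (h1 : 0 ≤ l1) (h2 : 0 ≤ l2) :
    Continuous (fun z : ℝ × ℝ => 1 - z.1 ^ l1 * z.2 ^ l2) := by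
  have a := (Real.continuous_rpow_const h1).comp continuous_fst (X := ℝ × ℝ)
  have b := (Real.continuous_rpow_const h2).comp continuous_snd (X := ℝ × ℝ)
  exact continuous_const.sub (a.mul b)

lemma min_sq_le (w : ℝ) (hw : 0 ≤ w) : min w (w ^ 2) ≤ 4 * (w - (1 - Real.exp (-w))) := by
  rcases le_or_gt w 2 with h | h
  · refine (min_le_right _ _).trans ?_
    have h1 : 1 - w / 2 ≤ Real.exp (-(w / 2)) := by
      have := Real.add_one_le_exp (-(w / 2)); linarith
    have h2 : Real.exp (-w) = Real.exp (-(w / 2)) ^ 2 := by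
      rw [← Real.exp_nat_mul]; congr 1; push_cast; ring
    rw [h2]
    have h3 : 0 ≤ 1 - w / 2 := by linarith
    nlinarith
  · refine (min_le_left _ _).trans ?_
    have := Real.exp_pos (-w)
    linarith

lemma measurable_Mset : MeasurableSet Mset := by
  have : Mset = {z : ℝ × ℝ | 0 ≤ z.1} ∩ ⋃ n : ℕ, {z : ℝ × ℝ | z.2 = (n:ℝ)} := by
    ext z; simp [Mset]
  rw [this]
  exact (measurableSet_le measurable_const measurable_fst).inter
    (MeasurableSet.iUnion fun n => measurableSet_eq_fun measurable_snd measurable_const)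

lemma measurable_Mm1set : MeasurableSet Mm1set := by
  have : Mm1set = {z : ℝ × ℝ | 0 ≤ z.1} ∩ ⋃ n : ℤ, ⋃ _ : (-1:ℤ) ≤ n,
      {z : ℝ × ℝ | z.2 = (n:ℝ)} := by
    ext z; simp [Mm1set]
  rw [this]
  exact (measurableSet_le measurable_const measurable_fst).inter
    (MeasurableSet.iUnion fun n => MeasurableSet.iUnion fun _ =>
      measurableSet_eq_fun measurable_snd measurable_const)

def logmap (z : ℝ × ℝ) : ℝ × ℝ := (-Real.log z.1, -Real.log z.2)

lemma measurable_logmap : Measurable logmap := by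
  unfold logmap; fun_prop

lemma exp_logmap (z : ℝ × ℝ) (h1 : 0 < z.1) (h2 : 0 < z.2) (l : ℝ × ℝ) :
    Real.exp (-(l.1 * (logmap z).1 + l.2 * (logmap z).2)) = z.1 ^ l.1 * z.2 ^ l.2 := by
  rw [Real.rpow_def_of_pos h1, Real.rpow_def_of_pos h2, ← Real.exp_add]
  congr 1
  simp only [logmap]; ring

lemma logmap_zero_aux (N : Measure (ℝ × ℝ)) (h : N {((1:ℝ), (1:ℝ))} = 0)
    (hpos : ∀ᵐ z ∂N, 0 < z.1 ∧ 0 < z.2) : N.map logmap {0} = 0 := by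
  rw [Measure.map_apply measurable_logmap (measurableSet_singleton _)]
  rw [measure_eq_zero_iff_ae_notMem] at h ⊢
  filter_upwards [h, hpos] with z hz hp h0
  apply hz
  simp only [mem_preimage, mem_singleton_iff, logmap, Prod.ext_iff, Prod.fst_zero, Prod.snd_zero,
    neg_eq_zero] at h0
  have e1 := Real.exp_log hp.1
  have e2 := Real.exp_log hp.2
  rw [h0.1, Real.exp_zero] at e1
  rw [h0.2, Real.exp_zero] at e2
  exact Prod.ext e1.symm e2.symm

lemma part1 (γ : ℕ → ℝ) (p1 : ℕ → ℕ × ℕ → ℝ) (Φ1 : ℝ × ℝ → ℝ)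
    (hp1_nonneg : ∀ k i, 0 ≤ p1 k i) (hp1_sum : ∀ k, HasSum (p1 k) 1)
    (hγ_pos : ∀ k, 0 < γ k)
    (hC_lip : ∃ L : NNReal, ∀ k,
      LipschitzOnWith L (Phik1 γ (fun k => pgf2 (p1 k)) k) (Icc ((0:ℝ),(0:ℝ)) (1,1)))
    (hC_conv : ∀ l : ℝ × ℝ, 0 ≤ l.1 → 0 ≤ l.2 →
      Tendsto (fun k => Phik1 γ (fun k => pgf2 (p1 k)) k l) atTop (nhds (Φ1 l))) :
    ∃ (a11 alpha : ℝ) (n1 : Measure (ℝ × ℝ)), 0 ≤ alpha ∧ SigmaFinite n1 ∧ n1 Msetᶜ = 0 ∧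
      n1 {0} = 0 ∧ ∫⁻ z, ENNReal.ofReal (min z.1 (z.1 ^ 2) + z.2) ∂n1 ≠ ⊤ ∧
      ∀ l : ℝ × ℝ, 0 ≤ l.1 → 0 ≤ l.2 → Φ1 l = -a11 * l.1 - alpha * l.1 ^ 2 -
        ∫ z, (Real.exp (-(l.1 * z.1 + l.2 * z.2)) - 1 + l.1 * z.1) ∂n1 := by
  set G : ℕ → ℝ := fun k => ((k:ℝ) + 1) * γ k with hG
  have hGpos : ∀ k, 0 < G k := fun k => mul_pos (by positivity) (hγ_pos k)
  set x : ℕ → ℕ × ℕ → ℝ := fun k i => Real.exp (-(((i.1:ℝ) - 1) / ((k:ℝ) + 1))) with hx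
  set y : ℕ → ℕ × ℕ → ℝ := fun _ i => Real.exp (-(i.2:ℝ)) with hy
  set n : ℕ → ℕ × ℕ → ℝ := fun k i => G k * p1 k i with hn
  have hn0 : ∀ k i, 0 ≤ n k i := fun k i => mul_nonneg (hGpos k).le (hp1_nonneg k i)
  have hns : ∀ k, Summable (n k) := fun k => ((hp1_sum k).mul_left (G k)).summable
  -- the exact identity
  have hlink : ∀ k (l : ℝ × ℝ), 0 ≤ l.1 → 0 ≤ l.2 →
      HasSum (fun i => n k i * (1 - x k i ^ l.1 * y k i ^ l.2))
        (Real.exp (l.1 / ((k:ℝ) + 1)) * Phik1 γ (fun k => pgf2 (p1 k)) k l) := by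
    intro k l h1 h2
    have h := link_aux (p1 k) (hp1_nonneg k) (hp1_sum k) (x k) (y k) l.1 l.2
      (Real.exp (-l.1 / ((k:ℝ) + 1))) (Real.exp (-l.2)) (Real.exp (l.1 / ((k:ℝ) + 1))) (G k)
      (Real.exp_pos _).le (Real.exp_le_one_iff.mpr
        (div_nonpos_of_nonpos_of_nonneg (by linarith) (by positivity)))
      (Real.exp_pos _).le (Real.exp_le_one_iff.mpr (by linarith)) (fun i => by
        simp only [hx, hy]
        rw [← Real.exp_mul, ← Real.exp_mul, ← Real.exp_nat_mul, ← Real.exp_nat_mul,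
          ← Real.exp_add, ← Real.exp_add, ← Real.exp_add]
        congr 1
        field_simp
        ring)
    convert h using 1
    have e : Real.exp (l.1 / ((k:ℝ) + 1)) * Real.exp (-l.1 / ((k:ℝ) + 1)) = 1 := by
      rw [← Real.exp_add, neg_div, add_neg_cancel, Real.exp_zero]
    simp only [Phik1, hG]
    linear_combination (((k:ℝ) + 1) * γ k) * e
  have hinv : Tendsto (fun k : ℕ => 1 / ((k:ℝ) + 1)) atTop (nhds 0) :=
    tendsto_one_div_add_atTop_nhds_zero_nat
  have hconv : ∀ l : ℝ × ℝ, 0 ≤ l.1 → 0 ≤ l.2 →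
      Tendsto (fun k => ∑' i, n k i * (1 - x k i ^ l.1 * y k i ^ l.2)) atTop (nhds (Φ1 l)) := by
    intro l h1 h2
    have h3 : Tendsto (fun k : ℕ => Real.exp (l.1 / ((k:ℝ) + 1))) atTop (nhds 1) := by
      have := (Real.continuous_exp.tendsto (l.1 * 0)).comp (hinv.const_mul l.1)
      rw [mul_zero, Real.exp_zero] at this
      refine this.congr fun k => ?_
      simp only [Function.comp]; congr 1; ring
    have h4 := h3.mul (hC_conv l h1 h2)
    rw [one_mul] at h4
    exact h4.congr fun k => (hlink k l h1 h2).tsum_eq.symm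
  have hxe : ∀ k i, x k i ≤ Real.exp (1 / ((k:ℝ) + 1)) := by
    intro k i
    apply Real.exp_le_exp.mpr
    rw [← neg_div]
    apply div_le_div_of_nonneg_right _ (by positivity)
    have : (0:ℝ) ≤ i.1 := by positivity
    linarith
  have hxI : ∀ k i, x k i ∈ Icc (0:ℝ) 3 := by
    intro k i
    refine ⟨(Real.exp_pos _).le, (hxe k i).trans ?_⟩
    refine le_trans (Real.exp_le_exp.mpr ?_) Real.exp_one_lt_d9.le |>.trans (by norm_num)
    rw [div_le_one (by positivity)]
    have : (0:ℝ) ≤ k := by positivity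
    linarith
  have hyY : ∀ k i, y k i = 1 ∨ y k i ∈ Yaux := fun k i => exp_mem_Yaux i.2
  have hy1 : ∀ k i, y k i ≤ 1 := by
    intro k i
    rcases hyY k i with h | h
    · exact h.le
    · linarith [(Yaux_le h).2]
  -- mass
  set H : ℕ → ℕ × ℕ → ℝ := fun k i => n k i * ((1 - x k i) ^ 2 + (1 - y k i)) with hH
  have hHs : ∀ k, HasSum (H k) (2 * (∑' i, n k i * (1 - x k i ^ (1:ℝ) * y k i ^ (0:ℝ)))
      - (∑' i, n k i * (1 - x k i ^ (2:ℝ) * y k i ^ (0:ℝ)))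
      + ∑' i, n k i * (1 - x k i ^ (0:ℝ) * y k i ^ (1:ℝ))) := by
    intro k
    have a1 := (hlink k (1, 0) (by norm_num) le_rfl).summable.hasSum
    have a2 := (hlink k (2, 0) (by norm_num) le_rfl).summable.hasSum
    have a3 := (hlink k (0, 1) le_rfl (by norm_num)).summable.hasSum
    refine (((a1.mul_left 2).sub a2).add a3).congr_fun fun i => ?_
    simp only [hH, Real.rpow_one, Real.rpow_zero, Real.rpow_two]
    ring
  have hHlim : Tendsto (fun k => ∑' i, H k i) atTop
      (nhds (2 * Φ1 (1, 0) - Φ1 (2, 0) + Φ1 (0, 1))) := by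
    have b1 := hconv (1, 0) (by norm_num) le_rfl
    have b2 := hconv (2, 0) (by norm_num) le_rfl
    have b3 := hconv (0, 1) le_rfl (by norm_num)
    exact (((b1.const_mul 2).sub b2).add b3).congr fun k => (hHs k).tsum_eq.symm
  obtain ⟨B, hB⟩ := hHlim.bddAbove_range
  have hB' : ∀ k, ∑' i, H k i ≤ B := fun k => hB ⟨k, rfl⟩
  have hH0 : ∀ k i, 0 ≤ H k i := fun k i =>
    mul_nonneg (hn0 k i) (add_nonneg (sq_nonneg _) (by linarith [hy1 k i]))
  have hmass : ∀ (q : ℕ → ℕ × ℕ → ℝ), (∀ k i, 0 ≤ q k i) → (∀ k i, q k i ≤ 2 * H k i) →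
      ∀ k, ∑' i, q k i ≤ 2 * B := by
    intro q hq hq2 k
    have s2 := (hHs k).summable.mul_left 2
    calc ∑' i, q k i ≤ ∑' i, 2 * H k i :=
          Summable.tsum_le_tsum (hq2 k) (Summable.of_nonneg_of_le (hq k) (hq2 k) s2) s2
      _ = 2 * ∑' i, H k i := tsum_mul_left
      _ ≤ 2 * B := by linarith [hB' k]
  have hε : Tendsto (fun k : ℕ => Real.exp (1 / ((k:ℝ) + 1)) - 1) atTop (nhds 0) := by
    have := ((Real.continuous_exp.tendsto 0).comp hinv).sub_const 1
    simpa [Function.comp_def] using this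
  obtain ⟨N, a, ha, hNs, hN1, -, hrep⟩ := rep_aux n x y hn0 hns Yaux Yaux_compact
    (fun h => by have := (Yaux_le h).2; norm_num at this) (Or.inl rfl) hxI hyY _ hε
    (fun k i => by linarith [hxe k i]) (fun t => (1 - t) ^ 2) (by fun_prop)
    (fun t ht => by have : 0 < 1 - t := by linarith [ht.2]
                    positivity)
    (fun k i => sq_nonneg _) (2 * B)
    (hmass _ (fun k i => by
        split_ifs
        · exact mul_nonneg (hn0 k i) (sq_nonneg _)
        · exact le_rfl)
      (fun k i => by
        split_ifs with h
        · have := hH0 k i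
          have e : n k i * (1 - x k i) ^ 2 = H k i := by simp only [hH, h]; ring
          rw [e]; linarith
        · linarith [hH0 k i]))
    (hmass _ (fun k i => by
        split_ifs
        · exact le_rfl
        · exact hn0 k i)
      (fun k i => by
        split_ifs with h
        · linarith [hH0 k i]
        · have hh := (Yaux_le ((hyY k i).resolve_left h)).2
          have : n k i * (1 / 2) ≤ H k i := 
            mul_le_mul_of_nonneg_left (by nlinarith [sq_nonneg (1 - x k i)]) (hn0 k i)
          linarith))
  set c := Φ1 (1, 0) with hc
  set ψ : ℝ × ℝ → ℝ × ℝ → ℝ := fun l z => 1 - z.1 ^ l.1 * z.2 ^ l.2 - l.1 * (1 - z.1) with hψ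
  have hrep' : ∀ l : ℝ × ℝ, 0 ≤ l.1 → 0 ≤ l.2 → Integrable (ψ l) N ∧
      Φ1 l - l.1 * c = a * (-(l.1 * (l.1 - 1) / 2)) + ∫ z, ψ l z ∂N := by
    intro l h1 h2
    obtain ⟨D, hDc, hD1, hD⟩ := E_cont l.1 h1
    have hcont : Continuous (ψ l) := (psi_cont l.1 l.2 h1 h2).sub (by fun_prop)
    have := hrep (ψ l) D (Φ1 l - l.1 * c) hcont.measurable hcont.continuousOn hDc
      (fun t _ => by simp only [hψ, Real.one_rpow, mul_one]; exact hD t)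
      (by
        have b1 := hconv (1, 0) (by norm_num) le_rfl
        refine ((hconv l h1 h2).sub (b1.const_mul l.1)).congr fun k => ?_
        have a1 := (hlink k (1, 0) (by norm_num) le_rfl).summable
        have a2 := (hlink k l h1 h2).summable
        rw [← tsum_mul_left, ← a2.tsum_sub (a1.mul_left l.1)]
        refine tsum_congr fun i => ?_
        simp only [hψ, Real.rpow_one, Real.rpow_zero]
        ring)
    rw [hD1] at this
    exact this
  obtain ⟨L, hL0, hLx, hLy⟩ := lip_aux _ Φ1 (fun k => by
      have := hlink k (0, 0) le_rfl le_rfl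
      simp only [Real.rpow_zero, mul_one, sub_self, mul_zero, zero_div, Real.exp_zero,
        one_mul] at this
      exact this.unique hasSum_zero) hC_lip hC_conv
  -- second coordinate
  obtain ⟨hypos, hylog⟩ := fatou_log N (fun z => z.2) measurable_snd 0 L
    (by
      filter_upwards [hNs] with z hz
      rcases hz.2.2 with h | h
      · rw [h]; norm_num
      · exact (Yaux_le h).1)
    (fun t ht _ => by
      have := (hrep' (0, t) le_rfl ht.le).1
      simpa [hψ] using this)
    (fun t ht _ => by
      filter_upwards [hNs] with z hz
      rw [zero_mul, sub_zero, sub_nonneg]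
      rcases hz.2.2 with h | h
      · rw [h]; simp
      · exact Real.rpow_le_one (Yaux_le h).1 (by linarith [(Yaux_le h).2]) ht.le)
    (fun t ht ht1 => by
      have := (hrep' (0, t) le_rfl ht.le).2
      have h2 := (abs_le.mp (hLy t ht ht1)).2
      simp only [hψ, Real.rpow_zero, one_mul, zero_mul, sub_zero, zero_div, neg_zero, mul_zero,
        zero_add] at this ⊢
      linarith)
  obtain ⟨hxpos, hxlog⟩ := fatou_log N (fun z => z.1) measurable_fst 1 (L + |c|)
    (by
      filter_upwards [hNs] with z hz
      exact hz.1)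
    (fun t ht _ => by
      have := (hrep' (t, 0) ht.le le_rfl).1
      simpa [hψ] using this)
    (fun t ht ht1 => by
      filter_upwards [hNs] with z hz
      have := rpow_one_add_le_one_add_mul_self (s := z.1 - 1) (p := t) (by linarith [hz.1])
        ht.le ht1
      rw [show 1 + (z.1 - 1) = z.1 by ring] at this
      linarith)
    (fun t ht ht1 => by
      have := (hrep' (t, 0) ht.le le_rfl).2
      have h2 := (abs_le.mp (hLx t ht ht1)).2
      simp only [hψ, Real.rpow_zero, mul_one, one_mul] at this ⊢
      have h3 : 0 ≤ a * (t * (1 - t)) := mul_nonneg ha (mul_nonneg ht.le (by linarith))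
      have h4 : -(t * c) ≤ |c| * t := by
        have := neg_abs_le c
        nlinarith
      nlinarith)
  have hN : ∀ᵐ z ∂N, (0 < z.1 ∧ 0 < z.2) ∧ z.1 ≤ 1 ∧ ∃ m : ℕ, z.2 = Real.exp (-(m:ℝ)) := by
    filter_upwards [hNs, hxpos, hypos] with z hz h1 h2
    refine ⟨⟨h1, h2⟩, hz.2.1, ?_⟩
    rcases hz.2.2 with h | h | ⟨m, h⟩
    · exact ⟨0, by rw [h]; simp⟩
    · exact absurd h h2.ne'
    · exact ⟨m + 1, by rw [← h]; push_cast; rfl⟩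
  have hpsf : ∀ᵐ z ∂(N.map logmap), z ∈ Mset := by
    refine (ae_map_iff measurable_logmap.aemeasurable (p := fun z => z ∈ Mset) measurable_Mset).mpr ?_
    filter_upwards [hN] with z hz
    obtain ⟨⟨h1, h2⟩, h3, m, hm⟩ := hz
    refine ⟨?_, m, ?_⟩
    · simpa [logmap] using Real.log_nonpos h1.le h3
    · simp [logmap, hm]
  have hz0 : N.map logmap {0} = 0 := logmap_zero_aux N hN1 (hN.mono fun z hz => hz.1)
  have hmom : ∫⁻ z, ENNReal.ofReal (min z.1 (z.1 ^ 2) + z.2) ∂(N.map logmap) ≠ ⊤ := by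
    rw [lintegral_map (by fun_prop) measurable_logmap]
    have hle : ∫⁻ z, ENNReal.ofReal (min (logmap z).1 ((logmap z).1 ^ 2) + (logmap z).2) ∂N ≤
        ∫⁻ z, (4 * ENNReal.ofReal (-Real.log z.1 - 1 * (1 - z.1)) +
          ENNReal.ofReal (-Real.log z.2 - 0 * (1 - z.2))) ∂N := by
      apply lintegral_mono_ae
      filter_upwards [hN] with z hz
      obtain ⟨⟨h1, h2⟩, h3, m, hm⟩ := hz
      refine ENNReal.ofReal_add_le.trans ?_
      gcongr
      · rw [show (4:ENNReal) = ENNReal.ofReal 4 by simp, ← ENNReal.ofReal_mul (by norm_num)]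
        apply ENNReal.ofReal_le_ofReal
        have := min_sq_le (-Real.log z.1) (by simpa using Real.log_nonpos h1.le h3)
        rw [neg_neg, Real.exp_log h1] at this
        simpa [logmap] using this
      · simp [logmap]
    refine (hle.trans_lt ?_).ne
    rw [lintegral_add_left (by fun_prop), lintegral_const_mul _ (by fun_prop)]
    exact ENNReal.add_lt_top.mpr ⟨ENNReal.mul_lt_top (by simp)
      (hxlog.trans_lt ENNReal.ofReal_lt_top), hylog.trans_lt ENNReal.ofReal_lt_top⟩
  have hJ : Integrable (fun z : ℝ × ℝ => -Real.log z.1 - (1 - z.1)) N := by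
    refine ⟨(by fun_prop : Measurable (fun z : ℝ × ℝ => -Real.log z.1 - (1 - z.1))).aestronglyMeasurable, ?_⟩
    rw [hasFiniteIntegral_iff_ofReal]
    · simpa using hxlog.trans_lt ENNReal.ofReal_lt_top
    · filter_upwards [hN] with z hz
      have := Real.log_le_sub_one_of_pos hz.1.1
      simp only [Pi.zero_apply]
      linarith
  refine ⟨-(c + a / 2 + ∫ z, (-Real.log z.1 - (1 - z.1)) ∂N), a / 2, N.map logmap, by positivity,
    sigmaFinite_aux _ _ (by fun_prop) ?_ hmom, mem_ae_iff.mp hpsf, hz0, hmom, ?_⟩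
  · have := measure_eq_zero_iff_ae_notMem.mp hz0
    filter_upwards [hpsf, this] with z hz hne
    obtain ⟨h1, m, hm⟩ := hz
    rcases h1.lt_or_eq with h | h
    · have : 0 < min z.1 (z.1 ^ 2) := lt_min h (by positivity)
      have h2 : 0 ≤ z.2 := by rw [hm]; positivity
      linarith
    · have h2 : 0 ≤ z.2 := by rw [hm]; positivity
      have h3 : z.2 ≠ 0 := fun h3 => hne (by
        rw [mem_singleton_iff]; exact Prod.ext h.symm h3)
      have h4 : 0 < z.2 := lt_of_le_of_ne h2 (Ne.symm h3)
      rw [← h]; simpa using h4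
  · intro l h1 h2
    obtain ⟨i1, e1⟩ := hrep' l h1 h2
    rw [integral_map measurable_logmap.aemeasurable (by
      apply Measurable.aestronglyMeasurable; fun_prop)]
    have e2 : ∫ z, (Real.exp (-(l.1 * (logmap z).1 + l.2 * (logmap z).2)) - 1
        + l.1 * (logmap z).1) ∂N = ∫ z, (l.1 * (-Real.log z.1 - (1 - z.1)) - ψ l z) ∂N := by
      apply integral_congr_ae
      filter_upwards [hN] with z hz
      rw [exp_logmap z hz.1.1 hz.1.2]
      simp only [logmap, hψ]
      ring
    rw [e2, integral_sub (hJ.const_mul _) i1, integral_const_mul]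
    linear_combination e1

lemma part2 (γ : ℕ → ℝ) (p2 : ℕ → ℕ × ℕ → ℝ) (Φ2 : ℝ × ℝ → ℝ)
    (hp2_nonneg : ∀ k i, 0 ≤ p2 k i) (hp2_sum : ∀ k, HasSum (p2 k) 1)
    (hγ_pos : ∀ k, 0 < γ k)
    (hD_lip : ∃ L : NNReal, ∀ k,
      LipschitzOnWith L (fun l : ℝ × ℝ => Real.exp l.2 * Phik2 γ (fun k => pgf2 (p2 k)) k l)
        (Icc ((0:ℝ),(0:ℝ)) (1,1)))
    (hD_conv : ∀ l : ℝ × ℝ, 0 ≤ l.1 → 0 ≤ l.2 →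
      Tendsto (fun k => Real.exp l.2 * Phik2 γ (fun k => pgf2 (p2 k)) k l) atTop
        (nhds (Φ2 l))) :
    ∃ (a21 : ℝ) (n2 : Measure (ℝ × ℝ)), 0 ≤ a21 ∧ SigmaFinite n2 ∧ n2 Mm1setᶜ = 0 ∧
      n2 {0} = 0 ∧ n2 {z : ℝ × ℝ | z.2 = -1} ≠ ⊤ ∧
      ∫⁻ z, ENNReal.ofReal (z.1 + |z.2|) ∂n2 ≠ ⊤ ∧
      ∀ l : ℝ × ℝ, 0 ≤ l.1 → 0 ≤ l.2 → Φ2 l = a21 * l.1 +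
        ∫ z, (1 - Real.exp (-(l.1 * z.1 + l.2 * z.2))) ∂n2 := by
  set x : ℕ → ℕ × ℕ → ℝ := fun k i => Real.exp (-((i.1:ℝ) / ((k:ℝ) + 1))) with hx
  set y : ℕ → ℕ × ℕ → ℝ := fun _ i => Real.exp (-((i.2:ℝ) - 1)) with hy
  set n : ℕ → ℕ × ℕ → ℝ := fun k i => γ k * p2 k i with hn
  have hn0 : ∀ k i, 0 ≤ n k i := fun k i => mul_nonneg (hγ_pos k).le (hp2_nonneg k i)
  have hns : ∀ k, Summable (n k) := fun k => ((hp2_sum k).mul_left (γ k)).summable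
  have hlink : ∀ k (l : ℝ × ℝ), 0 ≤ l.1 → 0 ≤ l.2 →
      HasSum (fun i => n k i * (1 - x k i ^ l.1 * y k i ^ l.2))
        (Real.exp l.2 * Phik2 γ (fun k => pgf2 (p2 k)) k l) := by
    intro k l h1 h2
    have h := link_aux (p2 k) (hp2_nonneg k) (hp2_sum k) (x k) (y k) l.1 l.2
      (Real.exp (-l.1 / ((k:ℝ) + 1))) (Real.exp (-l.2)) (Real.exp l.2) (γ k)
      (Real.exp_pos _).le (Real.exp_le_one_iff.mpr
        (div_nonpos_of_nonpos_of_nonneg (by linarith) (by positivity)))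
      (Real.exp_pos _).le (Real.exp_le_one_iff.mpr (by linarith)) (fun i => by
        simp only [hx, hy]
        rw [← Real.exp_mul, ← Real.exp_mul, ← Real.exp_nat_mul, ← Real.exp_nat_mul,
          ← Real.exp_add, ← Real.exp_add, ← Real.exp_add]
        congr 1
        field_simp
        ring)
    convert h using 1
    have e : Real.exp l.2 * Real.exp (-l.2) = 1 := by
      rw [← Real.exp_add, add_neg_cancel, Real.exp_zero]
    simp only [Phik2]
    linear_combination γ k * e
  have hconv : ∀ l : ℝ × ℝ, 0 ≤ l.1 → 0 ≤ l.2 →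
      Tendsto (fun k => ∑' i, n k i * (1 - x k i ^ l.1 * y k i ^ l.2)) atTop (nhds (Φ2 l)) :=
    fun l h1 h2 => (hD_conv l h1 h2).congr fun k => (hlink k l h1 h2).tsum_eq.symm
  have hx1 : ∀ k i, x k i ≤ 1 := by
    intro k i
    refine Real.exp_le_one_iff.mpr (neg_nonpos.mpr ?_)
    positivity
  have hxI : ∀ k i, x k i ∈ Icc (0:ℝ) 3 := fun k i =>
    ⟨(Real.exp_pos _).le, (hx1 k i).trans (by norm_num)⟩
  have he2 : (2:ℝ) ≤ Real.exp 1 := by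
    have := Real.add_one_le_exp (1:ℝ)
    linarith
  have hYY : ∀ t : ℝ, t ∈ insert (Real.exp 1) Yaux → 0 ≤ t ∧ 1 / 4 ≤ (1 - t) ^ 2 := by
    rintro t (h | h)
    · rw [h]; exact ⟨by linarith, by nlinarith⟩
    · have := Yaux_le h
      exact ⟨this.1, by nlinarith⟩
  have hyY : ∀ k i, y k i = 1 ∨ y k i ∈ insert (Real.exp 1) Yaux := by
    intro k i
    simp only [hy]
    rcases hi : i.2 with _ | m
    · right; left; simp
    · rcases exp_mem_Yaux m with h | h
      · left; refine Eq.trans ?_ h; congr 1; push_cast; ring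
      · right; right; convert h using 2; push_cast; ring
  set H : ℕ → ℕ × ℕ → ℝ := fun k i => n k i * ((1 - x k i) + (1 - y k i) ^ 2) with hH
  have hHs : ∀ k, HasSum (H k) (2 * (∑' i, n k i * (1 - x k i ^ (0:ℝ) * y k i ^ (1:ℝ)))
      - (∑' i, n k i * (1 - x k i ^ (0:ℝ) * y k i ^ (2:ℝ)))
      + ∑' i, n k i * (1 - x k i ^ (1:ℝ) * y k i ^ (0:ℝ))) := by
    intro k
    have a1 := (hlink k (0, 1) le_rfl (by norm_num)).summable.hasSum
    have a2 := (hlink k (0, 2) le_rfl (by norm_num)).summable.hasSum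
    have a3 := (hlink k (1, 0) (by norm_num) le_rfl).summable.hasSum
    refine (((a1.mul_left 2).sub a2).add a3).congr_fun fun i => ?_
    simp only [hH, Real.rpow_one, Real.rpow_zero, Real.rpow_two]
    ring
  have hHlim : Tendsto (fun k => ∑' i, H k i) atTop
      (nhds (2 * Φ2 (0, 1) - Φ2 (0, 2) + Φ2 (1, 0))) := by
    have b1 := hconv (0, 1) le_rfl (by norm_num)
    have b2 := hconv (0, 2) le_rfl (by norm_num)
    have b3 := hconv (1, 0) (by norm_num) le_rfl
    exact (((b1.const_mul 2).sub b2).add b3).congr fun k => (hHs k).tsum_eq.symm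
  obtain ⟨B, hB⟩ := hHlim.bddAbove_range
  have hB' : ∀ k, ∑' i, H k i ≤ B := fun k => hB ⟨k, rfl⟩
  have hH0 : ∀ k i, 0 ≤ H k i := fun k i =>
    mul_nonneg (hn0 k i) (add_nonneg (by linarith [hx1 k i]) (sq_nonneg _))
  have hmass : ∀ (q : ℕ → ℕ × ℕ → ℝ), (∀ k i, 0 ≤ q k i) → (∀ k i, q k i ≤ 4 * H k i) →
      ∀ k, ∑' i, q k i ≤ 4 * B := by
    intro q hq hq2 k
    have s2 := (hHs k).summable.mul_left 4
    calc ∑' i, q k i ≤ ∑' i, 4 * H k i :=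
          Summable.tsum_le_tsum (hq2 k) (Summable.of_nonneg_of_le (hq k) (hq2 k) s2) s2
      _ = 4 * ∑' i, H k i := tsum_mul_left
      _ ≤ 4 * B := by linarith [hB' k]
  obtain ⟨N, a, ha, hNs, hN1, hNfin, hrep⟩ := rep_aux n x y hn0 hns (insert (Real.exp 1) Yaux)
    (Yaux_compact.insert _)
    (fun h => by have := (hYY 1 h).2; norm_num at this) (Or.inr (Or.inl rfl)) hxI hyY
    (fun _ => 0) tendsto_const_nhds
    (fun k i => by linarith [hx1 k i]) (fun t => 1 - t) (by fun_prop)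
    (fun t ht => by linarith [ht.2])
    (fun k i => by linarith [hx1 k i]) (4 * B)
    (hmass _ (fun k i => by
        split_ifs
        · exact mul_nonneg (hn0 k i) (by linarith [hx1 k i])
        · exact le_rfl)
      (fun k i => by
        split_ifs with h
        · have := hH0 k i
          have e : n k i * (1 - x k i) = H k i := by simp only [hH, h]; ring
          rw [e]; linarith
        · linarith [hH0 k i]))
    (hmass _ (fun k i => by
        split_ifs
        · exact le_rfl
        · exact hn0 k i)
      (fun k i => by
        split_ifs with h
        · linarith [hH0 k i]
        · have hh := (hYY _ ((hyY k i).resolve_left h)).2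
          have : n k i * (1 / 4) ≤ H k i :=
            mul_le_mul_of_nonneg_left (by linarith [hx1 k i]) (hn0 k i)
          linarith))
  set ψ : ℝ × ℝ → ℝ × ℝ → ℝ := fun l z => 1 - z.1 ^ l.1 * z.2 ^ l.2 with hψ
  have hrep' : ∀ l : ℝ × ℝ, 0 ≤ l.1 → 0 ≤ l.2 → Integrable (ψ l) N ∧
      Φ2 l = a * l.1 + ∫ z, ψ l z ∂N := by
    intro l h1 h2
    obtain ⟨D, hDc, hD1, hD⟩ := D_cont l.1 h1
    have hcont : Continuous (ψ l) := psi_cont l.1 l.2 h1 h2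
    have := hrep (ψ l) D (Φ2 l) hcont.measurable hcont.continuousOn hDc
      (fun t _ => by simp only [hψ, Real.one_rpow, mul_one]; exact hD t)
      (hconv l h1 h2)
    rw [hD1] at this
    exact this
  obtain ⟨L, hL0, hLx, hLy⟩ := lip_aux
    (fun k l => Real.exp l.2 * Phik2 γ (fun k => pgf2 (p2 k)) k l) Φ2 (fun k => by
      have := hlink k (0, 0) le_rfl le_rfl
      simp only [Real.rpow_zero, mul_one, sub_self, mul_zero] at this
      exact this.unique hasSum_zero) hD_lip hD_conv
  obtain ⟨hxpos, hxlog⟩ := fatou_log N (fun z => z.1) measurable_fst 0 L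
    (by
      filter_upwards [hNs] with z hz
      exact hz.1)
    (fun t ht _ => by
      have := (hrep' (t, 0) ht.le le_rfl).1
      simpa [hψ] using this)
    (fun t ht ht1 => by
      filter_upwards [hNs] with z hz
      have := Real.rpow_le_one hz.1 hz.2.1 ht.le
      linarith)
    (fun t ht ht1 => by
      have := (hrep' (t, 0) ht.le le_rfl).2
      have h2 := (abs_le.mp (hLx t ht ht1)).2
      simp only [hψ, Real.rpow_zero, mul_one, zero_mul, sub_zero] at this ⊢
      have h3 : 0 ≤ a * t := mul_nonneg ha ht.le
      linarith)
  set S : Set (ℝ × ℝ) := {z | z.2 = Real.exp 1} with hS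
  have hSm : MeasurableSet S := measurableSet_eq_fun measurable_snd measurable_const
  have hSfin : N S ≠ ⊤ := by
    refine ne_top_of_le_ne_top hNfin (measure_mono fun z hz => ?_)
    have : z.2 = Real.exp 1 := hz
    simp only [mem_setOf_eq, this]
    linarith
  have hSi : ∀ c : ℝ, Integrable (S.indicator fun _ => c) N := fun c =>
    (integrable_indicator_iff hSm).mpr (integrableOn_const hSfin)
  have hmin : ∀ᵐ z ∂N, (z.2 = Real.exp 1 ∧ min z.2 1 = 1) ∨
      (z.2 ≠ Real.exp 1 ∧ min z.2 1 = z.2 ∧ 0 ≤ z.2 ∧ z.2 ≤ 1) := by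
    filter_upwards [hNs] with z hz
    rcases hz.2.2 with h | h | h
    · right; rw [h]; exact ⟨by linarith, by norm_num, by norm_num, by norm_num⟩
    · left; exact ⟨h, min_eq_right (by linarith)⟩
    · have := Yaux_le h
      right; exact ⟨by linarith, min_eq_left (by linarith), this.1, by linarith⟩
  have hdec : ∀ t : ℝ, (fun z : ℝ × ℝ => 1 - (min z.2 1) ^ t - 0 * (t * (1 - min z.2 1))) =ᵐ[N]
      fun z => ψ (0, t) z + S.indicator (fun _ => Real.exp t - 1) z := by
    intro t
    filter_upwards [hmin] with z hz
    rcases hz with ⟨h, h1⟩ | ⟨h, h1, _, _⟩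
    · rw [indicator_of_mem (show z ∈ S from h), h1]
      simp only [hψ, h, Real.rpow_zero, Real.one_rpow, ← Real.exp_mul]
      ring_nf
    · rw [indicator_of_notMem (show z ∉ S from h), h1]
      simp only [hψ, Real.rpow_zero]
      ring
  obtain ⟨hypos, hylog⟩ := fatou_log N (fun z => min z.2 1) (by fun_prop) 0 (L + N.real S * 2)
    (by
      filter_upwards [hmin] with z hz
      rcases hz with ⟨h, h1⟩ | ⟨h, h1, h2, _⟩
      · rw [h1]; norm_num
      · rw [h1]; exact h2)
    (fun t ht _ => ((hrep' (0, t) le_rfl ht.le).1.add (hSi _)).congr (hdec t).symm)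
    (fun t ht _ => by
      filter_upwards [hmin] with z hz
      rw [zero_mul, sub_zero, sub_nonneg]
      rcases hz with ⟨h, h1⟩ | ⟨h, h1, h2, h3⟩
      · rw [h1]; simp
      · rw [h1]; exact Real.rpow_le_one h2 h3 ht.le)
    (fun t ht ht1 => by
      rw [integral_congr_ae (hdec t), integral_add (hrep' (0, t) le_rfl ht.le).1 (hSi _),
        integral_indicator_const _ hSm, smul_eq_mul]
      have := (hrep' (0, t) le_rfl ht.le).2
      have h2 := (abs_le.mp (hLy t ht ht1)).2
      simp only [mul_zero, zero_add] at this
      have h3 := (abs_le.mp (Real.abs_exp_sub_one_le (x := t) (by rw [abs_of_pos ht]; exact ht1))).2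
      rw [abs_of_pos ht] at h3
      have h4 := mul_le_mul_of_nonneg_left h3 (measureReal_nonneg (μ := N) (s := S))
      linarith)
  have hN : ∀ᵐ z ∂N, (0 < z.1 ∧ 0 < z.2) ∧ z.1 ≤ 1 ∧
      ∃ m : ℤ, -1 ≤ m ∧ z.2 = Real.exp (-(m:ℝ)) := by
    filter_upwards [hNs, hxpos, hypos] with z hz h1 h2
    have h3 : 0 < z.2 := lt_of_lt_of_le h2 (min_le_left _ _)
    refine ⟨⟨h1, h3⟩, hz.2.1, ?_⟩
    rcases hz.2.2 with h | h | h | ⟨m, h⟩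
    · exact ⟨0, by norm_num, by rw [h]; simp⟩
    · exact ⟨-1, le_rfl, by rw [h]; simp⟩
    · exact absurd h h3.ne'
    · exact ⟨m + 1, by omega, by rw [← h]; push_cast; rfl⟩
  have hpsf : ∀ᵐ z ∂(N.map logmap), z ∈ Mm1set := by
    refine (ae_map_iff measurable_logmap.aemeasurable (p := fun z => z ∈ Mm1set)
      measurable_Mm1set).mpr ?_
    filter_upwards [hN] with z hz
    obtain ⟨⟨h1, h2⟩, h3, m, hm1, hm⟩ := hz
    refine ⟨?_, m, hm1, ?_⟩
    · simpa [logmap] using Real.log_nonpos h1.le h3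
    · simp [logmap, hm]
  have hz0 : N.map logmap {0} = 0 := logmap_zero_aux N hN1 (hN.mono fun z hz => hz.1)
  have hneg : N.map logmap {z : ℝ × ℝ | z.2 = -1} ≠ ⊤ := by
    rw [Measure.map_apply measurable_logmap
      (measurableSet_eq_fun measurable_snd measurable_const)]
    refine ne_top_of_le_ne_top hNfin (measure_mono fun z hz => ?_)
    simp only [mem_preimage, mem_setOf_eq, logmap] at hz ⊢
    intro h
    rw [h, Real.log_one] at hz
    norm_num at hz
  have hmom : ∫⁻ z, ENNReal.ofReal (z.1 + |z.2|) ∂(N.map logmap) ≠ ⊤ := by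
    rw [lintegral_map (by fun_prop) measurable_logmap]
    have hle : ∫⁻ z, ENNReal.ofReal ((logmap z).1 + |(logmap z).2|) ∂N ≤
        ∫⁻ z, (ENNReal.ofReal (-Real.log z.1 - 0 * (1 - z.1)) +
          (ENNReal.ofReal (-Real.log (min z.2 1) - 0 * (1 - min z.2 1)) +
            S.indicator (fun _ => 1) z)) ∂N := by
      apply lintegral_mono_ae
      filter_upwards [hN, hmin] with z hz hm
      refine ENNReal.ofReal_add_le.trans ?_
      gcongr
      · simp [logmap]
      · rcases hm with ⟨h, h1⟩ | ⟨h, h1, h2, h3⟩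
        · rw [indicator_of_mem (show z ∈ S from h), h1]
          simp [logmap, h]
        · rw [indicator_of_notMem (show z ∉ S from h), h1, add_zero]
          apply ENNReal.ofReal_le_ofReal
          simp only [logmap, abs_neg, zero_mul, sub_zero]
          rw [abs_of_nonpos (Real.log_nonpos h2 h3)]
    refine (hle.trans_lt ?_).ne
    rw [lintegral_add_left (by fun_prop), lintegral_add_left (by fun_prop),
      lintegral_indicator_const hSm, one_mul]
    exact ENNReal.add_lt_top.mpr ⟨hxlog.trans_lt ENNReal.ofReal_lt_top,
      ENNReal.add_lt_top.mpr ⟨hylog.trans_lt ENNReal.ofReal_lt_top, hSfin.lt_top⟩⟩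
  refine ⟨a, N.map logmap, ha,
    sigmaFinite_aux _ _ (by fun_prop) ?_ hmom, mem_ae_iff.mp hpsf, hz0, hneg, hmom, ?_⟩
  · have := measure_eq_zero_iff_ae_notMem.mp hz0
    filter_upwards [hpsf, this] with z hz hne
    have h1 := hz.1
    rcases h1.lt_or_eq with h | h
    · linarith [abs_nonneg z.2]
    · have h3 : z.2 ≠ 0 := fun h3 => hne (by
        rw [mem_singleton_iff]; exact Prod.ext h.symm h3)
      linarith [abs_pos.mpr h3]
  · intro l h1 h2
    rw [(hrep' l h1 h2).2, integral_map measurable_logmap.aemeasurable (by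
      apply Measurable.aestronglyMeasurable; fun_prop)]
    congr 1
    apply integral_congr_ae
    filter_upwards [hN] with z hz
    rw [exp_logmap z hz.1.1 hz.1.2]

/-- Under conditions (A), (C), (D), the pointwise limits `Φ₁` of
`Φ_{k,1}` and `Φ₂` of `e^{λ₂}Φ_{k,2}` have the Lévy–Khintchine type representations
of a branching mechanism. -/
theorem limit_representation_two_type
    (γ : ℕ → ℝ) (p1 p2 : ℕ → ℕ × ℕ → ℝ) (Φ1 Φ2 : ℝ × ℝ → ℝ)
    (hp1_nonneg : ∀ k i, 0 ≤ p1 k i) (hp1_sum : ∀ k, HasSum (p1 k) 1)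
    (hp2_nonneg : ∀ k i, 0 ≤ p2 k i) (hp2_sum : ∀ k, HasSum (p2 k) 1)
    (hγ_pos : ∀ k, 0 < γ k)
    -- Condition (A)
    (hA : Tendsto γ atTop atTop)
    -- Condition (C): uniform Lipschitz on bounded rectangles …
    (hC_lip : ∀ R : ℝ, 0 ≤ R → ∃ L : NNReal, ∀ k,
      LipschitzOnWith L (Phik1 γ (fun k => pgf2 (p1 k)) k) (Icc ((0:ℝ),(0:ℝ)) (R,R)))
    -- … and pointwise convergence of `Φ_{k,1}` to the continuous function `Φ₁`
    (hΦ1_cont : ContinuousOn Φ1 {l : ℝ × ℝ | 0 ≤ l.1 ∧ 0 ≤ l.2})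
    (hC_conv : ∀ l : ℝ × ℝ, 0 ≤ l.1 → 0 ≤ l.2 →
      Tendsto (fun k => Phik1 γ (fun k => pgf2 (p1 k)) k l) atTop (nhds (Φ1 l)))
    -- Condition (D): uniform Lipschitz on bounded rectangles …
    (hD_lip : ∀ R : ℝ, 0 ≤ R → ∃ L : NNReal, ∀ k,
      LipschitzOnWith L (fun l : ℝ × ℝ => Real.exp l.2 * Phik2 γ (fun k => pgf2 (p2 k)) k l)
        (Icc ((0:ℝ),(0:ℝ)) (R,R)))
    -- … and pointwise convergence of `e^{λ₂}Φ_{k,2}` to the continuous function `Φ₂`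
    (hΦ2_cont : ContinuousOn Φ2 {l : ℝ × ℝ | 0 ≤ l.1 ∧ 0 ≤ l.2})
    (hD_conv : ∀ l : ℝ × ℝ, 0 ≤ l.1 → 0 ≤ l.2 →
      Tendsto (fun k => Real.exp l.2 * Phik2 γ (fun k => pgf2 (p2 k)) k l) atTop
        (nhds (Φ2 l))) :
    ∃ B : BranchingMechanism, ∀ l : ℝ × ℝ, 0 ≤ l.1 → 0 ≤ l.2 →
      Φ1 l = mPhi1 B l ∧ Φ2 l = mPhi2 B l := by
  obtain ⟨a11, alpha, n1, h1, h2, h3, h4, h5, h6⟩ :=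
    part1 γ p1 Φ1 hp1_nonneg hp1_sum hγ_pos (hC_lip 1 zero_le_one) hC_conv
  obtain ⟨a21, n2, k1, k2, k3, k4, k5, k6, k7⟩ :=
    part2 γ p2 Φ2 hp2_nonneg hp2_sum hγ_pos (hD_lip 1 zero_le_one) hD_conv
  exact ⟨⟨a11, a21, alpha, k1, h1, n1, n2, h2, k2, h3, k3, h4, k4, k5, h5, k6⟩,
    fun l hl1 hl2 => ⟨h6 l hl1 hl2, k7 l hl1 hl2⟩⟩
end
end

section
/- Let (Φ₁,Φ₂) be any branching mechanism. Then there exist positive reals (γ_k)_{k≥1} and two-type offspring laws (g_{k,1},g_{k,2})_{k≥1} such that conditions (A), (C) and (D) hold with Φ_{k,1}(λ₁,λ₂) → Φ₁(λ₁,λ₂) and e^{λ₂}Φ_{k,2}(λ₁,λ₂) → Φ₂(λ₁,λ₂) for all (λ₁,λ₂) ∈ [0,∞)² as k → ∞. -/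
open MeasureTheory Filter Set

noncomputable section

lemma aux_hasSum (μ : Measure (ℕ × ℕ)) [IsFiniteMeasure μ] (f : ℕ × ℕ → ℝ)
    (hf : Integrable f μ) : HasSum (fun i => μ.real {i} * f i) (∫ i, f i ∂μ) := by
  have h := hasSum_integral_iUnion (μ := μ) (f := f) (s := fun i : ℕ × ℕ => ({i} : Set (ℕ × ℕ)))
    (fun i => measurableSet_singleton i)
    (fun i j hij => by simpa [Function.onFun] using hij)
    hf.integrableOn
  rw [iUnion_of_singleton, Measure.restrict_univ] at h
  simpa [Measure.real] using h

lemma aux_bdd (μ : Measure (ℕ × ℕ)) [IsFiniteMeasure μ] (s : ℝ × ℝ)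
    (h1 : 0 ≤ s.1) (h2 : s.1 ≤ 1) (h3 : 0 ≤ s.2) (h4 : s.2 ≤ 1) :
    Integrable (fun i : ℕ × ℕ => s.1 ^ i.1 * s.2 ^ i.2) μ := by
  refine Integrable.of_bound (C := 1) (Measurable.aestronglyMeasurable (by fun_prop)) ?_
  refine ae_of_all _ fun i => ?_
  rw [Real.norm_of_nonneg (by positivity)]
  exact mul_le_one₀ (pow_le_one₀ h1 h2) (by positivity) (pow_le_one₀ h3 h4)

lemma exists_offspring (μ : Measure (ℕ × ℕ)) [IsFiniteMeasure μ] (b : ℕ × ℕ) (c : ℝ)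
    (hc : 0 < c) (h : μ.real univ ≤ c) :
    ∃ p : ℕ × ℕ → ℝ, (∀ i, 0 ≤ p i) ∧ HasSum p 1 ∧
      ∀ s : ℝ × ℝ, 0 ≤ s.1 → s.1 ≤ 1 → 0 ≤ s.2 → s.2 ≤ 1 →
        c * (s.1 ^ b.1 * s.2 ^ b.2 - pgf2 p s) =
          ∫ i, (s.1 ^ b.1 * s.2 ^ b.2 - s.1 ^ i.1 * s.2 ^ i.2) ∂μ := by
  have key : ∀ f : ℕ × ℕ → ℝ, Integrable f μ →
      HasSum (fun i => ((μ.real {i} + if i = b then c - μ.real univ else 0) / c) * f i)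
        ((∫ i, f i ∂μ + (c - μ.real univ) * f b) / c) := by
    intro f hf
    have h1 := aux_hasSum μ f hf
    have h2 : HasSum (fun i => if i = b then (c - μ.real univ) * f b else 0)
        ((c - μ.real univ) * f b) := hasSum_ite_eq b _
    refine ((h1.add h2).div_const c).congr_fun ?_
    intro i
    by_cases hi : i = b
    · subst hi; simp; ring
    · simp [hi]; ring
  refine ⟨fun i => (μ.real {i} + if i = b then c - μ.real univ else 0) / c, ?_, ?_, ?_⟩
  · intro i
    have := measureReal_nonneg (μ := μ) (s := {i})
    apply div_nonneg _ hc.le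
    split_ifs <;> linarith
  · have := key (fun _ => 1) (integrable_const _)
    simp only [mul_one, integral_const, smul_eq_mul] at this
    rwa [add_sub_cancel, div_self hc.ne'] at this
  · intro s h1 h2 h3 h4
    have hb := aux_bdd μ s h1 h2 h3 h4
    have := (key _ hb).tsum_eq
    rw [pgf2]
    simp only [← mul_assoc] at this
    rw [this, integral_sub (integrable_const _) hb]
    simp only [integral_const, smul_eq_mul]
    field_simp
    ring

lemma general_conv (n : Measure (ℝ × ℝ)) (G : ℝ × ℝ → ℝ) (hG : Integrable G n)
    (F : ℕ → ℝ × ℝ → ℝ × ℝ → ℝ) (hm : ∀ k l, Measurable (F k l))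
    (f : ℝ × ℝ → ℝ × ℝ → ℝ)
    (h0 : ∀ k z, F k 0 z = 0)
    (hG0 : ∀ᵐ z ∂n, 0 ≤ G z)
    (hL : ∀ R : ℝ, 0 ≤ R → ∃ C : ℝ, 0 ≤ C ∧ ∀ k, ∀ᵐ z ∂n, ∀ l ∈ Icc ((0:ℝ),(0:ℝ)) (R,R),
      ∀ l' ∈ Icc ((0:ℝ),(0:ℝ)) (R,R), |F k l z - F k l' z| ≤ C * G z * dist l l')
    (hlim : ∀ l : ℝ × ℝ, 0 ≤ l.1 → 0 ≤ l.2 → ∀ᵐ z ∂n,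
      Tendsto (fun k => F k l z) atTop (nhds (f l z))) :
    (∀ R : ℝ, 0 ≤ R → ∃ C : ℝ, 0 ≤ C ∧ ∀ k, ∀ l ∈ Icc ((0:ℝ),(0:ℝ)) (R,R),
      ∀ l' ∈ Icc ((0:ℝ),(0:ℝ)) (R,R), |∫ z, F k l z ∂n - ∫ z, F k l' z ∂n| ≤ C * dist l l') ∧
    (∀ l : ℝ × ℝ, 0 ≤ l.1 → 0 ≤ l.2 →
      Tendsto (fun k => ∫ z, F k l z ∂n) atTop (nhds (∫ z, f l z ∂n))) := by
  have hbd : ∀ R : ℝ, 0 ≤ R → ∃ C : ℝ, ∀ k, ∀ l ∈ Icc ((0:ℝ),(0:ℝ)) (R,R),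
      ∀ᵐ z ∂n, ‖F k l z‖ ≤ C * G z * dist l 0 := by
    intro R hR
    obtain ⟨C, hC0, hC⟩ := hL R hR
    refine ⟨C, fun k l hl => ?_⟩
    filter_upwards [hC k] with z hz
    have := hz l hl 0 ⟨le_rfl, by constructor <;> simpa using hR⟩
    simpa [h0] using this
  have hint : ∀ R : ℝ, 0 ≤ R → ∀ k, ∀ l ∈ Icc ((0:ℝ),(0:ℝ)) (R,R), Integrable (F k l) n := by
    intro R hR k l hl
    obtain ⟨C, hC⟩ := hbd R hR
    exact ((hG.const_mul C).mul_const _).mono' (hm k l).aestronglyMeasurable (hC k l hl)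
  constructor
  · intro R hR
    obtain ⟨C, hC0, hC⟩ := hL R hR
    refine ⟨C * ∫ z, G z ∂n, mul_nonneg hC0 (integral_nonneg_of_ae hG0), ?_⟩
    intro k l hl l' hl'
    rw [← integral_sub (hint R hR k l hl) (hint R hR k l' hl')]
    have := norm_integral_le_of_norm_le (μ := n) (f := fun z => F k l z - F k l' z)
      ((hG.const_mul C).mul_const (dist l l')) (by
        filter_upwards [hC k] with z hz
        exact hz l hl l' hl')
    rw [integral_mul_const, integral_const_mul] at this
    exact this
  · intro l h1 h2
    have hl : l ∈ Icc ((0:ℝ),(0:ℝ)) (max l.1 l.2, max l.1 l.2) :=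
      ⟨⟨h1, h2⟩, ⟨le_max_left _ _, le_max_right _ _⟩⟩
    obtain ⟨C, hC⟩ := hbd (max l.1 l.2) (le_max_of_le_left h1)
    exact tendsto_integral_of_dominated_convergence (fun z => C * G z * dist l 0)
      (fun k => (hm k l).aestronglyMeasurable) ((hG.const_mul C).mul_const _)
      (fun k => hC k l hl) (hlim l h1 h2)

lemma int_of_lint (n : Measure (ℝ × ℝ)) (G : ℝ × ℝ → ℝ) (hGm : Measurable G)
    (hG0 : ∀ᵐ z ∂n, 0 ≤ G z) (h : ∫⁻ z, ENNReal.ofReal (G z) ∂n ≠ ⊤) : Integrable G n :=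
  (lintegral_ofReal_ne_top_iff_integrable hGm.aestronglyMeasurable hG0).1 h

lemma E_finite (n : Measure (ℝ × ℝ)) (G : ℝ × ℝ → ℝ) (hG : Integrable G n) (K : ℝ) :
    n {z | 1 ≤ K ^ 2 * G z} < ⊤ := by
  have := Integrable.measure_ge_lt_top (hG.const_mul (K^2)) (ε := 1) one_pos
  simpa using this

/-- the Lipschitz estimate for type 1 -/
lemma lip1 (R K M z1 z2 : ℝ) (N : ℕ) (hN : z2 = N) (hK : 1 ≤ K) (hM0 : 0 ≤ M) (hM : M ≤ K * z1)
    (hz1 : 0 ≤ z1) (hE : 1 ≤ K ^ 2 * (min z1 (z1 ^ 2) + z2)) (hR : 0 ≤ R)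
    (a b a' b' d : ℝ) (ha : 0 ≤ a) (hb : 0 ≤ b) (ha' : 0 ≤ a') (hb' : 0 ≤ b')
    (haR : a ≤ R) (haR' : a' ≤ R)
    (hd1 : |a - a'| ≤ d) (hd2 : |b - b'| ≤ d) :
    |(Real.exp (-(a * ((M + 1) / K) + b * z2)) - 1 + (M + 1) * (1 - Real.exp (-a / K))) -
     (Real.exp (-(a' * ((M + 1) / K) + b' * z2)) - 1 + (M + 1) * (1 - Real.exp (-a' / K)))|
      ≤ (4 * R + 5) * (min z1 (z1 ^ 2) + z2) * d := by
  have hK0 : 0 < K := by linarith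
  have hz2 : 0 ≤ z2 := by rw [hN]; positivity
  set x := (M + 1) / K with hx
  have hx1 : 1 / K ≤ x := by rw [hx]; gcongr; linarith
  have hx0 : 0 < x := lt_of_lt_of_le (by positivity) hx1
  have hxz : x ≤ z1 + 1 / K := by
    rw [hx, div_le_iff₀ hK0]; field_simp; linarith
  have hmin : 0 ≤ min z1 (z1 ^ 2) := le_min hz1 (sq_nonneg _)
  have hd0 : 0 ≤ d := (abs_nonneg _).trans hd1
  -- derivative bound
  have hB : ∀ u ∈ Icc (0:ℝ) R, x * (1 - Real.exp (-(u * x + b * z2))) ≤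
      (4 * R + 4) * (min z1 (z1 ^ 2) + z2) := by
    intro u hu
    rcases Nat.eq_zero_or_pos N with h | h
    · have hz20 : z2 = 0 := by simp [hN, h]
      rw [hz20] at hE ⊢
      simp only [mul_zero, add_zero] at hE ⊢
      have hKz : 1 / K ≤ z1 := by
        rw [div_le_iff₀ hK0]
        have : 1 ≤ K ^ 2 * z1 ^ 2 := hE.trans (by gcongr; exact min_le_right _ _)
        nlinarith [mul_nonneg hz1 hK0.le]
      have hx2 : x ≤ 2 * z1 := by linarith
      have e1 : 1 - Real.exp (-(u * x)) ≤ u * x := by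
        have := Real.add_one_le_exp (-(u * x)); linarith
      have e2 : 1 - Real.exp (-(u * x)) ≤ 1 := by
        have := Real.exp_pos (-(u * x)); linarith
      rcases min_choice z1 (z1 ^ 2) with hm | hm <;> rw [hm]
      · have : x * (1 - Real.exp (-(u * x))) ≤ x * 1 := by gcongr
        nlinarith
      · have : x * (1 - Real.exp (-(u * x))) ≤ x * (R * x) := by
          gcongr; exact e1.trans (by gcongr; exact hu.2)
        have : R * x ^ 2 ≤ R * (2 * z1) ^ 2 := by gcongr
        nlinarith [sq_nonneg z1]
    · have hz21 : 1 ≤ z2 := by rw [hN]; exact_mod_cast h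
      have e2 : 1 - Real.exp (-(u * x + b * z2)) ≤ 1 := by
        have := Real.exp_pos (-(u * x + b * z2)); linarith
      have : x * (1 - Real.exp (-(u * x + b * z2))) ≤ x * 1 := by gcongr
      have hK1 : 1 / K ≤ 1 := by rw [div_le_iff₀ hK0]; linarith
      have hz1m : z1 ≤ 1 + min z1 (z1 ^ 2) := by
        rcases min_choice z1 (z1 ^ 2) with hm | hm <;> rw [hm] <;> nlinarith [sq_nonneg (z1 - 1)]
      nlinarith [mul_nonneg hR hmin, mul_nonneg hR hz2]
  have h1 : |(Real.exp (-(a * x + b * z2)) - 1 + (M + 1) * (1 - Real.exp (-a / K))) -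
     (Real.exp (-(a' * x + b * z2)) - 1 + (M + 1) * (1 - Real.exp (-a' / K)))| ≤
      (4 * R + 4) * (min z1 (z1 ^ 2) + z2) * |a - a'| := by
    have hder : ∀ u ∈ Icc (0:ℝ) R, HasDerivWithinAt (fun u =>
        Real.exp (-(u * x + b * z2)) - 1 + (M + 1) * (1 - Real.exp (-u / K)))
        (x * (Real.exp (-u / K) - Real.exp (-(u * x + b * z2)))) (Icc 0 R) u := by
      intro u _
      apply HasDerivAt.hasDerivWithinAt
      have d1 : HasDerivAt (fun u => Real.exp (-(u * x + b * z2)))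
          (Real.exp (-(u * x + b * z2)) * (-(1 * x))) u :=
        ((((hasDerivAt_id u).mul_const x).add_const (b * z2)).neg).exp
      have d2 : HasDerivAt (fun u => Real.exp (-u / K)) (Real.exp (-u / K) * (-1 / K)) u :=
        (((hasDerivAt_id u).neg).div_const K).exp
      have := (d1.sub_const 1).add ((d2.const_sub 1).const_mul (M + 1))
      refine this.congr_deriv ?_
      rw [hx]; field_simp; ring
    have := Convex.norm_image_sub_le_of_norm_hasDerivWithin_le hder (C := (4 * R + 4) * (min z1 (z1 ^ 2) + z2)) (by
      intro u hu
      have e0 : Real.exp (-(u * x + b * z2)) ≤ Real.exp (-u / K) := by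
        apply Real.exp_le_exp.2
        have : u * (1 / K) ≤ u * x := mul_le_mul_of_nonneg_left hx1 hu.1
        have : 0 ≤ b * z2 := by positivity
        have : -u / K = - (u * (1 / K)) := by ring
        linarith
      have e1 : Real.exp (-u / K) ≤ 1 := by
        apply Real.exp_le_one_iff.2
        apply div_nonpos_of_nonpos_of_nonneg _ hK0.le
        linarith [hu.1]
      rw [Real.norm_of_nonneg (mul_nonneg hx0.le (by linarith))]
      refine le_trans ?_ (hB u hu)
      gcongr) (convex_Icc 0 R) ⟨ha', haR'⟩ ⟨ha, haR⟩
    exact this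
  have h2 : |(Real.exp (-(a' * x + b * z2)) - 1 + (M + 1) * (1 - Real.exp (-a' / K))) -
     (Real.exp (-(a' * x + b' * z2)) - 1 + (M + 1) * (1 - Real.exp (-a' / K)))| ≤
      z2 * |b - b'| := by
    have hder : ∀ u ∈ Ici (0:ℝ), HasDerivWithinAt (fun u =>
        Real.exp (-(a' * x + u * z2)) - 1 + (M + 1) * (1 - Real.exp (-a' / K)))
        (Real.exp (-(a' * x + u * z2)) * (-(1 * z2))) (Ici 0) u := by
      intro u _
      apply HasDerivAt.hasDerivWithinAt
      have d1 : HasDerivAt (fun u => Real.exp (-(a' * x + u * z2)))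
          (Real.exp (-(a' * x + u * z2)) * (-(1 * z2))) u :=
        ((((hasDerivAt_id u).mul_const z2).const_add (a' * x)).neg).exp
      exact (d1.sub_const 1).add_const _
    have := Convex.norm_image_sub_le_of_norm_hasDerivWithin_le hder (C := z2) (by
      intro u hu
      have hu : 0 ≤ u := hu
      have e1 : Real.exp (-(a' * x + u * z2)) ≤ 1 := by
        apply Real.exp_le_one_iff.2
        have : 0 ≤ a' * x + u * z2 := by positivity
        linarith
      rw [norm_mul, Real.norm_of_nonneg (Real.exp_pos _).le, norm_neg, one_mul,
        Real.norm_of_nonneg hz2]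
      exact mul_le_of_le_one_left hz2 e1) (convex_Ici 0) hb' hb
    exact this
  have h3 := abs_sub_le (Real.exp (-(a * x + b * z2)) - 1 + (M + 1) * (1 - Real.exp (-a / K)))
    (Real.exp (-(a' * x + b * z2)) - 1 + (M + 1) * (1 - Real.exp (-a' / K)))
    (Real.exp (-(a' * x + b' * z2)) - 1 + (M + 1) * (1 - Real.exp (-a' / K)))
  have h4 : (4 * R + 4) * (min z1 (z1 ^ 2) + z2) * |a - a'| ≤
    (4 * R + 4) * (min z1 (z1 ^ 2) + z2) * d := by gcongr
  have h5 : z2 * |b - b'| ≤ z2 * d := by gcongr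
  nlinarith [mul_nonneg hmin hd0]

/-- the Lipschitz estimate for type 2 -/
lemma lip2 (R x z1 z2 : ℝ) (hx0 : 0 ≤ x) (hx : x ≤ z1) (hz2 : -1 ≤ z2)
    (a b a' b' d : ℝ) (hb : 0 ≤ b) (ha' : 0 ≤ a') (ha : 0 ≤ a) (hb' : 0 ≤ b')
    (hbR : b ≤ R) (hbR' : b' ≤ R)
    (hd1 : |a - a'| ≤ d) (hd2 : |b - b'| ≤ d) :
    |(1 - Real.exp (-(a * x + b * z2))) - (1 - Real.exp (-(a' * x + b' * z2)))|
      ≤ Real.exp R * (z1 + |z2|) * d := by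
  have hd0 : 0 ≤ d := (abs_nonneg _).trans hd1
  have hs : Convex ℝ (Iic R) := convex_Iic R
  have h := Convex.norm_image_sub_le_of_norm_hasDerivWithin_le (s := Iic R)
    (f := Real.exp) (f' := Real.exp) (C := Real.exp R) (x := -(a * x + b * z2))
    (y := -(a' * x + b' * z2))
    (fun u _ => (Real.hasDerivAt_exp u).hasDerivWithinAt)
    (fun u hu => by rw [Real.norm_of_nonneg (Real.exp_pos _).le]; exact Real.exp_le_exp.2 hu) hs
    (by simp only [mem_Iic]; nlinarith [mul_nonneg ha hx0])
    (by simp only [mem_Iic]; nlinarith [mul_nonneg ha' hx0])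
  have e : (1 - Real.exp (-(a * x + b * z2))) - (1 - Real.exp (-(a' * x + b' * z2))) =
    Real.exp (-(a' * x + b' * z2)) - Real.exp (-(a * x + b * z2)) := by ring
  rw [e]
  refine h.trans ?_
  rw [mul_assoc]
  gcongr
  have : -(a' * x + b' * z2) - -(a * x + b * z2) = (a - a') * x + (b - b') * z2 := by ring
  rw [this, Real.norm_eq_abs]
  refine (abs_add_le _ _).trans ?_
  rw [abs_mul, abs_mul, abs_of_nonneg hx0]
  have h1 : |a - a'| * x ≤ d * z1 := by gcongr
  have h2 : |b - b'| * |z2| ≤ d * |z2| := by gcongr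
  linarith

lemma K_tendsto : Tendsto (fun k : ℕ => (k : ℝ) + 1) atTop atTop :=
  tendsto_atTop_add_const_right _ _ tendsto_natCast_atTop_atTop

lemma u_le (K l : ℝ) (hK : 0 < K) : K * (1 - Real.exp (-l / K)) ≤ l := by
  have := Real.add_one_le_exp (-l / K)
  have h : K * (1 - Real.exp (-l / K)) ≤ K * (l / K) := by
    gcongr; rw [neg_div] at *; linarith
  rwa [mul_div_cancel₀ _ hK.ne'] at h

lemma u_nonneg (K l : ℝ) (hK : 0 < K) (hl : 0 ≤ l) : 0 ≤ K * (1 - Real.exp (-l / K)) := by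
  have : Real.exp (-l / K) ≤ 1 := Real.exp_le_one_iff.2
    (div_nonpos_of_nonpos_of_nonneg (by linarith) hK.le)
  exact mul_nonneg hK.le (by linarith)

lemma u_lip (K a a' : ℝ) (hK : 0 < K) (ha : 0 ≤ a) (ha' : 0 ≤ a') :
    |K * (1 - Real.exp (-a / K)) - K * (1 - Real.exp (-a' / K))| ≤ |a - a'| := by
  have h := Convex.norm_image_sub_le_of_norm_hasDerivWithin_le (s := Iic (0:ℝ))
    (f := Real.exp) (f' := Real.exp) (C := 1) (x := -a / K)
    (y := -a' / K)
    (fun u _ => (Real.hasDerivAt_exp u).hasDerivWithinAt)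
    (fun u hu => by rw [Real.norm_of_nonneg (Real.exp_pos _).le]; exact Real.exp_le_one_iff.2 hu)
    (convex_Iic 0)
    (div_nonpos_of_nonpos_of_nonneg (by linarith) hK.le)
    (div_nonpos_of_nonpos_of_nonneg (by linarith) hK.le)
  have e : K * (1 - Real.exp (-a / K)) - K * (1 - Real.exp (-a' / K)) =
    K * (Real.exp (-a' / K) - Real.exp (-a / K)) := by ring
  have e2 : -a' / K - -a / K = (a - a') / K := by ring
  rw [e2, Real.norm_eq_abs, Real.norm_eq_abs, abs_div, abs_of_pos hK, one_mul] at h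
  rw [e, abs_mul, abs_of_pos hK]
  calc _ ≤ K * (|a - a'| / K) := by gcongr
    _ = _ := by field_simp

lemma u_tendsto (l : ℝ) (hl : 0 ≤ l) :
    Tendsto (fun k : ℕ => ((k : ℝ) + 1) * (1 - Real.exp (-l / ((k : ℝ) + 1)))) atTop (nhds l) := by
  have h1 : Tendsto (fun k : ℕ => l / (1 + l / ((k : ℝ) + 1))) atTop (nhds l) := by
    have h2 : Tendsto (fun k : ℕ => 1 + l / ((k : ℝ) + 1)) atTop (nhds (1 + 0)) :=
      tendsto_const_nhds.add (K_tendsto.const_div_atTop l)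
    have := (tendsto_const_nhds (x := l)).div h2 (by norm_num)
    rw [add_zero, div_one] at this
    exact this
  refine tendsto_of_tendsto_of_tendsto_of_le_of_le h1 tendsto_const_nhds ?_ ?_
  · intro k
    have hK : (0:ℝ) < (k : ℝ) + 1 := by positivity
    set K := (k : ℝ) + 1
    show l / (1 + l / K) ≤ K * (1 - Real.exp (-l / K))
    have hy : 0 ≤ l / K := by positivity
    have e : Real.exp (-l / K) ≤ 1 / (1 + l / K) := by
      rw [neg_div, Real.exp_neg, ← one_div]
      gcongr
      have := Real.add_one_le_exp (l / K); linarith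
    have : l / (1 + l / K) = K * (1 - 1 / (1 + l / K)) := by
      field_simp; ring
    rw [this]; gcongr
  · intro k
    exact u_le _ _ (by positivity)

lemma x_tendsto (x : ℝ) (hx : 0 ≤ x) :
    Tendsto (fun k : ℕ => (⌊((k : ℝ) + 1) * x⌋₊ : ℝ) / ((k : ℝ) + 1)) atTop (nhds x) := by
  have := (tendsto_nat_floor_mul_div_atTop hx).comp K_tendsto
  refine this.congr fun k => ?_
  simp [Function.comp, mul_comm]

/-- type-1 integrability weight -/
def G1 (z : ℝ × ℝ) : ℝ := min z.1 (z.1 ^ 2) + z.2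
/-- type-2 integrability weight -/
def G2 (z : ℝ × ℝ) : ℝ := z.1 + |z.2|

lemma G1_meas : Measurable G1 := by unfold G1; fun_prop
lemma G2_meas : Measurable G2 := by
  unfold G2
  exact measurable_fst.add (measurable_snd.abs)

/-- truncation set -/
def Ek (G : ℝ × ℝ → ℝ) (k : ℕ) : Set (ℝ × ℝ) := {z | 1 ≤ ((k : ℝ) + 1) ^ 2 * G z}

lemma Ek_meas (G : ℝ × ℝ → ℝ) (hG : Measurable G) (k : ℕ) : MeasurableSet (Ek G k) :=
  measurableSet_le measurable_const (hG.const_mul _)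

lemma Ek_ev (G : ℝ × ℝ → ℝ) (z : ℝ × ℝ) (h : 0 < G z) : ∀ᶠ k in atTop, z ∈ Ek G k := by
  have h1 : Tendsto (fun k : ℕ => ((k : ℝ) + 1) ^ 2 * G z) atTop atTop :=
    ((tendsto_pow_atTop two_ne_zero).comp K_tendsto).atTop_mul_const h
  exact h1.eventually_ge_atTop 1

/-- discretised first coordinate -/
def Mk (k : ℕ) (z : ℝ × ℝ) : ℕ := ⌊((k : ℝ) + 1) * z.1⌋₊

lemma Mk_meas (k : ℕ) : Measurable (Mk k) :=
  Nat.measurable_floor.comp (measurable_fst.const_mul _)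

lemma Mk_measR (k : ℕ) : Measurable (fun z => (Mk k z : ℝ)) :=
  (measurable_from_top (f := fun n : ℕ => (n : ℝ))).comp (Mk_meas k)

lemma Mk_le (k : ℕ) (z : ℝ × ℝ) (h : 0 ≤ z.1) : (Mk k z : ℝ) ≤ ((k : ℝ) + 1) * z.1 :=
  Nat.floor_le (by positivity)

/-- approximating integrand, type 1 -/
def F1 (k : ℕ) (l z : ℝ × ℝ) : ℝ :=
  (Ek G1 k).indicator (fun z => Real.exp (-(l.1 * (((Mk k z : ℝ) + 1) / ((k : ℝ) + 1)) + l.2 * z.2)) - 1 +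
    ((Mk k z : ℝ) + 1) * (1 - Real.exp (-l.1 / ((k : ℝ) + 1)))) z

/-- approximating integrand, type 2 -/
def F2 (k : ℕ) (l z : ℝ × ℝ) : ℝ :=
  (Ek G2 k).indicator (fun z => 1 - Real.exp (-(l.1 * ((Mk k z : ℝ) / ((k : ℝ) + 1)) + l.2 * z.2))) z

lemma ae1 (B : BranchingMechanism) : ∀ᵐ z ∂B.n1, z ∈ Mset ∧ z ≠ 0 := by
  have h1 : ∀ᵐ z ∂B.n1, z ∈ Mset := B.n1_supp
  have h2 : ∀ᵐ z ∂B.n1, z ≠ 0 := by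
    rw [ae_iff]; simpa using B.n1_zero
  exact h1.and h2

lemma ae2 (B : BranchingMechanism) : ∀ᵐ z ∂B.n2, z ∈ Mm1set ∧ z ≠ 0 := by
  have h1 : ∀ᵐ z ∂B.n2, z ∈ Mm1set := B.n2_supp
  have h2 : ∀ᵐ z ∂B.n2, z ≠ 0 := by
    rw [ae_iff]; simpa using B.n2_zero
  exact h1.and h2

lemma G1_pos (z : ℝ × ℝ) (h : z ∈ Mset ∧ z ≠ 0) : 0 < G1 z := by
  obtain ⟨⟨h1, n, hn⟩, h0⟩ := h
  have hz2 : 0 ≤ z.2 := by rw [hn]; positivity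
  unfold G1
  rcases h1.eq_or_lt with h | h
  · have : z.2 ≠ 0 := fun h' => h0 (Prod.ext h.symm h')
    have : 0 < z.2 := lt_of_le_of_ne hz2 this.symm
    rw [← h]; simpa using this
  · have : 0 < min z.1 (z.1 ^ 2) := lt_min h (by positivity)
    linarith

lemma G2_pos (z : ℝ × ℝ) (h : z ∈ Mm1set ∧ z ≠ 0) : 0 < G2 z := by
  obtain ⟨⟨h1, n, hn⟩, h0⟩ := h
  unfold G2
  rcases h1.eq_or_lt with h | h
  · have : z.2 ≠ 0 := fun h' => h0 (Prod.ext h.symm h')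
    have := abs_pos.2 this
    linarith
  · have := abs_nonneg z.2
    linarith

lemma G1_int (B : BranchingMechanism) : Integrable G1 B.n1 :=
  int_of_lint _ _ G1_meas ((ae1 B).mono fun z hz => (G1_pos z hz).le) B.n1_moment

lemma G2_int (B : BranchingMechanism) : Integrable G2 B.n2 :=
  int_of_lint _ _ G2_meas ((ae2 B).mono fun z hz => (G2_pos z hz).le) B.n2_moment

lemma dist_fst_le (l l' : ℝ × ℝ) : |l.1 - l'.1| ≤ dist l l' := by
  rw [Prod.dist_eq, ← Real.dist_eq]; exact le_max_left _ _
lemma dist_snd_le (l l' : ℝ × ℝ) : |l.2 - l'.2| ≤ dist l l' := by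
  rw [Prod.dist_eq, ← Real.dist_eq]; exact le_max_right _ _

lemma conv1 (B : BranchingMechanism) :
    (∀ R : ℝ, 0 ≤ R → ∃ C : ℝ, 0 ≤ C ∧ ∀ k, ∀ l ∈ Icc ((0:ℝ),(0:ℝ)) (R,R),
      ∀ l' ∈ Icc ((0:ℝ),(0:ℝ)) (R,R), |∫ z, F1 k l z ∂B.n1 - ∫ z, F1 k l' z ∂B.n1| ≤ C * dist l l') ∧
    (∀ l : ℝ × ℝ, 0 ≤ l.1 → 0 ≤ l.2 →
      Tendsto (fun k => ∫ z, F1 k l z ∂B.n1) atTop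
        (nhds (∫ z, (Real.exp (-(l.1 * z.1 + l.2 * z.2)) - 1 + l.1 * z.1) ∂B.n1))) := by
  refine general_conv B.n1 G1 (G1_int B) F1 ?_
    (fun l z => Real.exp (-(l.1 * z.1 + l.2 * z.2)) - 1 + l.1 * z.1) ?_
    ((ae1 B).mono fun z hz => (G1_pos z hz).le) ?_ ?_
  · intro k l
    have := Mk_measR k
    refine Measurable.indicator ?_ (Ek_meas _ G1_meas k)
    fun_prop
  · intro k z
    simp [F1]
  · intro R hR
    refine ⟨4 * R + 5, by positivity, fun k => ?_⟩
    filter_upwards [ae1 B] with z hz l hl l' hl'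
    by_cases hE : z ∈ Ek G1 k
    · simp only [F1, indicator_of_mem hE]
      obtain ⟨⟨h1, n, hn⟩, h0⟩ := hz
      exact lip1 R _ _ z.1 z.2 n hn (by simp) (by positivity) (Mk_le k z h1) h1 hE hR
        _ _ _ _ _ hl.1.1 hl.1.2 hl'.1.1 hl'.1.2 hl.2.1 hl'.2.1
        (dist_fst_le _ _) (dist_snd_le _ _)
    · simp only [F1, indicator_of_notMem hE]
      have := G1_pos z hz
      simp only [sub_self, abs_zero]
      positivity
  · intro l h1 h2
    filter_upwards [ae1 B] with z hz
    have hz1 := hz.1.1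
    have hx : Tendsto (fun k : ℕ => ((Mk k z : ℝ) + 1) / ((k : ℝ) + 1)) atTop (nhds z.1) := by
      have := (x_tendsto z.1 hz1).add (K_tendsto.const_div_atTop 1)
      rw [add_zero] at this
      refine this.congr fun k => ?_
      rw [Mk, add_div]
    have hu := u_tendsto l.1 h1
    have t1 : Tendsto (fun k : ℕ => Real.exp (-(l.1 * (((Mk k z : ℝ) + 1) / ((k : ℝ) + 1)) + l.2 * z.2)) - 1 +
      (((Mk k z : ℝ) + 1) / ((k : ℝ) + 1)) * (((k : ℝ) + 1) * (1 - Real.exp (-l.1 / ((k : ℝ) + 1)))))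
      atTop (nhds (Real.exp (-(l.1 * z.1 + l.2 * z.2)) - 1 + z.1 * l.1)) :=
      ((Real.continuous_exp.continuousAt.tendsto.comp
        (((hx.const_mul l.1).add_const _).neg)).sub_const 1).add (hx.mul hu)
    rw [mul_comm z.1] at t1
    refine t1.congr' ?_
    filter_upwards [Ek_ev G1 z (G1_pos z hz)] with k hk
    simp only [F1, indicator_of_mem hk]
    have : ((k : ℝ) + 1) ≠ 0 := by positivity
    field_simp

lemma conv2 (B : BranchingMechanism) :
    (∀ R : ℝ, 0 ≤ R → ∃ C : ℝ, 0 ≤ C ∧ ∀ k, ∀ l ∈ Icc ((0:ℝ),(0:ℝ)) (R,R),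
      ∀ l' ∈ Icc ((0:ℝ),(0:ℝ)) (R,R), |∫ z, F2 k l z ∂B.n2 - ∫ z, F2 k l' z ∂B.n2| ≤ C * dist l l') ∧
    (∀ l : ℝ × ℝ, 0 ≤ l.1 → 0 ≤ l.2 →
      Tendsto (fun k => ∫ z, F2 k l z ∂B.n2) atTop
        (nhds (∫ z, (1 - Real.exp (-(l.1 * z.1 + l.2 * z.2))) ∂B.n2))) := by
  refine general_conv B.n2 G2 (G2_int B) F2 ?_
    (fun l z => 1 - Real.exp (-(l.1 * z.1 + l.2 * z.2))) ?_
    ((ae2 B).mono fun z hz => (G2_pos z hz).le) ?_ ?_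
  · intro k l
    have := Mk_measR k
    refine Measurable.indicator ?_ (Ek_meas _ G2_meas k)
    fun_prop
  · intro k z
    simp [F2]
  · intro R hR
    refine ⟨Real.exp R, by positivity, fun k => ?_⟩
    filter_upwards [ae2 B] with z hz l hl l' hl'
    by_cases hE : z ∈ Ek G2 k
    · simp only [F2, indicator_of_mem hE]
      obtain ⟨⟨h1, n, hn1, hn⟩, h0⟩ := hz
      exact lip2 R _ z.1 z.2 (by positivity)
        (by rw [div_le_iff₀ (by positivity)]; have := Mk_le k z h1; linarith)
        (by rw [hn]; exact_mod_cast hn1)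
        _ _ _ _ _ hl.1.2 hl'.1.1 hl.1.1 hl'.1.2 hl.2.2 hl'.2.2
        (dist_fst_le _ _) (dist_snd_le _ _)
    · simp only [F2, indicator_of_notMem hE]
      have := G2_pos z hz
      simp only [sub_self, abs_zero]
      positivity
  · intro l h1 h2
    filter_upwards [ae2 B] with z hz
    have hz1 := hz.1.1
    have hx : Tendsto (fun k : ℕ => (Mk k z : ℝ) / ((k : ℝ) + 1)) atTop (nhds z.1) :=
      x_tendsto z.1 hz1
    have t1 : Tendsto (fun k : ℕ => 1 - Real.exp (-(l.1 * ((Mk k z : ℝ) / ((k : ℝ) + 1)) + l.2 * z.2)))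
      atTop (nhds (1 - Real.exp (-(l.1 * z.1 + l.2 * z.2)))) :=
      (Real.continuous_exp.continuousAt.tendsto.comp
        (((hx.const_mul l.1).add_const _).neg)).const_sub 1
    refine t1.congr' ?_
    filter_upwards [Ek_ev G2 z (G2_pos z hz)] with k hk
    simp only [F2, indicator_of_mem hk]

lemma exp_pow_aux (a K : ℝ) (m : ℕ) : Real.exp (-a / K) ^ m = Real.exp (-(a * (m / K))) := by
  rw [← Real.exp_nat_mul]; congr 1; ring

lemma exp_pow_aux2 (a : ℝ) (m : ℕ) : Real.exp (-a) ^ m = Real.exp (-(a * m)) := by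
  rw [← Real.exp_nat_mul]; congr 1; ring

lemma E1_int_M (B : BranchingMechanism) (k : ℕ) :
    IntegrableOn (fun z => (Mk k z : ℝ)) (Ek G1 k) B.n1 := by
  have : IsFiniteMeasure (B.n1.restrict (Ek G1 k)) :=
    ⟨by rw [Measure.restrict_apply_univ]; exact E_finite _ _ (G1_int B) _⟩
  have hb : Integrable (fun z => ((k : ℝ) + 1) * (1 + G1 z)) (B.n1.restrict (Ek G1 k)) :=
    (((integrable_const 1).add (G1_int B).restrict)).const_mul _
  refine hb.mono' (Mk_measR k).aestronglyMeasurable ?_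
  refine ae_restrict_of_ae ?_
  filter_upwards [ae1 B] with z hz
  obtain ⟨⟨h1, n, hn⟩, h0⟩ := hz
  rw [Real.norm_of_nonneg (by positivity)]
  refine (Mk_le k z h1).trans ?_
  gcongr
  have hz2 : 0 ≤ z.2 := by rw [hn]; positivity
  unfold G1
  rcases min_choice z.1 (z.1 ^ 2) with hm | hm <;> rw [hm] <;> nlinarith [sq_nonneg (z.1 - 1)]

lemma exists_mu1 (B : BranchingMechanism) (k : ℕ) :
    ∃ μ : Measure (ℕ × ℕ), IsFiniteMeasure μ ∧ ∀ l : ℝ × ℝ, 0 ≤ l.1 → 0 ≤ l.2 →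
      ∫ i, (Real.exp (-l.1 / ((k : ℝ) + 1)) ^ 1 * Real.exp (-l.2) ^ 0 -
        Real.exp (-l.1 / ((k : ℝ) + 1)) ^ i.1 * Real.exp (-l.2) ^ i.2) ∂μ =
      -B.a11 * (((k : ℝ) + 1) * (1 - Real.exp (-l.1 / ((k : ℝ) + 1)))) -
        (B.alpha + |B.a11| / ((k : ℝ) + 1)) *
          (((k : ℝ) + 1) * (1 - Real.exp (-l.1 / ((k : ℝ) + 1)))) ^ 2 -
        ∫ z, F1 k l z ∂B.n1 := by
  have hfin : IsFiniteMeasure (B.n1.restrict (Ek G1 k)) :=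
    ⟨by rw [Measure.restrict_apply_univ]; exact E_finite _ _ (G1_int B) _⟩
  have hKp : (0:ℝ) < (k : ℝ) + 1 := by positivity
  have hα := B.alpha_nonneg
  have hMint := E1_int_M B k
  set J := ∫ z in Ek G1 k, (Mk k z : ℝ) ∂B.n1 with hJ
  have hJ0 : 0 ≤ J := integral_nonneg fun z => by positivity
  set T : ℝ × ℝ → ℕ × ℕ := fun z => (Mk k z + 1, ⌊z.2⌋₊) with hT
  have hTm : Measurable T :=
    ((measurable_from_top (f := fun n : ℕ => n + 1)).comp (Mk_meas k)).prodMk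
      (Nat.measurable_floor.comp measurable_snd)
  set K := (k : ℝ) + 1 with hK
  set A := (B.a11 + |B.a11|) * K + B.alpha * K ^ 2 + J with hA
  set D := |B.a11| * K + B.alpha * K ^ 2 with hD
  have hA0 : 0 ≤ A := by
    have : 0 ≤ B.a11 + |B.a11| := by linarith [neg_abs_le B.a11]
    positivity
  have hD0 : 0 ≤ D := by positivity
  refine ⟨(B.n1.restrict (Ek G1 k)).map T + (ENNReal.ofReal A • Measure.dirac (0, 0) +
    ENNReal.ofReal D • Measure.dirac (2, 0)), ?_, ?_⟩
  · have := Measure.smul_finite (Measure.dirac ((0, 0) : ℕ × ℕ)) (ENNReal.ofReal_ne_top (r := A))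
    have := Measure.smul_finite (Measure.dirac ((2, 0) : ℕ × ℕ)) (ENNReal.ofReal_ne_top (r := D))
    infer_instance
  intro l h1 h2
  have := Measure.smul_finite (Measure.dirac ((0, 0) : ℕ × ℕ)) (ENNReal.ofReal_ne_top (r := A))
  have := Measure.smul_finite (Measure.dirac ((2, 0) : ℕ × ℕ)) (ENNReal.ofReal_ne_top (r := D))
  have hs0 := (Real.exp_pos (-l.1 / K)).le
  have hs1 : Real.exp (-l.1 / K) ≤ 1 := Real.exp_le_one_iff.2
    (div_nonpos_of_nonpos_of_nonneg (by linarith) hKp.le)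
  have ht0 := (Real.exp_pos (-l.2)).le
  have ht1 : Real.exp (-l.2) ≤ 1 := Real.exp_le_one_iff.2 (by linarith)
  have hI : ∀ (ν : Measure (ℕ × ℕ)) [IsFiniteMeasure ν], Integrable (fun i : ℕ × ℕ =>
      Real.exp (-l.1 / K) ^ 1 * Real.exp (-l.2) ^ 0 -
        Real.exp (-l.1 / K) ^ i.1 * Real.exp (-l.2) ^ i.2) ν := fun ν _ =>
    (integrable_const _).sub
      (aux_bdd ν (Real.exp (-l.1 / K), Real.exp (-l.2)) hs0 hs1 ht0 ht1)
  have hI' : Integrable (fun z => Real.exp (-l.1 / K) ^ 1 * Real.exp (-l.2) ^ 0 -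
        Real.exp (-l.1 / K) ^ (T z).1 * Real.exp (-l.2) ^ (T z).2) (B.n1.restrict (Ek G1 k)) :=
    (integrable_map_measure (hI _).aestronglyMeasurable hTm.aemeasurable).1
    (hI ((B.n1.restrict (Ek G1 k)).map T))
  rw [integral_add_measure (hI _) (hI _), integral_add_measure (hI _) (hI _),
    integral_smul_measure, integral_smul_measure, integral_dirac, integral_dirac,
    ENNReal.toReal_ofReal hA0, ENNReal.toReal_ofReal hD0,
    integral_map hTm.aemeasurable (hI _).aestronglyMeasurable]
  have hF : ∫ z, F1 k l z ∂B.n1 = - (∫ z in Ek G1 k, (Real.exp (-l.1 / K) ^ 1 * Real.exp (-l.2) ^ 0 -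
        Real.exp (-l.1 / K) ^ (T z).1 * Real.exp (-l.2) ^ (T z).2) ∂B.n1 +
        ∫ z in Ek G1 k, (Real.exp (-l.1 / K) - 1) * (Mk k z : ℝ) ∂B.n1) := by
    rw [← integral_add hI' (hMint.const_mul _), ← integral_neg]
    unfold F1
    rw [integral_indicator (Ek_meas _ G1_meas k)]
    refine integral_congr_ae (ae_restrict_of_ae ?_)
    filter_upwards [ae1 B] with z hz
    obtain ⟨⟨h1, n, hn⟩, h0⟩ := hz
    simp only [hT, hn, Nat.floor_natCast, pow_one, pow_zero]
    rw [exp_pow_aux2, exp_pow_aux, neg_add, Real.exp_add]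
    push_cast
    ring
  rw [hF, integral_const_mul, ← hJ]
  simp only [smul_eq_mul, hA, hD]
  field_simp
  ring

lemma exists_mu2 (B : BranchingMechanism) (k : ℕ) :
    ∃ μ : Measure (ℕ × ℕ), IsFiniteMeasure μ ∧ ∀ l : ℝ × ℝ, 0 ≤ l.1 → 0 ≤ l.2 →
      Real.exp l.2 * ∫ i, (Real.exp (-l.1 / ((k : ℝ) + 1)) ^ 0 * Real.exp (-l.2) ^ 1 -
        Real.exp (-l.1 / ((k : ℝ) + 1)) ^ i.1 * Real.exp (-l.2) ^ i.2) ∂μ =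
      B.a21 * (((k : ℝ) + 1) * (1 - Real.exp (-l.1 / ((k : ℝ) + 1)))) +
        ∫ z, F2 k l z ∂B.n2 := by
  have hfin : IsFiniteMeasure (B.n2.restrict (Ek G2 k)) :=
    ⟨by rw [Measure.restrict_apply_univ]; exact E_finite _ _ (G2_int B) _⟩
  have hKp : (0:ℝ) < (k : ℝ) + 1 := by positivity
  have hα := B.a21_nonneg
  set T : ℝ × ℝ → ℕ × ℕ := fun z => (Mk k z, ⌊z.2 + 1⌋₊) with hT
  have hTm : Measurable T :=
    (Mk_meas k).prodMk (Nat.measurable_floor.comp (measurable_snd.add_const 1))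
  set K := (k : ℝ) + 1 with hK
  set D := B.a21 * K with hD
  have hD0 : 0 ≤ D := by positivity
  refine ⟨(B.n2.restrict (Ek G2 k)).map T + ENNReal.ofReal D • Measure.dirac (1, 1), ?_, ?_⟩
  · have := Measure.smul_finite (Measure.dirac ((1, 1) : ℕ × ℕ)) (ENNReal.ofReal_ne_top (r := D))
    infer_instance
  intro l h1 h2
  have := Measure.smul_finite (Measure.dirac ((1, 1) : ℕ × ℕ)) (ENNReal.ofReal_ne_top (r := D))
  have hs0 := (Real.exp_pos (-l.1 / K)).le
  have hs1 : Real.exp (-l.1 / K) ≤ 1 := Real.exp_le_one_iff.2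
    (div_nonpos_of_nonpos_of_nonneg (by linarith) hKp.le)
  have ht0 := (Real.exp_pos (-l.2)).le
  have ht1 : Real.exp (-l.2) ≤ 1 := Real.exp_le_one_iff.2 (by linarith)
  have hI : ∀ (ν : Measure (ℕ × ℕ)) [IsFiniteMeasure ν], Integrable (fun i : ℕ × ℕ =>
      Real.exp (-l.1 / K) ^ 0 * Real.exp (-l.2) ^ 1 -
        Real.exp (-l.1 / K) ^ i.1 * Real.exp (-l.2) ^ i.2) ν := fun ν _ =>
    (integrable_const _).sub
      (aux_bdd ν (Real.exp (-l.1 / K), Real.exp (-l.2)) hs0 hs1 ht0 ht1)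
  rw [integral_add_measure (hI _) (hI _),
    integral_smul_measure, integral_dirac, ENNReal.toReal_ofReal hD0,
    integral_map hTm.aemeasurable (hI _).aestronglyMeasurable]
  have hee : Real.exp l.2 * Real.exp (-l.2) = 1 := by rw [← Real.exp_add]; simp
  have hF : ∫ z, F2 k l z ∂B.n2 = Real.exp l.2 * ∫ z in Ek G2 k, (Real.exp (-l.1 / K) ^ 0 * Real.exp (-l.2) ^ 1 -
        Real.exp (-l.1 / K) ^ (T z).1 * Real.exp (-l.2) ^ (T z).2) ∂B.n2 := by
    rw [← integral_const_mul]
    unfold F2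
    rw [integral_indicator (Ek_meas _ G2_meas k)]
    refine integral_congr_ae (ae_restrict_of_ae ?_)
    filter_upwards [ae2 B] with z hz
    obtain ⟨⟨h1, n, hn1, hn⟩, h0⟩ := hz
    have hfl : ((⌊z.2 + 1⌋₊ : ℕ) : ℝ) = z.2 + 1 := by
      obtain ⟨m, hm⟩ := Int.eq_ofNat_of_zero_le (show 0 ≤ n + 1 by omega)
      have : z.2 + 1 = (m : ℝ) := by rw [hn]; exact_mod_cast hm
      rw [this, Nat.floor_natCast]
    simp only [hT, exp_pow_aux2, exp_pow_aux, hfl, pow_zero, one_mul, pow_one]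
    rw [mul_sub, hee, ← Real.exp_add, ← Real.exp_add]
    congr 2
    ring
  rw [hF]
  simp only [smul_eq_mul, hD]
  linear_combination (B.a21 * K * (1 - Real.exp (-l.1 / K))) * hee

/-- For any branching mechanism `(Φ₁, Φ₂)` there exist positive reals
`γ_k → ∞` and two-type offspring laws `(g_{k,1}, g_{k,2})` such that conditions
(A), (C), (D) hold, with `Φ_{k,1} → Φ₁` and `e^{λ₂}Φ_{k,2} → Φ₂` pointwise on
`[0,∞)²` as `k → ∞`. -/
theorem existence_of_approximating_sequence_two_type (B : BranchingMechanism) :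
    ∃ (γ : ℕ → ℝ) (p1 p2 : ℕ → ℕ × ℕ → ℝ),
      (∀ k, 0 < γ k) ∧
      (∀ k i, 0 ≤ p1 k i) ∧ (∀ k, HasSum (p1 k) 1) ∧
      (∀ k i, 0 ≤ p2 k i) ∧ (∀ k, HasSum (p2 k) 1) ∧
      -- Condition (A)
      Tendsto γ atTop atTop ∧
      -- Condition (C)
      (∀ R : ℝ, 0 ≤ R → ∃ L : NNReal, ∀ k,
        LipschitzOnWith L (Phik1 γ (fun k => pgf2 (p1 k)) k) (Icc ((0:ℝ),(0:ℝ)) (R,R))) ∧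
      (∀ l : ℝ × ℝ, 0 ≤ l.1 → 0 ≤ l.2 →
        Tendsto (fun k => Phik1 γ (fun k => pgf2 (p1 k)) k l) atTop (nhds (mPhi1 B l))) ∧
      -- Condition (D)
      (∀ R : ℝ, 0 ≤ R → ∃ L : NNReal, ∀ k,
        LipschitzOnWith L (fun l : ℝ × ℝ => Real.exp l.2 * Phik2 γ (fun k => pgf2 (p2 k)) k l)
          (Icc ((0:ℝ),(0:ℝ)) (R,R))) ∧
      (∀ l : ℝ × ℝ, 0 ≤ l.1 → 0 ≤ l.2 →
        Tendsto (fun k => Real.exp l.2 * Phik2 γ (fun k => pgf2 (p2 k)) k l) atTop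
          (nhds (mPhi2 B l))) := by
  choose μ1 hf1 hμ1 using exists_mu1 B
  choose μ2 hf2 hμ2 using exists_mu2 B
  set γ : ℕ → ℝ := fun k => ((k : ℝ) + 1) + (μ1 k).real univ + (μ2 k).real univ with hγ
  have hγK : ∀ k : ℕ, (k : ℝ) + 1 ≤ γ k := fun k => by
    have h1 := measureReal_nonneg (μ := μ1 k) (s := univ)
    have h2 := measureReal_nonneg (μ := μ2 k) (s := univ)
    simp only [hγ]; linarith
  have hK : ∀ k : ℕ, (0:ℝ) < (k : ℝ) + 1 := fun k => by positivity
  have hγ0 : ∀ k, 0 < γ k := fun k => (hK k).trans_le (hγK k)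
  have hc1 : ∀ k, (μ1 k).real univ ≤ ((k : ℝ) + 1) * γ k := fun k => by
    have h1 := measureReal_nonneg (μ := μ1 k) (s := univ)
    have h2 := measureReal_nonneg (μ := μ2 k) (s := univ)
    have h3 : (0:ℝ) ≤ (k : ℝ) := by positivity
    have h4 : (μ1 k).real univ ≤ γ k := by simp only [hγ]; linarith
    nlinarith [hγ0 k]
  have hc2 : ∀ k, (μ2 k).real univ ≤ γ k := fun k => by
    have h1 := measureReal_nonneg (μ := μ1 k) (s := univ)
    have h2 := measureReal_nonneg (μ := μ2 k) (s := univ)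
    have h3 : (0:ℝ) ≤ (k : ℝ) := by positivity
    simp only [hγ]; linarith
  choose p1 hp1 hs1 hg1 using fun k =>
    exists_offspring (μ1 k) (1, 0) (((k : ℝ) + 1) * γ k) (mul_pos (hK k) (hγ0 k)) (hc1 k)
  choose p2 hp2 hs2 hg2 using fun k =>
    exists_offspring (μ2 k) (0, 1) (γ k) (hγ0 k) (hc2 k)
  have e1 : ∀ (l : ℝ × ℝ) (k : ℕ), 0 ≤ l.1 → Real.exp (-l.1 / ((k : ℝ) + 1)) ≤ 1 := fun l k h =>
    Real.exp_le_one_iff.2 (div_nonpos_of_nonpos_of_nonneg (by linarith) (hK k).le)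
  have e2 : ∀ (l : ℝ × ℝ), 0 ≤ l.2 → Real.exp (-l.2) ≤ 1 := fun l h =>
    Real.exp_le_one_iff.2 (by linarith)
  have P1 : ∀ k (l : ℝ × ℝ), 0 ≤ l.1 → 0 ≤ l.2 → Phik1 γ (fun k => pgf2 (p1 k)) k l =
      -B.a11 * (((k : ℝ) + 1) * (1 - Real.exp (-l.1 / ((k : ℝ) + 1)))) -
        (B.alpha + |B.a11| / ((k : ℝ) + 1)) *
          (((k : ℝ) + 1) * (1 - Real.exp (-l.1 / ((k : ℝ) + 1)))) ^ 2 -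
        ∫ z, F1 k l z ∂B.n1 := by
    intro k l h1 h2
    rw [← hμ1 k l h1 h2]
    have := hg1 k (Real.exp (-l.1 / ((k : ℝ) + 1)), Real.exp (-l.2)) (Real.exp_pos _).le
      (e1 l k h1) (Real.exp_pos _).le (e2 l h2)
    rw [← this, Phik1]
    simp
  have P2 : ∀ k (l : ℝ × ℝ), 0 ≤ l.1 → 0 ≤ l.2 →
      Real.exp l.2 * Phik2 γ (fun k => pgf2 (p2 k)) k l =
      B.a21 * (((k : ℝ) + 1) * (1 - Real.exp (-l.1 / ((k : ℝ) + 1)))) +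
        ∫ z, F2 k l z ∂B.n2 := by
    intro k l h1 h2
    rw [← hμ2 k l h1 h2]
    have := hg2 k (Real.exp (-l.1 / ((k : ℝ) + 1)), Real.exp (-l.2)) (Real.exp_pos _).le
      (e1 l k h1) (Real.exp_pos _).le (e2 l h2)
    rw [← this, Phik2]
    simp
  refine ⟨γ, p1, p2, hγ0, hp1, hs1, hp2, hs2, tendsto_atTop_mono hγK K_tendsto, ?_, ?_, ?_, ?_⟩
  · intro R hR
    obtain ⟨C, hC0, hC⟩ := (conv1 B).1 R hR
    have hα := B.alpha_nonneg
    refine ⟨⟨|B.a11| + (B.alpha + |B.a11|) * (2 * R) + C, by positivity⟩, fun k => ?_⟩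
    refine LipschitzOnWith.of_dist_le_mul fun l hl l' hl' => ?_
    rw [P1 k l hl.1.1 hl.1.2, P1 k l' hl'.1.1 hl'.1.2, Real.dist_eq]
    have hu := u_lip ((k : ℝ) + 1) l.1 l'.1 (hK k) hl.1.1 hl'.1.1
    have hu0 := u_nonneg _ _ (hK k) hl.1.1
    have hu0' := u_nonneg _ _ (hK k) hl'.1.1
    have hu1 := (u_le _ l.1 (hK k)).trans hl.2.1
    have hu1' := (u_le _ l'.1 (hK k)).trans hl'.2.1
    have hCC := hC k l hl l' hl'
    have hd := hu.trans (dist_fst_le l l')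
    set u := ((k : ℝ) + 1) * (1 - Real.exp (-l.1 / ((k : ℝ) + 1)))
    set u' := ((k : ℝ) + 1) * (1 - Real.exp (-l'.1 / ((k : ℝ) + 1)))
    set I := ∫ z, F1 k l z ∂B.n1
    set I' := ∫ z, F1 k l' z ∂B.n1
    have hq0 : 0 ≤ B.alpha + |B.a11| / ((k : ℝ) + 1) := by positivity
    have hq : B.alpha + |B.a11| / ((k : ℝ) + 1) ≤ B.alpha + |B.a11| := by
      gcongr
      exact div_le_self (abs_nonneg _) (by simp)
    set q := B.alpha + |B.a11| / ((k : ℝ) + 1)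
    have e : -B.a11 * u - q * u ^ 2 - I - (-B.a11 * u' - q * u' ^ 2 - I') =
      -((B.a11 * (u - u') + q * ((u + u') * (u - u'))) + (I - I')) := by ring
    rw [e, abs_neg]
    have t1 : |B.a11 * (u - u')| ≤ |B.a11| * dist l l' := by rw [abs_mul]; gcongr
    have t2 : |q * ((u + u') * (u - u'))| ≤ (B.alpha + |B.a11|) * ((2 * R) * dist l l') := by
      rw [abs_mul, abs_mul, abs_of_nonneg hq0, abs_of_nonneg (add_nonneg hu0 hu0')]
      have : u + u' ≤ 2 * R := by change u ≤ R at hu1; change u' ≤ R at hu1'; linarith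
      gcongr
    have t3 := (abs_add_le (B.a11 * (u - u') + q * ((u + u') * (u - u'))) (I - I'))
    have t4 := abs_add_le (B.a11 * (u - u')) (q * ((u + u') * (u - u')))
    change _ ≤ (|B.a11| + (B.alpha + |B.a11|) * (2 * R) + C) * dist l l'
    linarith
  · intro l h1 h2
    have hu := u_tendsto l.1 h1
    have hq : Tendsto (fun k : ℕ => B.alpha + |B.a11| / ((k : ℝ) + 1)) atTop (nhds (B.alpha + 0)) :=
      (K_tendsto.const_div_atTop _).const_add _
    rw [add_zero] at hq
    have := ((hu.const_mul (-B.a11)).sub (hq.mul (hu.pow 2))).sub ((conv1 B).2 l h1 h2)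
    refine Tendsto.congr (fun k => (P1 k l h1 h2).symm) this
  · intro R hR
    obtain ⟨C, hC0, hC⟩ := (conv2 B).1 R hR
    have hα := B.a21_nonneg
    refine ⟨⟨B.a21 + C, by positivity⟩, fun k => ?_⟩
    refine LipschitzOnWith.of_dist_le_mul fun l hl l' hl' => ?_
    rw [P2 k l hl.1.1 hl.1.2, P2 k l' hl'.1.1 hl'.1.2, Real.dist_eq]
    have hu := u_lip ((k : ℝ) + 1) l.1 l'.1 (hK k) hl.1.1 hl'.1.1
    have hCC := hC k l hl l' hl'
    have hd := hu.trans (dist_fst_le l l')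
    set u := ((k : ℝ) + 1) * (1 - Real.exp (-l.1 / ((k : ℝ) + 1)))
    set u' := ((k : ℝ) + 1) * (1 - Real.exp (-l'.1 / ((k : ℝ) + 1)))
    set I := ∫ z, F2 k l z ∂B.n2
    set I' := ∫ z, F2 k l' z ∂B.n2
    have e : B.a21 * u + I - (B.a21 * u' + I') = B.a21 * (u - u') + (I - I') := by ring
    rw [e]
    have t1 : |B.a21 * (u - u')| ≤ B.a21 * dist l l' := by
      rw [abs_mul, abs_of_nonneg hα]; gcongr
    have t3 := (abs_add_le (B.a21 * (u - u')) (I - I'))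
    change _ ≤ (B.a21 + C) * dist l l'
    linarith
  · intro l h1 h2
    have hu := u_tendsto l.1 h1
    have := (hu.const_mul B.a21).add ((conv2 B).2 l h1 h2)
    refine Tendsto.congr (fun k => (P2 k l h1 h2).symm) this
end
end
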